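/- arXiv:1701.05726 — 7 statements merged into one kernel-verified Lean document; each statement's English description precedes it below -/
import Mathlib

section
/- Let Ω be a domain (open connected set) in ℂ and let f : Ω → ℂ be a continuous, light, and open map. Then for each z ∈ Ω there exist a positive integer k, an open neighborhood U ⊆ Ω of z, and homeomorphisms ψ : U → 𝔻 and φ : f(U) → 𝔻 onto the open unit disk 𝔻 ⊂ ℂ such that φ(f(x)) = (ψ(x))^k for all x ∈ U. -/
/-!
A product `∏ᵢ (z - aᵢ) ^ gᵢ` with some `gᵢ ≠ 0` has no continuous logarithm on small curves around
`aᵢ`. Let the `aᵢ` be points of a fibre of `f` over `y` in a region without holes. By the maximum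
principle, the preimages of the two complements of horizontal rays from `y` have no holes either,
so each `z - aᵢ` has a logarithm on both, and the two logarithms differ by constants on the
components of the preimage of `{Im w ≠ Im y}`. With as many points as components, linear algebra
provides exponents for which they glue together. Hence a fibre has fewer points than there are such
components, and fibres of light open maps are discrete.

Near a point, normalised to be `0` with `f 0 = 0`, this gives `f x = x ^ n * exp (u x)` on a
neighbourhood that `f` maps properly onto a disc, and openness forces `n ≠ 0`. Lifting through the
exponential map turns `f` into `ζ ↦ n * ζ + u (exp ζ)`, a proper light open map onto a half-plane.
The preimages of both sides of any horizontal line under it are connected, so by the above count the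
lift is injective. If `n = k > 0`, then `x * exp (u x / k)` is therefore a homeomorphism onto the
disc whose `k`-th power is `f`; if `n < 0`, compose `f` with complex conjugation.
-/

namespace Stoilow

open Set Filter Topology Complex Metric

/-! ### Continuous logarithms -/

section Logarithm

variable {X Y ι : Type*} [TopologicalSpace X] [TopologicalSpace Y]
  {u v F G : X → ℂ} {S T U : Set X} {a b : X}

/-- `u` is a continuous branch of `log ∘ F` on `S`. -/
structure IsLogOn (u F : X → ℂ) (S : Set X) : Prop where
  continuousOn : ContinuousOn u S
  exp_eq : ∀ x ∈ S, exp (u x) = F x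

/-- `F` admits a continuous branch of its logarithm on `S`. -/
def HasLogOn (F : X → ℂ) (S : Set X) : Prop := ∃ u, IsLogOn u F S

namespace IsLogOn

lemma mono (h : IsLogOn u F T) (hST : S ⊆ T) : IsLogOn u F S :=
  ⟨h.continuousOn.mono hST, fun x hx => h.exp_eq x (hST hx)⟩

lemma congr (h : IsLogOn u F S) (hFG : EqOn F G S) : IsLogOn u G S :=
  ⟨h.continuousOn, fun x hx => (h.exp_eq x hx).trans (hFG hx)⟩

lemma ne_zero (h : IsLogOn u F S) (ha : a ∈ S) : F a ≠ 0 :=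
  h.exp_eq a ha ▸ exp_ne_zero _

lemma comp (h : IsLogOn u F S) {p : Y → X} {R : Set Y} (hp : ContinuousOn p R)
    (hR : MapsTo p R S) : IsLogOn (u ∘ p) (F ∘ p) R :=
  ⟨h.continuousOn.comp hp hR, fun y hy => h.exp_eq (p y) (hR hy)⟩

lemma add_const (h : IsLogOn u F S) {c : ℂ} (hc : exp c = 1) :
    IsLogOn (fun x => u x + c) F S :=
  ⟨h.continuousOn.add continuousOn_const, fun x hx => by
    rw [exp_add, hc, mul_one, h.exp_eq x hx]⟩

lemma prod_zpow {s : Finset ι} {u F : ι → X → ℂ} (h : ∀ i ∈ s, IsLogOn (u i) (F i) S)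
    (n : ι → ℤ) :
    IsLogOn (fun x => ∑ i ∈ s, n i * u i x) (fun x => ∏ i ∈ s, F i x ^ n i) S where
  continuousOn :=
    continuousOn_finsetSum _ fun i hi => continuousOn_const.mul (h i hi).continuousOn
  exp_eq x hx := by
    rw [exp_sum]
    exact Finset.prod_congr rfl fun i hi => by rw [exp_int_mul, (h i hi).exp_eq x hx]

lemma eqOn_of_isPreconnected (hS : IsPreconnected S) (hu : IsLogOn u F S) (hv : IsLogOn v F S)
    (ha : a ∈ S) (hav : u a = v a) : EqOn u v S :=
  isCoveringMap_exp.eqOn_of_comp_eqOn hS hu.continuousOn hv.continuousOn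
    (fun x hx => Subtype.ext ((hu.exp_eq x hx).trans (hv.exp_eq x hx).symm)) ha hav

lemma sub_eq_sub (hS : IsPreconnected S) (hu : IsLogOn u F S) (hv : IsLogOn v F S)
    (ha : a ∈ S) (hb : b ∈ S) : u a - v a = u b - v b := by
  have hperiod : exp (u a - v a) = 1 := by
    rw [exp_sub, hu.exp_eq a ha, hv.exp_eq a ha, div_self (hu.ne_zero ha)]
  have hub : u b = v b + (u a - v a) :=
    eqOn_of_isPreconnected hS hu (hv.add_const hperiod) ha (add_sub_cancel _ _).symm hb
  rw [hub, add_sub_cancel_left]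

lemma exists_int_sub_eq (hS : IsPreconnected S) (hu : IsLogOn u F S) (hv : IsLogOn v F S) :
    ∃ m : ℤ, ∀ x ∈ S, u x - v x = m * (2 * Real.pi * I) := by
  rcases S.eq_empty_or_nonempty with rfl | ⟨a, ha⟩
  · exact ⟨0, by simp⟩
  obtain ⟨m, hm⟩ := exp_eq_exp_iff_exists_int.mp ((hu.exp_eq a ha).trans (hv.exp_eq a ha).symm)
  refine ⟨m, fun x hx => ?_⟩
  rw [sub_eq_sub hS hu hv hx ha, hm, add_sub_cancel_left]

lemma union {P Q : Set X} (hP : IsOpen P) (hQ : IsOpen Q) (hu : IsLogOn u F P)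
    (hv : IsLogOn v F Q) (huv : EqOn u v (P ∩ Q)) : HasLogOn F (P ∪ Q) := by
  classical
  have hPu : EqOn (P.piecewise u v) u P := piecewise_eqOn P u v
  have hQv : EqOn (P.piecewise u v) v Q := fun x hxQ => by
    by_cases hxP : x ∈ P
    · rw [hPu hxP, huv ⟨hxP, hxQ⟩]
    · exact P.piecewise_eq_of_notMem u v hxP
  refine ⟨P.piecewise u v, ?_, ?_⟩
  · exact (hu.continuousOn.congr hPu).union_of_isOpen (hv.continuousOn.congr hQv) hP hQ
  · rintro x (hx | hx)
    · rw [hPu hx, hu.exp_eq x hx]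
    · rw [hQv hx, hv.exp_eq x hx]

end IsLogOn

namespace HasLogOn

lemma mono (h : HasLogOn F T) (hST : S ⊆ T) : HasLogOn F S :=
  h.imp fun _ hu => hu.mono hST

lemma congr (h : HasLogOn F S) (hFG : EqOn F G S) : HasLogOn G S :=
  h.imp fun _ hu => hu.congr hFG

lemma prod_zpow {s : Finset ι} {F : ι → X → ℂ} (h : ∀ i ∈ s, HasLogOn (F i) S) (n : ι → ℤ) :
    HasLogOn (fun x => ∏ i ∈ s, F i x ^ n i) S := by
  choose! u hu using h
  exact ⟨_, IsLogOn.prod_zpow hu n⟩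

lemma mul (hF : HasLogOn F S) (hG : HasLogOn G S) : HasLogOn (fun x => F x * G x) S := by
  obtain ⟨u, hu⟩ := hF
  obtain ⟨v, hv⟩ := hG
  exact ⟨fun x => u x + v x, hu.continuousOn.add hv.continuousOn, fun x hx => by
    rw [exp_add, hu.exp_eq x hx, hv.exp_eq x hx]⟩

lemma inv (hF : HasLogOn F S) : HasLogOn (fun x => (F x)⁻¹) S := by
  obtain ⟨u, hu⟩ := hF
  exact ⟨fun x => -u x, hu.continuousOn.neg, fun x hx => by rw [exp_neg, hu.exp_eq x hx]⟩

lemma const {c : ℂ} (hc : c ≠ 0) : HasLogOn (fun _ => c) S :=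
  ⟨fun _ => log c, continuousOn_const, fun _ _ => exp_log hc⟩

lemma of_mem_slitPlane (hF : ContinuousOn F S) (h : ∀ x ∈ S, F x ∈ slitPlane) : HasLogOn F S :=
  ⟨fun x => log (F x), hF.clog h, fun x hx => exp_log (slitPlane_ne_zero (h x hx))⟩

lemma exists_isLogOn_eq (h : HasLogOn F S) (hb : b ∈ S) {c : ℂ} (hc : exp c = F b) :
    ∃ u, IsLogOn u F S ∧ u b = c := by
  obtain ⟨u, hu⟩ := h
  have hperiod : exp (c - u b) = 1 := by
    rw [exp_sub, hc, hu.exp_eq b hb, div_self (hu.ne_zero hb)]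
  exact ⟨_, hu.add_const hperiod, by ring⟩

lemma of_connectedComponentIn [LocallyConnectedSpace X] (hU : IsOpen U)
    (h : ∀ x ∈ U, HasLogOn F (connectedComponentIn U x)) : HasLogOn F U := by
  have hlog : ∀ D, (∃ x ∈ U, connectedComponentIn U x = D) → ∃ u, IsLogOn u F D := by
    rintro _ ⟨x, hx, rfl⟩
    exact h x hx
  choose! u hu using hlog
  refine ⟨fun x => u (connectedComponentIn U x) x, fun x hx => ?_, fun x hx =>
    (hu _ ⟨x, hx, rfl⟩).exp_eq x (mem_connectedComponentIn hx)⟩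
  have hD : connectedComponentIn U x ∈ 𝓝 x :=
    hU.connectedComponentIn.mem_nhds (mem_connectedComponentIn hx)
  refine (((hu _ ⟨x, hx, rfl⟩).continuousOn.continuousAt hD).congr ?_).continuousWithinAt
  filter_upwards [hD] with y hy
  rw [connectedComponentIn_eq hy]

end HasLogOn

end Logarithm

lemma HasLogOn.of_convex {E : Type*} [NormedAddCommGroup E] [NormedSpace ℝ E] {F : E → ℂ}
    {U : Set E} (hU : IsOpen U) (hUc : Convex ℝ U) (hF : ContinuousOn F U)
    (h0 : ∀ x ∈ U, F x ≠ 0) : HasLogOn F U := by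
  rcases U.eq_empty_or_nonempty with rfl | hne
  · exact ⟨0, continuousOn_empty _, by simp⟩
  have hsc : IsSimplyConnected U :=
    have := hUc.contractibleSpace hne
    inferInstanceAs (SimplyConnectedSpace U)
  obtain ⟨u, hu, hexp⟩ := exists_continuousOn_eqOn_exp_comp hsc hU hF
    (by rintro ⟨x, hx, h⟩; exact h0 x hx h)
  exact ⟨u, hu, hexp⟩

section GluingCompacts

variable {E : Type*} [NormedAddCommGroup E] [NormedSpace ℝ E] [ProperSpace E]
  {F : E → ℂ} {U : Set E} {b x : E}

lemma exists_isCompact_isPreconnected_mem_nhds (hU : IsOpen U) (hUc : IsPreconnected U)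
    (hb : b ∈ U) (hx : x ∈ U) :
    ∃ K ⊆ U, IsCompact K ∧ IsPreconnected K ∧ b ∈ K ∧ K ∈ 𝓝 x := by
  obtain ⟨γ, hγ⟩ := (hU.isConnected_iff_isPathConnected.mp ⟨⟨b, hb⟩, hUc⟩).joinedIn b hb x hx
  obtain ⟨r, hr, hball⟩ := nhds_basis_closedBall.mem_iff.mp (hU.mem_nhds hx)
  refine ⟨range γ ∪ closedBall x r, union_subset (range_subset_iff.mpr hγ) hball,
    (isCompact_range γ.continuous).union (isCompact_closedBall _ _), ?_,
    Or.inl ⟨0, γ.source⟩, mem_of_superset (closedBall_mem_nhds x hr) subset_union_right⟩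
  exact IsPreconnected.union x ⟨1, γ.target⟩ (mem_closedBall_self hr.le)
    (isPreconnected_range γ.continuous) (convex_closedBall _ _).isPreconnected

lemma HasLogOn.of_isCompact_of_isPreconnected (hU : IsOpen U) (hUc : IsPreconnected U)
    (h : ∀ K ⊆ U, IsCompact K → HasLogOn F K) : HasLogOn F U := by
  rcases U.eq_empty_or_nonempty with rfl | ⟨b, hb⟩
  · exact h ∅ subset_rfl isCompact_empty
  choose! K hKU hK hKc hbK hKnhds using
    fun x hx => exists_isCompact_isPreconnected_mem_nhds hU hUc hb (x := x) hx
  obtain ⟨c, hc⟩ : ∃ c, exp c = F b := by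
    obtain ⟨u, hu⟩ := h {b} (singleton_subset_iff.mpr hb) isCompact_singleton
    exact ⟨u b, hu.exp_eq b rfl⟩
  choose! u hu hub using fun x hx => (h (K x) (hKU x hx) (hK x hx)).exists_isLogOn_eq (hbK x hx) hc
  have mem_K : ∀ x ∈ U, x ∈ K x := fun x hx => mem_of_mem_nhds (hKnhds x hx)
  have agree : ∀ x ∈ U, ∀ y ∈ K x, u y y = u x y := fun x hx y hy => by
    have hyU : y ∈ U := hKU x hx hy
    obtain ⟨v, hv⟩ := h (K x ∪ K y) (union_subset (hKU x hx) (hKU y hyU))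
      ((hK x hx).union (hK y hyU))
    have hxv := (hu x hx).sub_eq_sub (hKc x hx) (hv.mono subset_union_left) hy (hbK x hx)
    have hyv := (hu y hyU).sub_eq_sub (hKc y hyU) (hv.mono subset_union_right)
      (mem_K y hyU) (hbK y hyU)
    rw [hub x hx, ← hub y hyU, ← hyv] at hxv
    exact (sub_left_injective hxv).symm
  refine ⟨fun x => u x x, fun x hx => ?_, fun x hx => (hu x hx).exp_eq x (mem_K x hx)⟩
  have hux : ContinuousAt (u x) x := (hu x hx).continuousOn.continuousAt (hKnhds x hx)
  refine (hux.congr ?_).continuousWithinAt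
  filter_upwards [hKnhds x hx] with y hy using (agree x hx y hy).symm

lemma HasLogOn.of_isCompact (hU : IsOpen U) (h : ∀ K ⊆ U, IsCompact K → HasLogOn F K) :
    HasLogOn F U :=
  .of_connectedComponentIn hU fun x _ =>
    .of_isCompact_of_isPreconnected hU.connectedComponentIn isPreconnected_connectedComponentIn
      fun K hK => h K (hK.trans (connectedComponentIn_subset U x))

end GluingCompacts

/-! ### Monodromy of the logarithm -/

section Monodromy

variable {a : ℂ} {c : ℤ}

lemma HasLogOn.sub_of_norm_lt {S : Set ℂ} {b : ℂ} (h : ∀ z ∈ S, ‖z - b‖ < ‖b - a‖) :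
    HasLogOn (fun z => z - a) S := by
  rcases S.eq_empty_or_nonempty with rfl | ⟨z₀, hz₀⟩
  · exact ⟨0, continuousOn_empty _, by simp⟩
  have hba : 0 < ‖b - a‖ := (norm_nonneg _).trans_lt (h z₀ hz₀)
  have hslit : HasLogOn (fun z => 1 + (z - b) / (b - a)) S := by
    refine .of_mem_slitPlane (by fun_prop) fun z hz => mem_slitPlane_of_norm_lt_one ?_
    rw [norm_div, div_lt_one hba]
    exact h z hz
  have hba' : b - a ≠ 0 := norm_pos_iff.mp hba
  refine ((HasLogOn.const hba').mul hslit).congr fun z _ => ?_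
  dsimp only
  field_simp
  ring

lemma not_hasLogOn_zpow_sphere {ρ : ℝ} (hρ : 0 < ρ) (hc : c ≠ 0) :
    ¬ HasLogOn (fun z => (z - a) ^ c) (sphere a ρ) := by
  rintro ⟨u, hu⟩
  have hcircle := hu.comp (continuous_circleMap a ρ).continuousOn
    (mapsTo_univ_iff.mpr fun t => circleMap_mem_sphere a hρ.le t)
  have hlinear : IsLogOn (fun t : ℝ => c * (log ρ + t * I))
      ((fun z => (z - a) ^ c) ∘ circleMap a ρ) univ := by
    refine ⟨by fun_prop, fun t _ => ?_⟩
    rw [exp_int_mul, exp_add, exp_log (ofReal_ne_zero.mpr hρ.ne')]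
    simp [circleMap]
  have hjump := hcircle.sub_eq_sub isPreconnected_univ hlinear
    (mem_univ 0) (mem_univ (2 * Real.pi))
  have hperiod : circleMap a ρ (2 * Real.pi) = circleMap a ρ 0 := by
    simpa using periodic_circleMap a ρ 0
  have : (c : ℂ) * (2 * Real.pi * I) = 0 := by
    simp only [Function.comp_apply, hperiod] at hjump
    push_cast at hjump
    linear_combination hjump
  simp [hc, Real.pi_ne_zero] at this

lemma not_hasLogOn_zpow_frontier {N : Set ℂ} (hN : IsOpen N) (hbdd : Bornology.IsBounded N)
    (ha : a ∈ N) (hc : c ≠ 0) : ¬ HasLogOn (fun z => (z - a) ^ c) (frontier N) := by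
  classical
  -- Extending the logarithm over `N` by Tietze yields a nowhere vanishing function on the plane
  -- equal to `(z - a) ^ c` on a large circle.
  rintro ⟨g, hg⟩
  obtain ⟨g', hg'⟩ := ContinuousMap.exists_restrict_eq (s := frontier N) isClosed_frontier
    ⟨(frontier N).domRestrict g, continuousOn_iff_continuous_domRestrict.mp hg.continuousOn⟩
  have hgg' : ∀ z ∈ frontier N, g' z = g z := fun z hz => by
    simpa using congrArg (fun φ : C(frontier N, ℂ) => φ ⟨z, hz⟩) hg'
  have hsub : ∀ z ∈ Nᶜ, z - a ≠ 0 := fun z hz h => hz (sub_eq_zero.mp h ▸ ha)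
  set F : ℂ → ℂ := N.piecewise (fun z => exp (g' z)) (fun z => (z - a) ^ c)
  have hFcont : Continuous F := by
    refine continuous_piecewise (fun z hz => by rw [hgg' z hz, hg.exp_eq z hz]) (by fun_prop) ?_
    rw [hN.isClosed_compl.closure_eq]
    exact (continuousOn_id.sub continuousOn_const).zpow₀ c fun z hz => Or.inl (hsub z hz)
  have hF0 : ∀ z, F z ≠ 0 := fun z => by
    by_cases hz : z ∈ N
    · simp [F, hz]
    · simpa [F, hz] using zpow_ne_zero c (hsub z hz)
  obtain ⟨ρ, hρ, hNρ⟩ := hbdd.subset_ball_lt 0 a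
  refine not_hasLogOn_zpow_sphere (a := a) hρ hc (((HasLogOn.of_convex isOpen_univ convex_univ
    hFcont.continuousOn fun z _ => hF0 z).mono (subset_univ _)).congr fun z hz => ?_)
  exact N.piecewise_eq_of_notMem _ _ fun h => (mem_ball.mp (hNρ h)).ne hz

end Monodromy

/-! ### Sets connected to infinity -/

section ConnectedToInfinity

variable {X Y : Type*} [TopologicalSpace X] [TopologicalSpace Y]

/-- For closed `E`, this says that `E ∪ {∞}` is connected in the one-point compactification: no
nonempty compact subset of `E` is relatively open in `E`. -/
def ConnectedToInfinity (E : Set X) : Prop :=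
  ∀ O, IsOpen O → IsCompact (E ∩ O) → E ∩ O = ∅

/-- The restriction of `F` to the open set `W` is an open map. -/
def IsOpenMapOn (F : X → Y) (W : Set X) : Prop :=
  ∀ U ⊆ W, IsOpen U → IsOpen (F '' U)

lemma closure_connectedComponentIn_inter_subset (A : Set X) (x : X) :
    closure (connectedComponentIn A x) ∩ A ⊆ connectedComponentIn A x := by
  by_cases hx : x ∈ A
  · refine IsPreconnected.subset_connectedComponentIn ?_
      ⟨subset_closure (mem_connectedComponentIn hx), hx⟩ inter_subset_right
    exact isPreconnected_connectedComponentIn.subset_closure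
      (subset_inter subset_closure (connectedComponentIn_subset A x)) inter_subset_left
  · simp [connectedComponentIn_eq_empty hx]

lemma isPreconnected_of_forall_connectedComponentIn_inter {A Γ : Set X} (hΓ : IsPreconnected Γ)
    (hΓA : Γ ⊆ A) (h : ∀ x ∈ A, (connectedComponentIn A x ∩ Γ).Nonempty) : IsPreconnected A := by
  refine isPreconnected_of_forall_pair fun x hx y hy =>
    ⟨connectedComponentIn A x, connectedComponentIn_subset _ _, mem_connectedComponentIn hx, ?_,
      isPreconnected_connectedComponentIn⟩
  obtain ⟨p, hpx, hpΓ⟩ := h x hx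
  obtain ⟨q, hqy, hqΓ⟩ := h y hy
  rw [connectedComponentIn_eq hpx,
    connectedComponentIn_eq (hΓ.subset_connectedComponentIn hpΓ hΓA hqΓ),
    ← connectedComponentIn_eq hqy]
  exact mem_connectedComponentIn hy

namespace ConnectedToInfinity

lemma preimage {E : Set Y} (hE : ConnectedToInfinity E) {p : X → Y} (hp : Continuous p)
    (hpo : IsOpenMap p) : ConnectedToInfinity (p ⁻¹' E) := by
  intro O hO hcomp
  have himage : p '' (p ⁻¹' E ∩ O) = E ∩ p '' O := image_preimage_inter p O E
  have := hE (p '' O) (hpo O hO) (himage ▸ hcomp.image hp)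
  rwa [← himage, image_eq_empty] at this

/-- The maximum principle: the preimage of `R` cannot have a compact piece inside `W`, since `φ ∘ F`
would attain a maximum on it. -/
lemma compl_inter_preimage {W : Set X} (hW : IsOpen W) (hWc : ConnectedToInfinity Wᶜ)
    {F : X → Y} (hF : ContinuousOn F W) (hFo : IsOpenMapOn F W) {φ : Y → ℝ} (hφ : Continuous φ)
    {R : Set Y} (hR : ∀ w ∈ R, ∃ᶠ w' in 𝓝 w, w' ∈ R ∧ φ w < φ w') :
    ConnectedToInfinity (W ∩ F ⁻¹' Rᶜ)ᶜ := by
  intro O hO hcomp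
  have hOW : O ⊆ W := by
    have hinter : Wᶜ ∩ O = (W ∩ F ⁻¹' Rᶜ)ᶜ ∩ O ∩ Wᶜ := by ext; simp; tauto
    have hempty := hWc O hO (hinter ▸ hcomp.inter_right hW.isClosed_compl)
    exact disjoint_compl_left_iff_subset.mp (disjoint_iff_inter_eq_empty.mpr hempty)
  have hH : (W ∩ F ⁻¹' Rᶜ)ᶜ ∩ O = O ∩ F ⁻¹' R := by
    ext x
    have := @hOW x
    simp only [mem_inter_iff, mem_compl_iff, mem_preimage]
    tauto
  rw [hH] at hcomp ⊢
  by_contra hne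
  obtain ⟨x, ⟨hxO, hxR⟩, hmax⟩ := hcomp.exists_isMaxOn (nonempty_iff_ne_empty.mpr hne)
    (hφ.comp_continuousOn (hF.mono (inter_subset_left.trans hOW)))
  have hFO : F '' O ∈ 𝓝 (F x) := (hFo O hOW hO).mem_nhds (mem_image_of_mem F hxO)
  obtain ⟨_, ⟨hx'R, hlt⟩, x', hx'O, rfl⟩ := ((hR (F x) hxR).and_eventually hFO).exists
  exact (hmax ⟨hx'O, hx'R⟩).not_gt hlt

lemma compl_connectedComponentIn [T2Space X] [PreconnectedSpace X] [NoncompactSpace X]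
    {A : Set X} (hA : IsOpen A) (hAc : ConnectedToInfinity Aᶜ) (x : X) :
    ConnectedToInfinity (connectedComponentIn A x)ᶜ := by
  set D := connectedComponentIn A x
  have hDA : D ⊆ A := connectedComponentIn_subset A x
  intro O hO hcomp
  have hOA : O ⊆ A := by
    have hinter : Aᶜ ∩ O = Dᶜ ∩ O ∩ Aᶜ := by
      ext y
      have := @hDA y
      simp only [mem_inter_iff, mem_compl_iff]
      tauto
    have hempty := hAc O hO (hinter ▸ hcomp.inter_right hA.isClosed_compl)
    exact disjoint_compl_left_iff_subset.mp (disjoint_iff_inter_eq_empty.mpr hempty)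
  have hopen : IsOpen (Dᶜ ∩ O) := by
    have heq : Dᶜ ∩ O = (closure D)ᶜ ∩ O := by
      refine Subset.antisymm (fun y hy => ⟨fun hyD => hy.1 ?_, hy.2⟩)
        (inter_subset_inter_left _ (compl_subset_compl.mpr subset_closure))
      exact closure_connectedComponentIn_inter_subset A x ⟨hyD, hOA hy.2⟩
    exact heq ▸ isClosed_closure.isOpen_compl.inter hO
  rcases isClopen_iff.mp ⟨hcomp.isClosed, hopen⟩ with hempty | huniv
  · exact hempty
  · exact (noncompact_univ X (huniv ▸ hcomp)).elim

lemma not_isBounded_of_chain {M : Type*} [PseudoMetricSpace M] [ProperSpace M] {E Z : Set M}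
    (hE : IsClosed E) (hEi : ConnectedToInfinity E) (hZE : Z ⊆ E) (hZ : Z.Nonempty)
    {δ : ℝ} (hδ : 0 < δ) (hstep : ∀ b ∈ Z, ∀ b' ∈ E, dist b' b < δ → b' ∈ Z) :
    ¬ Bornology.IsBounded Z := by
  intro hbdd
  have hZthick : E ∩ thickening δ Z = Z := by
    refine Subset.antisymm ?_ (subset_inter hZE (self_subset_thickening hδ Z))
    rintro b' ⟨hb', hthick⟩
    obtain ⟨b, hb, hdist⟩ := mem_thickening_iff.mp hthick
    exact hstep b hb b' hb' hdist
  have hZclosed : IsClosed Z := by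
    rw [← closure_subset_iff_isClosed]
    calc closure Z ⊆ E ∩ thickening δ Z :=
          subset_inter (closure_minimal hZE hE) (closure_subset_thickening hδ Z)
      _ = Z := hZthick
  have := hEi (thickening δ Z) isOpen_thickening
    (hZthick.symm ▸ isCompact_of_isClosed_isBounded hZclosed hbdd)
  exact hZ.ne_empty (hZthick ▸ this)

end ConnectedToInfinity

end ConnectedToInfinity

lemma frequently_nhds_of_forall_add_smul {E : Type*} [AddCommGroup E] [TopologicalSpace E]
    [ContinuousAdd E] [Module ℝ E] [ContinuousSMul ℝ E] {P : E → Prop} {w d : E}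
    (h : ∀ t : ℝ, 0 < t → P (w + t • d)) : ∃ᶠ w' in 𝓝 w, P w' := by
  have hline : Tendsto (fun t : ℝ => w + t • d) (𝓝[>] 0) (𝓝 w) := by
    have hcont : Continuous (fun t : ℝ => w + t • d) := by fun_prop
    simpa using (hcont.tendsto 0).mono_left nhdsWithin_le_nhds
  exact hline.frequently (eventually_nhdsWithin_of_forall (s := Ioi 0) h).frequently

lemma frequently_dist_lt_of_le {E : Type*} [NormedAddCommGroup E] [NormedSpace ℝ E] {c w : E}
    {r : ℝ} (hr : 0 < r) (hw : w ∈ (ball c r)ᶜ) :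
    ∃ᶠ w' in 𝓝 w, w' ∈ (ball c r)ᶜ ∧ dist w c < dist w' c := by
  rw [mem_compl_iff, mem_ball, not_lt] at hw
  have hlt : ∀ t : ℝ, 0 < t → dist w c < dist (w + t • (w - c)) c := fun t ht => by
    have hscale : w + t • (w - c) - c = (1 + t) • (w - c) := by module
    rw [dist_eq_norm (w + _), hscale, norm_smul, ← dist_eq_norm,
      Real.norm_of_nonneg (by positivity)]
    nlinarith
  refine frequently_nhds_of_forall_add_smul (d := w - c) fun t ht => ⟨?_, hlt t ht⟩
  rw [mem_compl_iff, mem_ball, not_lt]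
  exact hw.trans (hlt t ht).le

lemma connectedToInfinity_compl_ball {E : Type*} [NormedAddCommGroup E] [NormedSpace ℝ E] (c : E)
    {r : ℝ} (hr : 0 < r) : ConnectedToInfinity (ball c r)ᶜ := by
  have huniv : ConnectedToInfinity (univ : Set E)ᶜ := fun O _ _ => by simp
  simpa using huniv.compl_inter_preimage isOpen_univ continuousOn_id (F := id)
    (fun U _ hU => by simpa using hU) (continuous_id.dist continuous_const)
    (fun w hw => frequently_dist_lt_of_le hr hw)

section LogarithmOffConnectedSet

variable {E C : Set ℂ} {a : ℂ}

lemma ConnectedToInfinity.hasLogOn_sub_of_isCompact (hEi : ConnectedToInfinity E)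
    (hE : IsClosed E) (ha : a ∈ E) (hC : IsCompact C) (hCE : C ⊆ Eᶜ) :
    HasLogOn (fun z => z - a) C := by
  obtain ⟨δ, hδ, hthick⟩ := hC.exists_thickening_subset_open hE.isOpen_compl hCE
  have hsep : ∀ z ∈ C, ∀ b ∈ E, δ ≤ ‖z - b‖ := fun z hz b hb => by
    rw [← dist_eq_norm, dist_comm]
    exact not_lt.mp fun h => hthick (mem_thickening_iff.mpr ⟨z, hz, h⟩) hb
  have hne : ∀ z ∈ C, ∀ b ∈ E, z - b ≠ 0 := fun z hz b hb =>
    norm_pos_iff.mp (hδ.trans_le (hsep z hz b hb))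
  -- Move `a` to infinity along `E` in steps shorter than the distance from `E` to `C`.
  set Z : Set ℂ := {b ∈ E | HasLogOn (fun z => (z - a) / (z - b)) C}
  have haZ : a ∈ Z :=
    ⟨ha, (HasLogOn.const one_ne_zero).congr fun z hz => (div_self (hne z hz a ha)).symm⟩
  have hstep : ∀ b ∈ Z, ∀ b' ∈ E, dist b' b < δ → b' ∈ Z := by
    rintro b ⟨hb, hlog⟩ b' hb' hdist
    have hratio : HasLogOn (fun z => 1 + (b' - b) / (z - b')) C := by
      refine .of_mem_slitPlane (continuousOn_const.add (continuousOn_const.div (by fun_prop)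
        fun z hz => hne z hz b' hb')) fun z hz => mem_slitPlane_of_norm_lt_one ?_
      rw [norm_div, div_lt_one (norm_pos_iff.mpr (hne z hz b' hb')), ← dist_eq_norm]
      exact hdist.trans_le (hsep z hz b' hb')
    refine ⟨hb', (hlog.mul hratio).congr fun z hz => ?_⟩
    have := hne z hz b hb
    have := hne z hz b' hb'
    dsimp only
    field_simp
    ring
  have hunbdd := hEi.not_isBounded_of_chain hE (fun b hb => hb.1) ⟨a, haZ⟩ hδ hstep
  obtain ⟨r, hr⟩ := hC.isBounded.subset_ball 0
  obtain ⟨b, ⟨hbE, hlog⟩, hbr⟩ : ∃ b ∈ Z, r < ‖b‖ := by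
    by_contra! hle
    exact hunbdd (isBounded_iff_forall_norm_le.mpr ⟨r, hle⟩)
  have hfar : HasLogOn (fun z => z - b) C := .sub_of_norm_lt (b := 0) fun z hz => by
    simpa using (mem_ball_zero_iff.mp (hr hz)).trans hbr
  exact (hlog.mul hfar).congr fun z hz => div_mul_cancel₀ _ (hne z hz b hbE)

lemma ConnectedToInfinity.hasLogOn_sub (hEi : ConnectedToInfinity E) (hE : IsClosed E)
    (ha : a ∈ E) : HasLogOn (fun z => z - a) Eᶜ :=
  .of_isCompact hE.isOpen_compl fun _ hKE hK => hEi.hasLogOn_sub_of_isCompact hE ha hK hKE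

end LogarithmOffConnectedSet

/-! ### Light open maps -/

section LightOpen

variable {X Y : Type*} [TopologicalSpace X] [TopologicalSpace Y] {F : X → Y} {U V W : Set X}

/-- `F` restricts to a continuous, light and open map on the open set `W`. -/
structure IsLightOpenOn (F : X → Y) (W : Set X) : Prop where
  isOpen : IsOpen W
  continuousOn : ContinuousOn F W
  isOpenMapOn : IsOpenMapOn F W
  light : ∀ y, IsTotallyDisconnected (W ∩ F ⁻¹' {y})

namespace IsLightOpenOn

lemma mono (h : IsLightOpenOn F W) (hV : IsOpen V) (hVW : V ⊆ W) : IsLightOpenOn F V where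
  isOpen := hV
  continuousOn := h.continuousOn.mono hVW
  isOpenMapOn U hUV hU := h.isOpenMapOn U (hUV.trans hVW) hU
  light y t ht := h.light y t (ht.trans (inter_subset_inter_left _ hVW))

lemma exists_isOpen_frontier [T2Space X] [LocallyCompactSpace X] [T1Space Y]
    (h : IsLightOpenOn F W) {a : X} (ha : a ∈ W) (hU : U ∈ 𝓝 a) :
    ∃ N, IsOpen N ∧ a ∈ N ∧ IsCompact (closure N) ∧ closure N ⊆ W ∩ U ∧
      ∀ x ∈ frontier N, F x ≠ F a := by
  obtain ⟨B, hBa, hBWU, hB⟩ := local_compact_nhds (inter_mem (h.isOpen.mem_nhds ha) hU)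
  set K := B ∩ F ⁻¹' {F a}
  have hK : IsCompact K := hB.of_isClosed_subset
    ((h.continuousOn.mono (hBWU.trans inter_subset_left)).preimage_isClosed_of_isClosed
      hB.isClosed isClosed_singleton) inter_subset_left
  have : CompactSpace K := isCompact_iff_compactSpace.mp hK
  have : TotallyDisconnectedSpace K := totallyDisconnectedSpace_subtype_iff.mpr
    fun t ht => h.light _ t (ht.trans (inter_subset_inter_left _ (hBWU.trans inter_subset_left)))
  have haB : a ∈ interior B := mem_interior_iff_mem_nhds.mpr hBa
  obtain ⟨C, hC, haC, hCB⟩ := compact_exists_isClopen_in_isOpen (X := K)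
    (x := ⟨a, interior_subset haB, rfl⟩) (U := Subtype.val ⁻¹' interior B)
    (isOpen_interior.preimage continuous_subtype_val) haB
  obtain ⟨P, Q, hP, hQ, hCP, hCQ, hPQ⟩ := SeparatedNhds.of_isCompact_isCompact
    (hC.isClosed.isCompact.image continuous_subtype_val)
    (hC.compl.isClosed.isCompact.image continuous_subtype_val)
    (disjoint_image_of_injective Subtype.val_injective disjoint_compl_right)
  have hN : IsOpen (P ∩ interior B) := hP.inter isOpen_interior
  have hNB : closure (P ∩ interior B) ⊆ B :=
    closure_minimal (inter_subset_right.trans interior_subset) hB.isClosed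
  refine ⟨P ∩ interior B, hN, ⟨hCP ⟨_, haC, rfl⟩, haB⟩,
    hB.of_isClosed_subset isClosed_closure hNB, hNB.trans hBWU, fun x hx hxa => ?_⟩
  rw [hN.frontier_eq] at hx
  by_cases hxC : (⟨x, hNB hx.1, hxa⟩ : K) ∈ C
  · exact hx.2 ⟨hCP ⟨_, hxC, rfl⟩, hCB hxC⟩
  · obtain ⟨w, hwQ, hwN⟩ := mem_closure_iff.mp hx.1 Q hQ (hCQ ⟨_, hxC, rfl⟩)
    exact hPQ.le_bot ⟨hwN.1, hwQ⟩

end IsLightOpenOn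

end LightOpen

/-! ### Counting the points of a fibre -/

lemma exists_int_combination_const {ι σ : Type*} [Fintype ι] [Fintype σ] [Nonempty σ]
    (w : ι → σ → ℤ) (hcard : Fintype.card σ ≤ Fintype.card ι) :
    ∃ g : ι → ℤ, g ≠ 0 ∧ ∃ c, ∀ s, ∑ i, g i * w i s = c := by
  let vec : Option ι → σ → ℤ := fun o => o.elim 1 w
  have hdep : ¬ LinearIndependent ℤ vec := fun hind => by
    have hle := hind.fintype_card_le_finrank
    rw [Fintype.card_option, Module.finrank_fintype_fun_eq_card] at hle
    omega
  obtain ⟨g, hg, o, ho⟩ := Fintype.not_linearIndependent_iff.mp hdep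
  have hrel : ∀ s, g none + ∑ i, g (some i) * w i s = 0 := fun s => by
    simpa [Fintype.sum_option, vec] using congrFun hg s
  refine ⟨fun i => g (some i), fun hzero => ho ?_, -g none, fun s => by linarith [hrel s]⟩
  have hsome : ∀ i, g (some i) = 0 := congrFun hzero
  cases o with
  | none => simpa [hsome] using hrel (Classical.arbitrary σ)
  | some i => exact hsome i

/-- On each component of `P ∩ Q` the logarithms of `F i` on `P` and on `Q` differ by a constant
integer multiple of `2πi`. With at least as many functions as components, some combination of
these differences is the same on all components. -/
lemma exists_hasLogOn_prod_zpow_union {X ι : Type*} [TopologicalSpace X] [Fintype ι] {P Q : Set X}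
    (hP : IsOpen P) (hQ : IsOpen Q) {F : ι → X → ℂ} (hFP : ∀ i, HasLogOn (F i) P)
    (hFQ : ∀ i, HasLogOn (F i) Q) {S : Finset X} (hS : S.Nonempty)
    (hcover : P ∩ Q ⊆ ⋃ s ∈ S, connectedComponentIn (P ∩ Q) s)
    (hcard : S.card ≤ Fintype.card ι) :
    ∃ g : ι → ℤ, g ≠ 0 ∧ HasLogOn (fun x => ∏ i, F i x ^ g i) (P ∪ Q) := by
  choose u hu using hFP
  choose v hv using hFQ
  have hjump : ∀ i (s : S), ∃ m : ℤ, ∀ x ∈ connectedComponentIn (P ∩ Q) s,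
      u i x - v i x = m * (2 * Real.pi * I) := fun i s =>
    IsLogOn.exists_int_sub_eq isPreconnected_connectedComponentIn
      ((hu i).mono ((connectedComponentIn_subset _ _).trans inter_subset_left))
      ((hv i).mono ((connectedComponentIn_subset _ _).trans inter_subset_right))
  choose m hm using hjump
  have : Nonempty S := hS.to_subtype
  obtain ⟨g, hg, c, hc⟩ := exists_int_combination_const m (by simpa using hcard)
  have hcexp : exp (c * (2 * Real.pi * I)) = 1 := by
    rw [exp_int_mul, exp_two_pi_mul_I, one_zpow]
  refine ⟨g, hg, (IsLogOn.prod_zpow (fun i _ => hu i) g).union hP hQ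
    ((IsLogOn.prod_zpow (fun i _ => hv i) g).add_const hcexp) fun x hx => ?_⟩
  obtain ⟨s, hs, hxs⟩ := mem_iUnion₂.mp (hcover hx)
  rw [← sub_eq_iff_eq_add', ← Finset.sum_sub_distrib]
  calc ∑ i, (g i * u i x - g i * v i x)
      = ∑ i, g i * m i ⟨s, hs⟩ * (2 * Real.pi * I) :=
        Finset.sum_congr rfl fun i _ => by rw [← mul_sub, hm i ⟨s, hs⟩ x hxs, ← mul_assoc]
    _ = c * (2 * Real.pi * I) := by rw [← Finset.sum_mul, ← hc ⟨s, hs⟩]; push_cast; rfl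

lemma not_hasLogOn_prod_sub_zpow {ι : Type*} [Fintype ι] {a : ι → ℂ} (ha : a.Injective)
    {g : ι → ℤ} {i₀ : ι} (hg : g i₀ ≠ 0) {E : Set ℂ}
    (hE : ∀ U ∈ 𝓝 (a i₀), ∃ N, IsOpen N ∧ a i₀ ∈ N ∧ closure N ⊆ U ∧ frontier N ⊆ E) :
    ¬ HasLogOn (fun z => ∏ i, (z - a i) ^ g i) E := by
  classical
  intro hlog
  have hU : ∀ᶠ z in 𝓝 (a i₀), ‖z - a i₀‖ < 1 ∧ ∀ i ≠ i₀, ‖z - a i₀‖ < ‖a i₀ - a i‖ := by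
    have hnorm : Tendsto (fun z => ‖z - a i₀‖) (𝓝 (a i₀)) (𝓝 0) :=
      tendsto_iff_norm_sub_tendsto_zero.mp tendsto_id
    refine (hnorm.eventually_lt_const one_pos).and (eventually_all.mpr fun i => ?_)
    rw [eventually_imp_distrib_left]
    exact fun hi => hnorm.eventually_lt_const (norm_pos_iff.mpr (sub_ne_zero.mpr (ha.ne hi.symm)))
  obtain ⟨N, hN, haN, hNU, hNE⟩ := hE _ hU
  have hbdd : Bornology.IsBounded N :=
    (isBounded_ball (x := a i₀) (r := 1)).subset fun z hz =>
      mem_ball_iff_norm.mpr (hNU (subset_closure hz)).1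
  have hothers : HasLogOn (fun z => ∏ i ∈ Finset.univ.erase i₀, (z - a i) ^ g i) (frontier N) :=
    .prod_zpow (fun i hi => .sub_of_norm_lt fun z hz =>
      (hNU (frontier_subset_closure hz)).2 i (Finset.ne_of_mem_erase hi)) g
  refine not_hasLogOn_zpow_frontier hN hbdd haN hg
    (((hlog.mono hNE).mul hothers.inv).congr fun z hz => ?_)
  obtain ⟨u, hu⟩ := hothers
  dsimp only
  rw [← Finset.mul_prod_erase _ _ (Finset.mem_univ i₀), mul_assoc,
    mul_inv_cancel₀ (hu.ne_zero hz), mul_one]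

section FibreCount

open scoped ComplexOrder

variable {F : ℂ → ℂ} {W : Set ℂ}

-- In the partial order of `ℂ`, `Ici y` and `Iic y` are the horizontal rays emanating from `y`.
lemma IsLightOpenOn.connectedToInfinity_compl_inter_preimage_Ici (hF : IsLightOpenOn F W)
    (hW : ConnectedToInfinity Wᶜ) (y : ℂ) :
    ConnectedToInfinity (W ∩ F ⁻¹' (Ici y)ᶜ)ᶜ :=
  hW.compl_inter_preimage hF.isOpen hF.continuousOn hF.isOpenMapOn continuous_re fun w hw =>
    frequently_nhds_of_forall_add_smul (d := 1) fun t ht => by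
      simp only [mem_Ici, Complex.le_def] at hw ⊢
      simp only [add_re, add_im, smul_re, smul_im, one_re, one_im, smul_eq_mul]
      exact ⟨⟨by linarith, by linarith⟩, by linarith⟩

lemma IsLightOpenOn.connectedToInfinity_compl_inter_preimage_Iic (hF : IsLightOpenOn F W)
    (hW : ConnectedToInfinity Wᶜ) (y : ℂ) :
    ConnectedToInfinity (W ∩ F ⁻¹' (Iic y)ᶜ)ᶜ :=
  hW.compl_inter_preimage hF.isOpen hF.continuousOn hF.isOpenMapOn
    (φ := fun w => -w.re) continuous_re.neg fun w hw =>
    frequently_nhds_of_forall_add_smul (d := -1) fun t ht => by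
      simp only [mem_Iic, Complex.le_def] at hw ⊢
      simp only [add_re, add_im, smul_re, smul_im, neg_re, neg_im, one_re, one_im, smul_eq_mul]
      exact ⟨⟨by linarith, by linarith⟩, by linarith⟩

lemma compl_Ici_inter_compl_Iic (y : ℂ) : (Ici y)ᶜ ∩ (Iic y)ᶜ = {w | w.im ≠ y.im} := by
  ext w
  simp only [mem_inter_iff, mem_compl_iff, mem_Ici, mem_Iic, Complex.le_def, mem_ofPred_eq]
  have := le_total y.re w.re
  grind

lemma compl_Ici_union_compl_Iic (y : ℂ) : (Ici y)ᶜ ∪ (Iic y)ᶜ = {y}ᶜ := by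
  rw [← compl_inter, Ici_inter_Iic, Icc_self]

theorem IsLightOpenOn.fibre_card_lt (hF : IsLightOpenOn F W) (hW : ConnectedToInfinity Wᶜ) {y : ℂ}
    {S : Finset ℂ} (hS : S.Nonempty)
    (hcover : W ∩ F ⁻¹' {w | w.im ≠ y.im} ⊆
      ⋃ s ∈ S, connectedComponentIn (W ∩ F ⁻¹' {w | w.im ≠ y.im}) s)
    {T : Finset ℂ} (hT : (T : Set ℂ) ⊆ W ∩ F ⁻¹' {y}) : T.card < S.card := by
  by_contra! hcard
  have hP : IsOpen (W ∩ F ⁻¹' (Ici y)ᶜ) :=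
    hF.continuousOn.isOpen_inter_preimage hF.isOpen isClosed_Ici.isOpen_compl
  have hQ : IsOpen (W ∩ F ⁻¹' (Iic y)ᶜ) :=
    hF.continuousOn.isOpen_inter_preimage hF.isOpen isClosed_Iic.isOpen_compl
  have hlogP : ∀ a : T, HasLogOn (fun z => z - a) (W ∩ F ⁻¹' (Ici y)ᶜ) := fun a => by
    simpa using (hF.connectedToInfinity_compl_inter_preimage_Ici hW y).hasLogOn_sub
      hP.isClosed_compl (a := a) fun ha => ha.2 (hT a.2).2.ge
  have hlogQ : ∀ a : T, HasLogOn (fun z => z - a) (W ∩ F ⁻¹' (Iic y)ᶜ) := fun a => by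
    simpa using (hF.connectedToInfinity_compl_inter_preimage_Iic hW y).hasLogOn_sub
      hQ.isClosed_compl (a := a) fun ha => ha.2 (hT a.2).2.le
  rw [← compl_Ici_inter_compl_Iic, preimage_inter, inter_inter_distrib_left] at hcover
  obtain ⟨g, hg, hlog⟩ :=
    exists_hasLogOn_prod_zpow_union hP hQ hlogP hlogQ hS hcover (by simpa using hcard)
  obtain ⟨a, ha⟩ := Function.ne_iff.mp hg
  rw [← inter_union_distrib_left, ← preimage_union, compl_Ici_union_compl_Iic] at hlog
  refine not_hasLogOn_prod_sub_zpow Subtype.val_injective ha (fun U hU => ?_) hlog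
  obtain ⟨haW, hay⟩ := hT a.2
  obtain ⟨N, hN, haN, -, hNU, hNfr⟩ := hF.exists_isOpen_frontier haW hU
  exact ⟨N, hN, haN, hNU.trans inter_subset_right, fun x hx =>
    ⟨(hNU (frontier_subset_closure hx)).1, hay ▸ hNfr x hx⟩⟩

end FibreCount

/-! ### Normal domains -/

section NormalDomain

variable {X X' Y Z : Type*} [TopologicalSpace X] [TopologicalSpace X'] [TopologicalSpace Y]
  [TopologicalSpace Z]
  {F : X → Y} {W : Set X} {V : Set Y}

/-- `F` maps `W ∩ F ⁻¹' V` properly to `V`. -/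
def IsProperOver (F : X → Y) (W : Set X) (V : Set Y) : Prop :=
  ∀ C ⊆ V, IsCompact C → IsCompact (W ∩ F ⁻¹' C)

/-- `W` is a normal domain over `V`: `F` restricts to a proper light open map `W → V`, and `W` has
no holes. Unlike in the literature, `W` need not be connected. -/
structure IsNormalDomain (F : X → Y) (W : Set X) (V : Set Y) : Prop extends
    IsLightOpenOn F W where
  connectedToInfinity_compl : ConnectedToInfinity Wᶜ
  mapsTo : MapsTo F W V
  properOver : IsProperOver F W V

lemma IsProperOver.subset_image_connectedComponentIn [LocallyConnectedSpace X] [T2Space Y]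
    [LocallyCompactSpace Y] (hp : IsProperOver F W V) (hW : IsOpen W) (hF : ContinuousOn F W)
    (hFo : IsOpenMapOn F W) {O : Set Y} (hO : IsOpen O) (hOc : IsPreconnected O) (hOV : O ⊆ V)
    {x : X} (hx : x ∈ W ∩ F ⁻¹' O) : O ⊆ F '' connectedComponentIn (W ∩ F ⁻¹' O) x := by
  set P := connectedComponentIn (W ∩ F ⁻¹' O) x
  have hPA : P ⊆ W ∩ F ⁻¹' O := connectedComponentIn_subset _ _
  have hP : IsOpen P := (hF.isOpen_inter_preimage hW hO).connectedComponentIn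
  refine hOc.subset_of_closure_inter_subset (hFo P (hPA.trans inter_subset_left) hP)
    ⟨F x, hx.2, x, mem_connectedComponentIn hx, rfl⟩ ?_
  rintro y ⟨hy, hyO⟩
  obtain ⟨C, hC, hyC, hCO⟩ := exists_compact_subset hO hyO
  have hcomp : IsCompact (F '' (closure P ∩ (W ∩ F ⁻¹' C))) :=
    ((hp C (hCO.trans hOV) hC).inter_left isClosed_closure).image_of_continuousOn
      (hF.mono (inter_subset_right.trans inter_subset_left))
  have hsub : F '' P ∩ interior C ⊆ F '' (closure P ∩ (W ∩ F ⁻¹' C)) := by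
    rintro _ ⟨⟨p, hpP, rfl⟩, hpC⟩
    exact ⟨p, ⟨subset_closure hpP, (hPA hpP).1, interior_subset (s := C) hpC⟩, rfl⟩
  obtain ⟨p, ⟨hpP, hpW, -⟩, rfl⟩ :=
    closure_minimal hsub hcomp.isClosed (isOpen_interior.closure_inter ⟨hy, hyC⟩)
  exact ⟨p, closure_connectedComponentIn_inter_subset _ x ⟨hpP, hpW, hyO⟩, rfl⟩

lemma IsProperOver.eventually_fibre_subset [T2Space Y] [LocallyCompactSpace Y]
    (hp : IsProperOver F W V) (hF : ContinuousOn F W) {y : Y} (hV : V ∈ 𝓝 y) {U : Set X}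
    (hU : IsOpen U) (hyU : W ∩ F ⁻¹' {y} ⊆ U) : ∀ᶠ y' in 𝓝 y, W ∩ F ⁻¹' {y'} ⊆ U := by
  obtain ⟨C, hC, hCV, hCc⟩ := local_compact_nhds hV
  have hbad : IsCompact (F '' ((W ∩ F ⁻¹' C) \ U)) :=
    ((hp C hCV hCc).diff hU).image_of_continuousOn
      (hF.mono (sdiff_subset.trans inter_subset_left))
  have hy : y ∉ F '' ((W ∩ F ⁻¹' C) \ U) := by
    rintro ⟨x, hx, rfl⟩
    exact hx.2 (hyU ⟨hx.1.1, rfl⟩)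
  filter_upwards [hC, hbad.isClosed.isOpen_compl.mem_nhds hy] with y' hy'C hy'
  rintro x ⟨hxW, rfl⟩
  by_contra hxU
  exact hy' ⟨x, ⟨⟨hxW, hy'C⟩, hxU⟩, rfl⟩

lemma IsProperOver.of_comp [T2Space Y] {H : X → Z} {V' : Set Z} (hH : IsProperOver H W V')
    {p : Y → Z} (hp : Continuous p) (hpV : MapsTo p V V') (hpF : EqOn (p ∘ F) H W)
    (hF : ContinuousOn F W) : IsProperOver F W V := by
  intro C hCV hC
  set K := W ∩ H ⁻¹' (p '' C)
  have hK : IsCompact K := hH _ (image_subset_iff.mpr fun _ hw => hpV (hCV hw)) (hC.image hp)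
  have heq : W ∩ F ⁻¹' C = F ⁻¹' C ∩ K := Subset.antisymm
    (fun x hx => ⟨hx.2, hx.1, F x, hx.2, hpF hx.1⟩) fun x hx => ⟨hx.2.1, hx.1⟩
  obtain ⟨D, hD, hDC⟩ :=
    continuousOn_iff_isClosed.mp (hF.mono (inter_subset_left : K ⊆ W)) C hC.isClosed
  rw [heq, hDC]
  exact hK.inter_left hD

lemma IsProperOver.exists_partialHomeomorph [Nonempty X] [T2Space Y] [LocallyCompactSpace Y]
    (hp : IsProperOver F W V) (hF : ContinuousOn F W) (hV : IsOpen V) (hbij : BijOn F W V) :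
    ∃ ψ : PartialHomeomorph X Y, ψ.source = W ∧ ψ.target = V ∧ ⇑ψ = F := by
  refine ⟨⟨hbij.toPartialEquiv F W V, hF, fun y hy => ?_⟩, rfl, rfl, rfl⟩
  set e := hbij.toPartialEquiv F W V
  have hfibre : W ∩ F ⁻¹' {y} ⊆ {e.symm y} := fun x hx =>
    hbij.injOn hx.1 (e.map_target hy) (hx.2.trans (e.right_inv hy).symm)
  refine tendsto_nhds.mpr fun U hU hyU => ?_
  filter_upwards [mem_nhdsWithin_of_mem_nhds (hp.eventually_fibre_subset hF (hV.mem_nhds hy) hU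
    (hfibre.trans (singleton_subset_iff.mpr hyU))), self_mem_nhdsWithin] with y' hy' hy'V
  exact hy' ⟨e.map_target hy'V, e.right_inv hy'V⟩

namespace IsNormalDomain

lemma comp_homeomorph (h : IsNormalDomain F W V) (e' : Y ≃ₜ Z) (e : X' ≃ₜ X) :
    IsNormalDomain (e' ∘ F ∘ e) (e ⁻¹' W) (e' '' V) where
  isOpen := h.isOpen.preimage e.continuous
  continuousOn := e'.continuous.comp_continuousOn
    (h.continuousOn.comp e.continuous.continuousOn (mapsTo_preimage e W))
  isOpenMapOn U hUW hU := by
    rw [image_comp, image_comp]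
    exact e'.isOpenMap _ (h.isOpenMapOn _ (image_subset_iff.mpr hUW) (e.isOpenMap U hU))
  light z := by
    refine e.isEmbedding.isTotallyDisconnected fun t ht => h.light (e'.symm z) t (ht.trans ?_)
    rintro _ ⟨x, ⟨hxW, rfl⟩, rfl⟩
    exact ⟨hxW, (e'.symm_apply_apply _).symm⟩
  connectedToInfinity_compl := h.connectedToInfinity_compl.preimage e.continuous e.isOpenMap
  mapsTo := (mapsTo_image e' V).comp (h.mapsTo.comp (mapsTo_preimage e W))
  properOver C hC hCc := by
    rw [preimage_comp, preimage_comp, ← preimage_inter]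
    refine e.isCompact_preimage.mpr (h.properOver _ ?_ (e'.isCompact_preimage.mpr hCc))
    rw [← e'.preimage_image V]
    exact preimage_mono hC

variable [LocallyConnectedSpace X] [T2Space Y] [LocallyCompactSpace Y]

lemma subset_image_connectedComponentIn (h : IsNormalDomain F W V) {O : Set Y} (hO : IsOpen O)
    (hOc : IsPreconnected O) (hOV : O ⊆ V) {x : X} (hx : x ∈ W ∩ F ⁻¹' O) :
    O ⊆ F '' connectedComponentIn (W ∩ F ⁻¹' O) x :=
  h.properOver.subset_image_connectedComponentIn h.isOpen h.continuousOn h.isOpenMapOn hO hOc hOV hx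

lemma exists_finset_cover (h : IsNormalDomain F W V) {O : Set Y} (hO : IsOpen O)
    (hOc : IsPreconnected O) (hOV : O ⊆ V) :
    ∃ S : Finset X, W ∩ F ⁻¹' O ⊆ ⋃ s ∈ S, connectedComponentIn (W ∩ F ⁻¹' O) s := by
  rcases O.eq_empty_or_nonempty with rfl | ⟨o, ho⟩
  · exact ⟨∅, by simp⟩
  have hfibre : W ∩ F ⁻¹' {o} ⊆ W ∩ F ⁻¹' O :=
    inter_subset_inter_right _ (preimage_mono (singleton_subset_iff.mpr ho))
  obtain ⟨S, hS⟩ := (h.properOver {o} (singleton_subset_iff.mpr (hOV ho))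
    isCompact_singleton).elim_finite_subcover (connectedComponentIn (W ∩ F ⁻¹' O))
    (fun s => (h.continuousOn.isOpen_inter_preimage h.isOpen hO).connectedComponentIn)
    (fun x hx => mem_iUnion.mpr ⟨x, mem_connectedComponentIn (hfibre hx)⟩)
  refine ⟨S, fun x hx => ?_⟩
  obtain ⟨p, hpx, hpo⟩ := h.subset_image_connectedComponentIn hO hOc hOV hx ho
  obtain ⟨s, hs, hps⟩ := mem_iUnion₂.mp (hS ⟨(connectedComponentIn_subset _ _ hpx).1, hpo⟩)
  refine mem_iUnion₂.mpr ⟨s, hs, ?_⟩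
  rw [connectedComponentIn_eq hps, ← connectedComponentIn_eq hpx]
  exact mem_connectedComponentIn hx

lemma image_eq (h : IsNormalDomain F W V) (hV : IsOpen V) (hVc : IsPreconnected V)
    (hW : W.Nonempty) : F '' W = V := by
  obtain ⟨x, hx⟩ := hW
  refine Subset.antisymm (image_subset_iff.mpr h.mapsTo) ?_
  exact (h.subset_image_connectedComponentIn hV hVc subset_rfl ⟨hx, h.mapsTo hx⟩).trans
    (image_mono ((connectedComponentIn_subset _ _).trans inter_subset_left))

end IsNormalDomain

theorem IsNormalDomain.finite_fibre {F : ℂ → ℂ} {W V : Set ℂ} (h : IsNormalDomain F W V)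
    (hV : IsOpen V) (hVc : Convex ℝ V) (y : ℂ) : (W ∩ F ⁻¹' {y}).Finite := by
  classical
  obtain ⟨S₁, hS₁⟩ := h.exists_finset_cover (O := V ∩ {w | w.im < y.im})
    (hV.inter (isOpen_lt continuous_im continuous_const))
    (hVc.inter (convex_halfSpace_im_lt _)).isPreconnected inter_subset_left
  obtain ⟨S₂, hS₂⟩ := h.exists_finset_cover (O := V ∩ {w | y.im < w.im})
    (hV.inter (isOpen_lt continuous_const continuous_im))
    (hVc.inter (convex_halfSpace_im_gt _)).isPreconnected inter_subset_left
  have hcover : W ∩ F ⁻¹' {w | w.im ≠ y.im} ⊆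
      ⋃ s ∈ insert 0 (S₁ ∪ S₂), connectedComponentIn (W ∩ F ⁻¹' {w | w.im ≠ y.im}) s := by
    rintro x ⟨hx, hne⟩
    rcases lt_or_gt_of_ne hne with hlt | hgt
    · obtain ⟨s, hs, hxs⟩ := mem_iUnion₂.mp (hS₁ ⟨hx, h.mapsTo hx, hlt⟩)
      exact mem_iUnion₂.mpr ⟨s, by simp [hs], connectedComponentIn_mono s
        (inter_subset_inter_right W fun _ hw => hw.2.ne) hxs⟩
    · obtain ⟨s, hs, hxs⟩ := mem_iUnion₂.mp (hS₂ ⟨hx, h.mapsTo hx, hgt⟩)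
      exact mem_iUnion₂.mpr ⟨s, by simp [hs], connectedComponentIn_mono s
        (inter_subset_inter_right W fun _ hw => hw.2.ne') hxs⟩
  by_contra hinf
  obtain ⟨T, hT, hTcard⟩ := Set.Infinite.exists_subset_card_eq hinf (insert 0 (S₁ ∪ S₂)).card
  exact (h.toIsLightOpenOn.fibre_card_lt h.connectedToInfinity_compl
    (Finset.insert_nonempty _ _) hcover hT).ne hTcard

end NormalDomain

section ExistsNormalDomain

variable {E E' : Type*} [NormedAddCommGroup E] [NormedSpace ℝ E] [NormedAddCommGroup E']
  [NormedSpace ℝ E'] {f : E → E'} {Ω U : Set E} {z : E}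

theorem IsLightOpenOn.exists_isNormalDomain [Nontrivial E] [LocallyCompactSpace E]
    (h : IsLightOpenOn f Ω) (hz : z ∈ Ω) (hU : U ∈ 𝓝 z) :
    ∃ r > 0, ∃ W ⊆ Ω ∩ U, z ∈ W ∧ IsNormalDomain f W (ball (f z) r) := by
  obtain ⟨R, hR, hRΩ⟩ := Metric.isOpen_iff.mp h.isOpen z hz
  have hfR : IsLightOpenOn f (ball z R) := h.mono isOpen_ball hRΩ
  obtain ⟨N, hN, hzN, hNc, hNRU, hNf⟩ := hfR.exists_isOpen_frontier (mem_ball_self hR) hU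
  have hfr : IsCompact (f '' frontier N) :=
    (hNc.of_isClosed_subset isClosed_frontier frontier_subset_closure).image_of_continuousOn
      (hfR.continuousOn.mono fun x hx => (hNRU (frontier_subset_closure hx)).1)
  obtain ⟨r, hr, hball⟩ := Metric.isOpen_iff.mp hfr.isClosed.isOpen_compl (f z)
    (by rintro ⟨x, hx, hxz⟩; exact hNf x hx hxz)
  set A := ball z R ∩ f ⁻¹' ball (f z) r
  have hA : IsOpen A := hfR.continuousOn.isOpen_inter_preimage isOpen_ball isOpen_ball
  have hzA : z ∈ A := ⟨mem_ball_self hR, mem_ball_self hr⟩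
  have hAinf : ConnectedToInfinity Aᶜ := by
    simpa using (connectedToInfinity_compl_ball z hR).compl_inter_preimage isOpen_ball
      hfR.continuousOn hfR.isOpenMapOn (φ := fun w => dist w (f z)) (by fun_prop)
      (fun w hw => frequently_dist_lt_of_le hr hw)
  set W := connectedComponentIn A z
  have hWA : W ⊆ A := connectedComponentIn_subset _ _
  have hWN : W ⊆ N := by
    refine isPreconnected_connectedComponentIn.subset_of_closure_inter_subset hN
      ⟨z, mem_connectedComponentIn hzA, hzN⟩ fun x ⟨hxN, hxW⟩ => ?_
    by_contra hx
    exact hball (hWA hxW).2 ⟨x, hN.frontier_eq ▸ ⟨hxN, hx⟩, rfl⟩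
  have hcW : closure W ⊆ ball z R := fun x hx => (hNRU (closure_mono hWN hx)).1
  refine ⟨r, hr, W, fun x hx => ⟨hRΩ (hWA hx).1, (hNRU (subset_closure (hWN hx))).2⟩,
    mem_connectedComponentIn hzA, hfR.mono hA.connectedComponentIn (hWA.trans inter_subset_left),
    hAinf.compl_connectedComponentIn hA z, fun x hx => (hWA hx).2, fun C hC hCc => ?_⟩
  have heq : W ∩ f ⁻¹' C = closure W ∩ f ⁻¹' C :=
    Subset.antisymm (inter_subset_inter_left _ subset_closure) fun x hx =>
      ⟨closure_connectedComponentIn_inter_subset A z ⟨hx.1, hcW hx.1, hC hx.2⟩, hx.2⟩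
  rw [heq]
  exact hNc.of_isClosed_subset ((hfR.continuousOn.mono hcW).preimage_isClosed_of_isClosed
    isClosed_closure hCc.isClosed) (inter_subset_left.trans (closure_mono hWN))

end ExistsNormalDomain

lemma IsLightOpenOn.eventually_eq_imp_eq {f : ℂ → ℂ} {Ω : Set ℂ} (h : IsLightOpenOn f Ω) {z : ℂ}
    (hz : z ∈ Ω) : ∀ᶠ x in 𝓝 z, f x = f z → x = z := by
  obtain ⟨r, -, W, -, hzW, hW⟩ := h.exists_isNormalDomain hz univ_mem
  have hfin : ((W ∩ f ⁻¹' {f z}) \ {z}).Finite :=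
    (hW.finite_fibre isOpen_ball (convex_ball _ _) (f z)).sdiff
  filter_upwards [hW.isOpen.mem_nhds hzW, hfin.isClosed.isOpen_compl.mem_nhds (by simp)]
    with x hxW hx hfx
  by_contra hne
  exact hx ⟨⟨hxW, hfx⟩, hne⟩

/-! ### Lifting through the exponential map -/

section ExpLift

lemma eq_of_exp_eq_of_periodic {α : Type*} {h : ℂ → α} {S : Set ℂ}
    (hper : ∀ ζ, exp ζ ∈ S → h (ζ + 2 * Real.pi * I) = h ζ) {ζ ξ : ℂ} (hζ : exp ζ ∈ S)
    (hξ : exp ξ = exp ζ) : h ξ = h ζ := by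
  obtain ⟨m, rfl⟩ := exp_eq_exp_iff_exists_int.mp hξ
  clear hξ
  induction m with
  | zero => simp
  | succ m ih =>
    have hm : exp (ζ + (m : ℤ) * (2 * Real.pi * I)) ∈ S := by
      rwa [exp_eq_exp_iff_exists_int.mpr ⟨m, rfl⟩]
    rw [← ih, ← hper _ hm]
    push_cast
    ring_nf
  | pred m ih =>
    have hm : exp (ζ + (-m - 1 : ℤ) * (2 * Real.pi * I)) ∈ S := by
      rwa [exp_eq_exp_iff_exists_int.mpr ⟨-m - 1, rfl⟩]
    rw [← ih, ← hper _ hm]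
    push_cast
    ring_nf

lemma exists_continuousOn_comp_exp_eq {α : Type*} [TopologicalSpace α] {h : ℂ → α} {S : Set ℂ}
    (hS : IsOpen S) (hh : ContinuousOn h (exp ⁻¹' S))
    (hper : ∀ ζ, exp ζ ∈ S → h (ζ + 2 * Real.pi * I) = h ζ) :
    ∃ u, ContinuousOn u (S \ {0}) ∧ ∀ ζ, exp ζ ∈ S → u (exp ζ) = h ζ := by
  have hlog : ∀ ζ, exp ζ ∈ S → h (log (exp ζ)) = h ζ := fun ζ hζ =>
    eq_of_exp_eq_of_periodic hper hζ (exp_log (exp_ne_zero ζ))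
  refine ⟨h ∘ log, fun x hx => ContinuousAt.continuousWithinAt ?_, hlog⟩
  obtain ⟨ζ, rfl⟩ : ∃ ζ, exp ζ = x := ⟨log x, exp_log hx.2⟩
  have hopen : IsOpen (exp ⁻¹' S) := hS.preimage continuous_exp
  have hev : h =ᶠ[𝓝 ζ] fun ξ => h (log (exp ξ)) := by
    filter_upwards [hopen.mem_nhds hx.1] with ξ hξ using (hlog ξ hξ).symm
  rw [ContinuousAt, ← (hasStrictDerivAt_exp ζ).map_nhds_eq (exp_ne_zero ζ), tendsto_map'_iff,
    Function.comp_apply, hlog ζ hx.1]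
  exact (hh.continuousAt (hopen.mem_nhds hx.1)).congr' hev

theorem exists_hasLogOn_div_zpow {S : Set ℂ} (hS : IsOpen S) (hconv : Convex ℝ (exp ⁻¹' S))
    {f : ℂ → ℂ} (hf : ContinuousOn f (S \ {0})) (h0 : ∀ x ∈ S \ {0}, f x ≠ 0) :
    ∃ n : ℤ, HasLogOn (fun x => f x / x ^ n) (S \ {0}) := by
  have hmem : MapsTo exp (exp ⁻¹' S) (S \ {0}) := fun ζ hζ => ⟨hζ, exp_ne_zero ζ⟩
  obtain ⟨H, hH⟩ := HasLogOn.of_convex (F := f ∘ exp) (hS.preimage continuous_exp) hconv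
    (hf.comp continuous_exp.continuousOn hmem) fun ζ hζ => h0 _ (hmem hζ)
  have hper : ∀ ζ : ℂ, exp (ζ + 2 * Real.pi * I) = exp ζ := exp_periodic
  have hHshift : IsLogOn (H ∘ fun ζ => ζ + 2 * Real.pi * I) (f ∘ exp) (exp ⁻¹' S) :=
    (hH.comp (p := fun ζ => ζ + 2 * Real.pi * I) (by fun_prop)
      fun ζ hζ => by rwa [mem_preimage, hper]).congr fun ζ _ => by simp [hper]
  obtain ⟨n, hn⟩ := hHshift.exists_int_sub_eq hconv.isPreconnected hH
  obtain ⟨u, hu, huH⟩ := exists_continuousOn_comp_exp_eq (h := fun ζ => H ζ - n * ζ) hS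
    (hH.continuousOn.sub (by fun_prop)) fun ζ hζ => by
      have hshift : H (ζ + 2 * Real.pi * I) - H ζ = n * (2 * Real.pi * I) := hn ζ hζ
      linear_combination hshift
  refine ⟨n, u, hu, fun x hx => ?_⟩
  obtain ⟨ζ, rfl⟩ : ∃ ζ, exp ζ = x := ⟨log x, exp_log hx.2⟩
  rw [huH ζ hx.1, exp_sub, hH.exp_eq ζ hx.1, exp_int_mul, Function.comp_apply]

lemma isLocallyInjective_exp : IsLocallyInjective exp := fun ζ =>
  let ⟨U, hU, hζ, hinj⟩ := isCoveringMap_exp.isLocalHomeomorph.isLocallyInjective ζ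
  ⟨U, hU, hζ, fun _ ha _ hb hab => hinj ha hb (Subtype.ext hab)⟩

lemma IsOpenMapOn.of_comp {X Y Z : Type*} [TopologicalSpace X] [TopologicalSpace Y]
    [TopologicalSpace Z] {G : X → Y} {p : Y → Z} {W : Set X} (hpG : IsOpenMapOn (p ∘ G) W)
    (hG : ContinuousOn G W) (hp : Continuous p) (hinj : IsLocallyInjective p) :
    IsOpenMapOn G W := by
  intro U hUW hU
  refine isOpen_iff_mem_nhds.mpr ?_
  rintro _ ⟨x, hx, rfl⟩
  obtain ⟨N, hN, hxN, hNinj⟩ := hinj (G x)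
  have hUN : IsOpen (U ∩ G ⁻¹' N) := (hG.mono hUW).isOpen_inter_preimage hU hN
  have hO : IsOpen (p ∘ G '' (U ∩ G ⁻¹' N)) := hpG _ (inter_subset_left.trans hUW) hUN
  filter_upwards [hN.mem_nhds hxN, (hO.preimage hp).mem_nhds ⟨x, ⟨hx, hxN⟩, rfl⟩]
  rintro y hy ⟨x', ⟨hx'U, hx'N⟩, hx'⟩
  exact ⟨x', hx'U, hNinj hx'N hy hx'⟩

lemma IsLogOn.isOpenMapOn {X : Type*} [TopologicalSpace X] {u F : X → ℂ} {S : Set X}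
    (hu : IsLogOn u F S) (hF : IsOpenMapOn F S) : IsOpenMapOn u S := by
  refine IsOpenMapOn.of_comp (p := exp) (fun U hUS hU => ?_) hu.continuousOn continuous_exp
    isLocallyInjective_exp
  have himage : exp ∘ u '' U = F '' U := image_congr fun x hx => hu.exp_eq x (hUS hx)
  exact himage ▸ hF U hUS hU

end ExpLift

/-! ### Winding factorizations -/

/-- The light open map `f` makes `W` a normal domain over the unit disc with `f⁻¹(0) = {0}`, and
`f x = x ^ n * exp (u x)` on `W \ {0}`, so that `f` winds `n` times around `0`. -/
structure IsWindingFactorization (f u : ℂ → ℂ) (W : Set ℂ) (n : ℤ) : Prop extends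
    IsNormalDomain f W (ball 0 1) where
  zero_mem : 0 ∈ W
  map_zero : f 0 = 0
  isLogOn : IsLogOn u (fun x => f x / x ^ n) (W \ {0})

/-- The lift of `x ↦ x ^ n * exp (u x)` through the exponential map, in source and target. -/
noncomputable def logLift (u : ℂ → ℂ) (n : ℤ) (ζ : ℂ) : ℂ := n * ζ + u (exp ζ)

lemma norm_le_norm_logLift_add {n : ℤ} (hn : n ≠ 0) (u : ℂ → ℂ) (ζ : ℂ) :
    ‖ζ‖ ≤ ‖logLift u n ζ‖ + ‖u (exp ζ)‖ := by
  have hn1 : (1 : ℝ) ≤ ‖(n : ℂ)‖ := by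
    rw [norm_intCast]
    exact_mod_cast Int.one_le_abs hn
  calc ‖ζ‖ ≤ ‖(n : ℂ)‖ * ‖ζ‖ := le_mul_of_one_le_left (norm_nonneg _) hn1
    _ = ‖logLift u n ζ - u (exp ζ)‖ := by rw [logLift, add_sub_cancel_right, norm_mul]
    _ ≤ _ := norm_sub_le _ _

namespace IsWindingFactorization

variable {f u : ℂ → ℂ} {W : Set ℂ} {n : ℤ}

lemma eq_zpow_mul_exp (h : IsWindingFactorization f u W n) {x : ℂ} (hx : x ∈ W) (hx0 : x ≠ 0) :
    f x = x ^ n * exp (u x) := by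
  rw [h.isLogOn.exp_eq x ⟨hx, hx0⟩, mul_div_cancel₀ _ (zpow_ne_zero n hx0)]

lemma eq_zero_iff (h : IsWindingFactorization f u W n) {x : ℂ} (hx : x ∈ W) : f x = 0 ↔ x = 0 := by
  refine ⟨fun hfx => ?_, fun hx0 => hx0 ▸ h.map_zero⟩
  by_contra hx0
  rw [h.eq_zpow_mul_exp hx hx0] at hfx
  exact mul_ne_zero (zpow_ne_zero n hx0) (exp_ne_zero _) hfx

lemma isLogOn_logLift (h : IsWindingFactorization f u W n) :
    IsLogOn (logLift u n) (f ∘ exp) (exp ⁻¹' W) where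
  continuousOn := ((continuous_const.mul continuous_id).continuousOn).add
    (h.isLogOn.continuousOn.comp continuous_exp.continuousOn fun ζ hζ => ⟨hζ, exp_ne_zero ζ⟩)
  exp_eq ζ hζ := by
    rw [logLift, exp_add, exp_int_mul, Function.comp_apply, h.eq_zpow_mul_exp hζ (exp_ne_zero ζ)]

lemma norm_map_exp (h : IsWindingFactorization f u W n) {ζ : ℂ} (hζ : exp ζ ∈ W) :
    ‖f (exp ζ)‖ = Real.exp (logLift u n ζ).re := by
  rw [← norm_exp, h.isLogOn_logLift.exp_eq ζ hζ, Function.comp_apply]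

lemma winding_ne_zero (h : IsWindingFactorization f u W n) : n ≠ 0 := by
  rintro rfl
  -- Now `u` is open, so `Im u` has no maximum on the compact level set `‖f x‖ = 1 / 2`.
  have hu : IsLogOn u f (W \ {0}) := h.isLogOn.congr fun x _ => by simp
  have huo : IsOpenMapOn u (W \ {0}) :=
    hu.isOpenMapOn fun U hU => h.isOpenMapOn U (hU.trans sdiff_subset)
  set K := W ∩ f ⁻¹' sphere 0 (1 / 2)
  have hK : IsCompact K := h.properOver _ (sphere_subset_ball (by norm_num)) (isCompact_sphere _ _)
  have hKW : K ⊆ W \ {0} := by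
    rintro x ⟨hxW, hx⟩
    refine ⟨hxW, fun hx0 => ?_⟩
    simp [(h.eq_zero_iff hxW).mpr hx0] at hx
  have hKne : K.Nonempty := by
    obtain ⟨x, hxW, hx⟩ : (1 / 2 : ℂ) ∈ f '' W := by
      rw [h.image_eq isOpen_ball (convex_ball _ _).isPreconnected ⟨0, h.zero_mem⟩]
      norm_num
    exact ⟨x, hxW, by simp [hx]⟩
  obtain ⟨x, hxK, hmax⟩ := hK.exists_isMaxOn hKne
    (continuous_im.comp_continuousOn (hu.continuousOn.mono hKW))
  have hfreq : ∃ᶠ w in 𝓝 (u x), w.re = (u x).re ∧ (u x).im < w.im :=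
    frequently_nhds_of_forall_add_smul (d := I) fun t ht => by simpa using ht
  obtain ⟨_, ⟨hre, him⟩, x', hx'W, rfl⟩ := (hfreq.and_eventually
    ((huo _ subset_rfl (h.isOpen.sdiff isClosed_singleton)).mem_nhds ⟨x, hKW hxK, rfl⟩)).exists
  have hx'K : x' ∈ K := ⟨hx'W.1, by
    rw [mem_preimage, mem_sphere_zero_iff_norm, ← hu.exp_eq x' hx'W, norm_exp, hre, ← norm_exp,
      hu.exp_eq x (hKW hxK), mem_sphere_zero_iff_norm.mp hxK.2]⟩
  exact (hmax hx'K).not_gt him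

lemma isProperOver_logLift (h : IsWindingFactorization f u W n) :
    IsProperOver (logLift u n) (exp ⁻¹' W) {w | w.re < 0} := by
  intro C hC hCc
  set K := W ∩ f ⁻¹' (exp '' C)
  have hK : IsCompact K := by
    refine h.properOver _ ?_ (hCc.image continuous_exp)
    rintro _ ⟨w, hw, rfl⟩
    rw [mem_ball_zero_iff, norm_exp, Real.exp_lt_one_iff]
    exact hC hw
  have hKW : K ⊆ W \ {0} := by
    rintro x ⟨hxW, w, -, hw⟩
    exact ⟨hxW, fun hx0 => exp_ne_zero w (hw.trans ((h.eq_zero_iff hxW).mpr hx0))⟩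
  have heq : exp ⁻¹' W ∩ logLift u n ⁻¹' C = exp ⁻¹' K ∩ logLift u n ⁻¹' C :=
    Subset.antisymm (fun ζ hζ => ⟨⟨hζ.1, _, hζ.2, h.isLogOn_logLift.exp_eq ζ hζ.1⟩, hζ.2⟩)
      fun ζ hζ => ⟨hζ.1.1, hζ.2⟩
  have hclosed : IsClosed (exp ⁻¹' K ∩ logLift u n ⁻¹' C) :=
    (h.isLogOn_logLift.continuousOn.mono fun ζ hζ => hζ.1).preimage_isClosed_of_isClosed
      (hK.isClosed.preimage continuous_exp) hCc.isClosed
  obtain ⟨M, hM⟩ := hCc.isBounded.exists_norm_le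
  obtain ⟨M', hM'⟩ := hK.exists_bound_of_continuousOn (h.isLogOn.continuousOn.mono hKW)
  rw [heq]
  refine isCompact_of_isClosed_isBounded hclosed (isBounded_iff_forall_norm_le.mpr
    ⟨M + M', fun ζ hζ => (norm_le_norm_logLift_add h.winding_ne_zero u ζ).trans
      (add_le_add (hM _ hζ.2) (hM' _ hζ.1))⟩)

theorem isNormalDomain_logLift (h : IsWindingFactorization f u W n) :
    IsNormalDomain (logLift u n) (exp ⁻¹' W) {w | w.re < 0} where
  isOpen := h.isOpen.preimage continuous_exp
  continuousOn := h.isLogOn_logLift.continuousOn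
  isOpenMapOn := h.isLogOn_logLift.isOpenMapOn fun U hUW hU => by
    rw [image_comp]
    exact h.isOpenMapOn _ (image_subset_iff.mpr hUW) (isOpenMap_exp U hU)
  light y t ht htc ζ hζ ξ hξ := by
    have hsub : exp '' t ⊆ W ∩ f ⁻¹' {exp y} := by
      rintro _ ⟨ζ, hζ, rfl⟩
      refine ⟨(ht hζ).1, ?_⟩
      rw [← (ht hζ).2]
      exact (h.isLogOn_logLift.exp_eq ζ (ht hζ).1).symm
    have hexp : exp ζ = exp ξ := h.light _ _ hsub (htc.image _ continuous_exp.continuousOn)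
      (mem_image_of_mem _ hζ) (mem_image_of_mem _ hξ)
    have heq : logLift u n ζ = logLift u n ξ := (ht hζ).2.trans (ht hξ).2.symm
    rw [logLift, logLift, hexp, add_left_inj] at heq
    exact mul_left_cancel₀ (Int.cast_ne_zero.mpr h.winding_ne_zero) heq
  connectedToInfinity_compl := h.connectedToInfinity_compl.preimage continuous_exp isOpenMap_exp
  mapsTo ζ hζ := by
    rw [mem_ofPred_eq, ← Real.exp_lt_one_iff, ← h.norm_map_exp hζ]
    exact mem_ball_zero_iff.mp (h.mapsTo hζ)
  properOver := h.isProperOver_logLift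

lemma exists_re_logLift_bounds (h : IsWindingFactorization f u W n) :
    ∃ ℓ : ℝ, ∃ a < 0, ∃ b < 0, (∀ ζ : ℂ, ζ.re ≤ ℓ → exp ζ ∈ W) ∧
      ∀ ζ, exp ζ ∈ W → (a ≤ (logLift u n ζ).re → ℓ ≤ ζ.re) ∧
        ((logLift u n ζ).re ≤ b → ζ.re ≤ ℓ) := by
  obtain ⟨e, he, heW⟩ := Metric.nhds_basis_closedBall.mem_iff.mp (h.isOpen.mem_nhds h.zero_mem)
  have hexp_mem : ∀ ζ : ℂ, ζ.re ≤ Real.log e → exp ζ ∈ closedBall 0 e := fun ζ hζ => by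
    rwa [mem_closedBall_zero_iff, norm_exp, ← Real.le_log_iff_exp_le he]
  obtain ⟨m, hm1, hm⟩ := exists_lt_subset_ball
    ((isCompact_closedBall (0 : ℂ) e).image_of_continuousOn (h.continuousOn.mono heW)).isClosed
    (image_subset_iff.mpr fun x hx => h.mapsTo (heW hx))
  have hm0 : 0 < m := by
    simpa [h.map_zero] using hm ⟨0, mem_closedBall_self he.le, rfl⟩
  have hfibre : W ∩ f ⁻¹' {0} ⊆ ball 0 e := fun x hx => by
    simpa [(h.eq_zero_iff hx.1).mp hx.2] using he
  obtain ⟨δ, hδ, hδe⟩ := Metric.eventually_nhds_iff_ball.mp (h.properOver.eventually_fibre_subset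
    h.continuousOn (ball_mem_nhds 0 one_pos) isOpen_ball hfibre)
  obtain ⟨b, hbδ, hb0⟩ : ∃ b, b < Real.log δ ∧ b < 0 :=
    (exists_lt (min (Real.log δ) 0)).imp fun b => lt_min_iff.mp
  refine ⟨Real.log e, Real.log m, Real.log_neg hm0 hm1, b, hb0,
    fun ζ hζ => heW (hexp_mem ζ hζ), fun ζ hζ => ⟨fun ha => ?_, fun hb => ?_⟩⟩
  · by_contra! hlt
    have hfm : ‖f (exp ζ)‖ < m := mem_ball_zero_iff.mp (hm ⟨_, hexp_mem ζ hlt.le, rfl⟩)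
    rw [h.norm_map_exp hζ, ← Real.lt_log_iff_exp_lt hm0] at hfm
    exact hfm.not_ge ha
  · have hfδ : f (exp ζ) ∈ ball 0 δ := by
      rw [mem_ball_zero_iff, h.norm_map_exp hζ, ← Real.lt_log_iff_exp_lt hδ]
      exact hb.trans_lt hbδ
    have hζe : ‖exp ζ‖ < e := mem_ball_zero_iff.mp (hδe _ hfδ ⟨hζ, rfl⟩)
    rw [norm_exp, ← Real.lt_log_iff_exp_lt he] at hζe
    exact hζe.le

lemma exists_mem_connectedComponentIn_logLift_eq (h : IsWindingFactorization f u W n) {τ t : ℝ}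
    {x w : ℂ} (hx : x ∈ exp ⁻¹' W ∩ logLift u n ⁻¹' {w | t < τ * w.im}) (hw : w.re < 0)
    (hwt : t < τ * w.im) :
    ∃ q ∈ connectedComponentIn (exp ⁻¹' W ∩ logLift u n ⁻¹' {w | t < τ * w.im}) x,
      logLift u n q = w := by
  have hO : IsOpen ({w : ℂ | w.re < 0} ∩ {w | t < τ * w.im}) :=
    (isOpen_lt continuous_re continuous_const).inter
      (isOpen_lt continuous_const (continuous_const.mul continuous_im))
  have hOc : Convex ℝ ({w : ℂ | w.re < 0} ∩ {w | t < τ * w.im}) :=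
    (convex_halfSpace_re_lt 0).inter (convex_halfSpace_gt (τ • imLm).isLinear t)
  obtain ⟨q, hq, rfl⟩ := h.isNormalDomain_logLift.subset_image_connectedComponentIn hO
    hOc.isPreconnected inter_subset_left ⟨hx.1, h.isNormalDomain_logLift.mapsTo hx.1, hx.2⟩
    ⟨hw, hwt⟩
  exact ⟨q, connectedComponentIn_mono x
    (inter_subset_inter_right _ (preimage_mono inter_subset_right)) hq, rfl⟩

lemma exists_forall_connectedComponentIn_re_eq (h : IsWindingFactorization f u W n) :
    ∃ ℓ : ℝ, (∀ ζ : ℂ, ζ.re = ℓ → exp ζ ∈ W) ∧ ∀ {τ : ℝ}, τ ≠ 0 → ∀ (t : ℝ),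
      ∀ x ∈ exp ⁻¹' W ∩ logLift u n ⁻¹' {w | t < τ * w.im},
        ∃ q ∈ connectedComponentIn (exp ⁻¹' W ∩ logLift u n ⁻¹' {w | t < τ * w.im}) x,
          q.re = ℓ := by
  obtain ⟨ℓ, a, ha, b, hb, hW, hℓ⟩ := h.exists_re_logLift_bounds
  refine ⟨ℓ, fun ζ hζ => hW ζ hζ.le, fun {τ} hτ t x hx => ?_⟩
  have hheight : t < τ * ((t + 1) / τ) := by
    rw [mul_div_cancel₀ _ hτ]
    exact lt_add_one t
  obtain ⟨q₁, hq₁, hG₁⟩ :=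
    h.exists_mem_connectedComponentIn_logLift_eq (w := ⟨a, (t + 1) / τ⟩) hx ha hheight
  obtain ⟨q₂, hq₂, hG₂⟩ :=
    h.exists_mem_connectedComponentIn_logLift_eq (w := ⟨b, (t + 1) / τ⟩) hx hb hheight
  have hℓq₁ : ℓ ≤ q₁.re := (hℓ q₁ (connectedComponentIn_subset _ _ hq₁).1).1 (by rw [hG₁])
  have hq₂ℓ : q₂.re ≤ ℓ := (hℓ q₂ (connectedComponentIn_subset _ _ hq₂).1).2 (by rw [hG₂])
  exact isPreconnected_connectedComponentIn.intermediate_value hq₂ hq₁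
    continuous_re.continuousOn ⟨hq₂ℓ, hℓq₁⟩

lemma exists_abs_im_logLift_sub_le (h : IsWindingFactorization f u W n) {ℓ : ℝ}
    (hℓ : ∀ ζ : ℂ, ζ.re = ℓ → exp ζ ∈ W) (τ : ℝ) :
    ∃ M : ℝ, ∀ ζ : ℂ, ζ.re = ℓ → |τ * (logLift u n ζ).im - τ * n * ζ.im| ≤ M := by
  have hsphere : sphere 0 (Real.exp ℓ) ⊆ W \ {0} := fun x hx => by
    have hx0 : x ≠ 0 := ne_of_mem_sphere hx (Real.exp_pos ℓ).ne'
    refine ⟨exp_log hx0 ▸ hℓ _ ?_, hx0⟩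
    rw [log_re, mem_sphere_zero_iff_norm.mp hx, Real.log_exp]
  obtain ⟨M, hM⟩ := (isCompact_sphere (0 : ℂ) (Real.exp ℓ)).exists_bound_of_continuousOn
    (h.isLogOn.continuousOn.mono hsphere)
  refine ⟨|τ| * M, fun ζ hζ => ?_⟩
  have hu : ‖u (exp ζ)‖ ≤ M := hM _ (by rw [mem_sphere_zero_iff_norm, norm_exp, hζ])
  have him : τ * (logLift u n ζ).im - τ * n * ζ.im = τ * (u (exp ζ)).im := by
    simp only [logLift, add_im, mul_im, intCast_re, intCast_im]
    ring
  rw [him, abs_mul]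
  exact mul_le_mul_of_nonneg_left ((abs_im_le_norm _).trans hu) (abs_nonneg τ)

/- On the line `Re ζ = ℓ`, which every component crosses, the imaginary part of the lift is
`n * Im ζ` up to a bounded error; so every component reaches the connected half-line `Γ`. -/
theorem isPreconnected_inter_preimage_logLift (h : IsWindingFactorization f u W n) {τ : ℝ}
    (hτ : τ ≠ 0) (t : ℝ) :
    IsPreconnected (exp ⁻¹' W ∩ logLift u n ⁻¹' {w | t < τ * w.im}) := by
  obtain ⟨ℓ, hℓW, hcross⟩ := h.exists_forall_connectedComponentIn_re_eq
  obtain ⟨M, hM⟩ := h.exists_abs_im_logLift_sub_le hℓW τ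
  have hM0 : 0 ≤ M := (abs_nonneg _).trans (hM ℓ (ofReal_re ℓ))
  set Γ : Set ℂ := {ζ | ζ.re = ℓ} ∩ {ζ | t + M < τ * n * ζ.im}
  have hΓ : Convex ℝ Γ := (convex_hyperplane reLm.isLinear ℓ).inter
    (convex_halfSpace_gt ((τ * n) • imLm).isLinear (t + M))
  have hmono : {w : ℂ | t + 2 * M < τ * w.im} ⊆ {w | t < τ * w.im} := fun w hw =>
    (by linarith : t ≤ t + 2 * M).trans_lt hw
  refine isPreconnected_of_forall_connectedComponentIn_inter hΓ.isPreconnected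
    (fun ζ ⟨hζℓ, hζ⟩ => ⟨hℓW ζ hζℓ, ?_⟩) fun x hx => ?_
  · have := (abs_le.mp (hM ζ hζℓ)).1
    simp only [mem_preimage, mem_ofPred_eq] at hζ ⊢
    linarith
  · have hheight : t + 2 * M < τ * ((t + 2 * M + 1) / τ) := by
      rw [mul_div_cancel₀ _ hτ]
      exact lt_add_one _
    obtain ⟨p, hpx, hp⟩ := h.exists_mem_connectedComponentIn_logLift_eq
      (w := ⟨-1, (t + 2 * M + 1) / τ⟩) hx (by norm_num) (hmono hheight)
    obtain ⟨q, hqp, hqℓ⟩ := hcross hτ (t + 2 * M) p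
      ⟨(connectedComponentIn_subset _ _ hpx).1, by rwa [mem_preimage, hp]⟩
    refine ⟨q, ?_, hqℓ, ?_⟩
    · rw [connectedComponentIn_eq hpx]
      exact connectedComponentIn_mono p (inter_subset_inter_right _ (preimage_mono hmono)) hqp
    · have hq : t + 2 * M < τ * (logLift u n q).im := (connectedComponentIn_subset _ _ hqp).2
      have := (abs_le.mp (hM q hqℓ)).2
      rw [mem_ofPred_eq]
      linarith

lemma exists_subset_connectedComponentIn_im_ne (h : IsWindingFactorization f u W n) {τ : ℝ}
    (hτ : τ ≠ 0) (y : ℝ) : ∃ p, exp ⁻¹' W ∩ logLift u n ⁻¹' {w | τ * y < τ * w.im} ⊆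
      connectedComponentIn (exp ⁻¹' W ∩ logLift u n ⁻¹' {w | w.im ≠ y}) p := by
  set A := exp ⁻¹' W ∩ logLift u n ⁻¹' {w | τ * y < τ * w.im}
  rcases A.eq_empty_or_nonempty with hA | ⟨p, hp⟩
  · exact ⟨0, hA ▸ empty_subset _⟩
  · refine ⟨p, (h.isPreconnected_inter_preimage_logLift hτ _).subset_connectedComponentIn hp ?_⟩
    refine inter_subset_inter_right _ (preimage_mono ?_)
    rintro w (hw : τ * y < τ * w.im) rfl
    exact lt_irrefl _ hw

theorem injOn_logLift (h : IsWindingFactorization f u W n) :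
    InjOn (logLift u n) (exp ⁻¹' W) := by
  classical
  intro ζ hζ ξ hξ heq
  set y := (logLift u n ξ).im
  obtain ⟨p, hp⟩ := h.exists_subset_connectedComponentIn_im_ne one_ne_zero y
  obtain ⟨q, hq⟩ := h.exists_subset_connectedComponentIn_im_ne (neg_ne_zero.mpr one_ne_zero) y
  have hcover : exp ⁻¹' W ∩ logLift u n ⁻¹' {w | w.im ≠ y} ⊆ ⋃ s ∈ ({p, q} : Finset ℂ),
      connectedComponentIn (exp ⁻¹' W ∩ logLift u n ⁻¹' {w | w.im ≠ y}) s := by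
    rintro x ⟨hx, hne⟩
    rcases lt_or_gt_of_ne hne with hlt | hgt
    · exact mem_iUnion₂.mpr ⟨q, by simp, hq ⟨hx, by simpa using hlt⟩⟩
    · exact mem_iUnion₂.mpr ⟨p, by simp, hp ⟨hx, by simpa using hgt⟩⟩
  have hfibre : (({ζ, ξ} : Finset ℂ) : Set ℂ) ⊆ exp ⁻¹' W ∩ logLift u n ⁻¹' {logLift u n ξ} := by
    simp [insert_subset_iff, heq, mem_preimage.mp hζ, mem_preimage.mp hξ]
  have hcard := h.isNormalDomain_logLift.toIsLightOpenOn.fibre_card_lt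
    h.isNormalDomain_logLift.connectedToInfinity_compl (by simp) hcover hfibre
  by_contra hne
  rw [Finset.card_pair hne] at hcard
  exact hcard.not_ge Finset.card_le_two

end IsWindingFactorization

/-- The continuous `k`-th root of `x ↦ x ^ k * exp (u x)`. -/
noncomputable def root (u : ℂ → ℂ) (k : ℕ) (x : ℂ) : ℂ := x * exp (u x / k)

namespace IsWindingFactorization

variable {f u : ℂ → ℂ} {W : Set ℂ} {n : ℤ} {k : ℕ}

lemma exponent_ne_zero (h : IsWindingFactorization f u W k) : k ≠ 0 := by
  exact_mod_cast h.winding_ne_zero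

lemma root_pow (h : IsWindingFactorization f u W k) {x : ℂ} (hx : x ∈ W) :
    root u k x ^ k = f x := by
  have hk : k ≠ 0 := h.exponent_ne_zero
  rcases eq_or_ne x 0 with rfl | hx0
  · simp [root, h.map_zero, hk]
  · rw [root, mul_pow, ← exp_nat_mul, mul_div_cancel₀ _ (Nat.cast_ne_zero.mpr hk),
      h.eq_zpow_mul_exp hx hx0, zpow_natCast]

lemma root_exp (h : IsWindingFactorization f u W k) (ζ : ℂ) :
    root u k (exp ζ) = exp (logLift u k ζ / k) := by
  have hk : (k : ℂ) ≠ 0 := Nat.cast_ne_zero.mpr h.exponent_ne_zero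
  rw [root, ← exp_add, logLift, Int.cast_natCast, add_div, mul_div_cancel_left₀ _ hk]

lemma continuousOn_root (h : IsWindingFactorization f u W k) : ContinuousOn (root u k) W := by
  intro x hx
  rcases eq_or_ne x 0 with rfl | hx0
  · rw [Metric.continuousWithinAt_iff']
    intro ε hε
    have hf : ∀ᶠ x in 𝓝[W] 0, ‖f x‖ < ε ^ k := by
      simpa [h.map_zero] using
        Metric.continuousWithinAt_iff'.mp (h.continuousOn 0 hx) (ε ^ k) (pow_pos hε k)
    filter_upwards [hf, self_mem_nhdsWithin] with x hfx hxW
    have hroot0 : root u k 0 = 0 := zero_mul _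
    rw [hroot0, dist_zero_right]
    rw [← h.root_pow hxW, norm_pow] at hfx
    exact lt_of_pow_lt_pow_left₀ k hε.le hfx
  · have hu : ContinuousAt u x := h.isLogOn.continuousOn.continuousAt
      ((h.isOpen.sdiff isClosed_singleton).mem_nhds ⟨hx, hx0⟩)
    exact (continuousAt_id.mul (hu.div_const _).cexp).continuousWithinAt

lemma injOn_root (h : IsWindingFactorization f u W k) : InjOn (root u k) W := by
  intro x hx x' hx' heq
  have hfx : f x = f x' := by rw [← h.root_pow hx, heq, h.root_pow hx']
  rcases eq_or_ne x 0 with rfl | hx0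
  · exact ((h.eq_zero_iff hx').mp (hfx.symm.trans h.map_zero)).symm
  have hx'0 : x' ≠ 0 := fun h0 => hx0 ((h.eq_zero_iff hx).mp (by rw [hfx, h0, h.map_zero]))
  obtain ⟨ζ, rfl⟩ : ∃ ζ, exp ζ = x := ⟨log x, exp_log hx0⟩
  obtain ⟨ξ, rfl⟩ : ∃ ξ, exp ξ = x' := ⟨log x', exp_log hx'0⟩
  rw [h.root_exp, h.root_exp] at heq
  obtain ⟨m, hm⟩ := exp_eq_exp_iff_exists_int.mp heq
  have hexp : exp (ξ + m * (2 * Real.pi * I)) = exp ξ := exp_eq_exp_iff_exists_int.mpr ⟨m, rfl⟩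
  have hlift : logLift u k ζ = logLift u k (ξ + m * (2 * Real.pi * I)) := by
    have hk : (k : ℂ) ≠ 0 := Nat.cast_ne_zero.mpr h.exponent_ne_zero
    field_simp at hm
    simp only [logLift, hexp, Int.cast_natCast] at hm ⊢
    linear_combination hm
  rw [h.injOn_logLift hx (by rwa [mem_preimage, hexp]) hlift, hexp]

lemma surjOn_root (h : IsWindingFactorization f u W k) : SurjOn (root u k) W (ball 0 1) := by
  intro y hy
  rcases eq_or_ne y 0 with rfl | hy0
  · exact ⟨0, h.zero_mem, by simp [root]⟩
  have hk : 0 < k := Nat.pos_of_ne_zero h.exponent_ne_zero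
  have hne : (exp ⁻¹' W).Nonempty := by
    obtain ⟨ℓ, -, -, -, -, hℓ, -⟩ := h.exists_re_logLift_bounds
    exact ⟨ℓ, hℓ ℓ (ofReal_re ℓ).le⟩
  obtain ⟨ζ, hζ, hlift⟩ : k * log y ∈ logLift u k '' (exp ⁻¹' W) := by
    rw [h.isNormalDomain_logLift.image_eq (isOpen_lt continuous_re continuous_const)
      (convex_halfSpace_re_lt 0).isPreconnected hne]
    have hlog : Real.log ‖y‖ < 0 :=
      Real.log_neg (norm_pos_iff.mpr hy0) (mem_ball_zero_iff.mp hy)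
    simpa [log_re] using mul_neg_of_pos_of_neg (Nat.cast_pos.mpr hk) hlog
  refine ⟨exp ζ, hζ, ?_⟩
  rw [h.root_exp, hlift, mul_div_cancel_left₀ _ (Nat.cast_ne_zero.mpr hk.ne'), exp_log hy0]

lemma bijOn_root (h : IsWindingFactorization f u W k) : BijOn (root u k) W (ball 0 1) := by
  refine ⟨fun x hx => ?_, h.injOn_root, h.surjOn_root⟩
  have hfx : ‖f x‖ < 1 := mem_ball_zero_iff.mp (h.mapsTo hx)
  rw [← h.root_pow hx, norm_pow, pow_lt_one_iff_of_nonneg (norm_nonneg _) h.exponent_ne_zero] at hfx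
  exact mem_ball_zero_iff.mpr hfx

lemma isProperOver_root (h : IsWindingFactorization f u W k) :
    IsProperOver (root u k) W (ball 0 1) :=
  h.properOver.of_comp (continuous_pow k)
    (fun y hy => by
      rw [mem_ball_zero_iff] at hy ⊢
      rw [norm_pow]
      exact pow_lt_one₀ (norm_nonneg y) hy h.exponent_ne_zero)
    (fun x hx => h.root_pow hx) h.continuousOn_root

lemma conj (h : IsWindingFactorization f u W n) :
    IsWindingFactorization (conjLIE ∘ f) (fun x => conjLIE (u x) + n * Real.log (normSq x)) W
      (-n) where
  toIsNormalDomain := by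
    simpa using h.toIsNormalDomain.comp_homeomorph conjLIE.toHomeomorph (Homeomorph.refl ℂ)
  zero_mem := h.zero_mem
  map_zero := by simp [h.map_zero]
  isLogOn := by
    refine ⟨?_, fun x hx => ?_⟩
    · refine (conjLIE.continuous.comp_continuousOn h.isLogOn.continuousOn).add
        (continuousOn_const.mul (continuous_ofReal.comp_continuousOn
          (continuous_normSq.continuousOn.log fun x hx => (normSq_pos.mpr hx.2).ne')))
    · have hnormSq : exp (Real.log (normSq x)) = conjLIE x * x := by
        rw [← ofReal_exp, Real.exp_log (normSq_pos.mpr hx.2), normSq_eq_conj_mul_self]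
        rfl
      rw [exp_add, exp_int_mul, hnormSq, mul_zpow, zpow_neg, div_inv_eq_mul, Function.comp_apply,
        h.eq_zpow_mul_exp hx.1 hx.2]
      simp only [conjLIE_apply, map_mul, map_zpow₀, ← exp_conj]
      ring

end IsWindingFactorization

/-! ### Power maps -/

/-- `f` is conjugate on `U` to the map `w ↦ w ^ k` of the unit disc. -/
def IsPowerMapOn (f : ℂ → ℂ) (U : Set ℂ) (k : ℕ) : Prop :=
  ∃ ψ φ : PartialHomeomorph ℂ ℂ,
    ψ.source = U ∧ ψ.target = ball 0 1 ∧ φ.source = f '' U ∧ φ.target = ball 0 1 ∧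
      ∀ x ∈ U, φ (f x) = ψ x ^ k

lemma IsWindingFactorization.isPowerMapOn {f u : ℂ → ℂ} {W : Set ℂ} {k : ℕ}
    (h : IsWindingFactorization f u W k) : IsPowerMapOn f W k := by
  obtain ⟨ψ, hψs, hψt, hψ⟩ :=
    h.isProperOver_root.exists_partialHomeomorph h.continuousOn_root isOpen_ball h.bijOn_root
  have himage : f '' W = ball 0 1 :=
    h.image_eq isOpen_ball (convex_ball _ _).isPreconnected ⟨0, h.zero_mem⟩
  refine ⟨ψ, (Homeomorph.refl ℂ).toPartialHomeomorphOfImageEq (ball 0 1) (ball 0 1) (by simp),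
    hψs, hψt, himage.symm, rfl, fun x hx => ?_⟩
  rw [hψ, h.root_pow hx]
  rfl

/-- The composite of a homeomorphism `e` and a partial homeomorphism `ψ`, defined on the preimage
of the source of `ψ`. -/
noncomputable def precompHomeomorph {X Y Z : Type*} [TopologicalSpace X] [TopologicalSpace Y]
    [TopologicalSpace Z] (e : X ≃ₜ Y) (ψ : PartialHomeomorph Y Z) : PartialHomeomorph X Z where
  toPartialEquiv := e.toEquiv.transPartialEquiv ψ.toPartialEquiv
  continuousOn_toFun :=
    ψ.continuousOn_toFun.comp e.continuous.continuousOn (mapsTo_preimage e ψ.source)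
  continuousOn_invFun := e.symm.continuous.comp_continuousOn ψ.continuousOn_invFun

lemma IsPowerMapOn.of_comp_homeomorph {f : ℂ → ℂ} {U : Set ℂ} {k : ℕ} {e' e : ℂ ≃ₜ ℂ}
    (h : IsPowerMapOn (e' ∘ f ∘ e) U k) : IsPowerMapOn f (e '' U) k := by
  obtain ⟨ψ, φ, hψs, hψt, hφs, hφt, hφψ⟩ := h
  refine ⟨precompHomeomorph e.symm ψ, precompHomeomorph e' φ, ?_, hψt, ?_, hφt, ?_⟩
  · change e.symm ⁻¹' ψ.source = e '' U
    rw [hψs, e.preimage_symm]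
  · change e' ⁻¹' φ.source = f '' (e '' U)
    rw [hφs, image_comp, image_comp, e'.preimage_image]
  · rintro _ ⟨x, hx, rfl⟩
    change φ (e' (f (e x))) = ψ (e.symm (e x)) ^ k
    rw [e.symm_apply_apply]
    exact hφψ x hx

/-- The similarity of the plane that maps the unit disc to the disc with centre `c` and
radius `r`. -/
noncomputable def discHomeomorph (c : ℂ) {r : ℝ} (hr : 0 < r) : ℂ ≃ₜ ℂ :=
  (Homeomorph.smulOfNeZero r hr.ne').trans (Homeomorph.addLeft c)

lemma discHomeomorph_apply_zero (c : ℂ) {r : ℝ} (hr : 0 < r) : discHomeomorph c hr 0 = c := by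
  simp [discHomeomorph]

lemma discHomeomorph_image_ball (c : ℂ) {r : ℝ} (hr : 0 < r) :
    discHomeomorph c hr '' ball 0 1 = ball c r := by
  have hcoe : ⇑(discHomeomorph c hr) = (fun x => c + x) ∘ fun x => r • x := rfl
  rw [hcoe, image_comp, image_smul, smul_unitBall_of_pos hr]
  simp

lemma exists_isWindingFactorization {f : ℂ → ℂ} {W : Set ℂ} (h : IsNormalDomain f W (ball 0 1))
    (hW : W ⊆ ball 0 1) (hf : ContinuousOn f (ball 0 1)) (h0W : 0 ∈ W)
    (hf0 : ∀ x ∈ ball 0 1, f x = 0 ↔ x = 0) :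
    ∃ u n, IsWindingFactorization f u W n := by
  have hconv : Convex ℝ (exp ⁻¹' ball 0 1) := by
    have heq : exp ⁻¹' ball 0 1 = {ζ | ζ.re < 0} := by
      ext ζ
      simp [norm_exp]
    exact heq ▸ convex_halfSpace_re_lt 0
  obtain ⟨n, u, hu⟩ := exists_hasLogOn_div_zpow isOpen_ball hconv (hf.mono sdiff_subset)
    fun x hx => (hf0 x hx.1).not.mpr hx.2
  exact ⟨u, n, h, h0W, (hf0 0 (hW h0W)).mpr rfl, hu.mono (sdiff_subset_sdiff_left hW)⟩

lemma exists_isWindingFactorization_conj {f : ℂ → ℂ} {W : Set ℂ} {z : ℂ} {r R : ℝ} (hr : 0 < r)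
    (hR : 0 < R) (h : IsNormalDomain f W (ball (f z) r)) (hW : W ⊆ ball z R)
    (hf : ContinuousOn f (ball z R)) (hz : z ∈ W) (hfz : ∀ x ∈ ball z R, f x = f z → x = z) :
    ∃ u n, IsWindingFactorization ((discHomeomorph (f z) hr).symm ∘ f ∘ discHomeomorph z hR) u
      (discHomeomorph z hR ⁻¹' W) n := by
  set e := discHomeomorph z hR
  set e' := discHomeomorph (f z) hr
  have he0 : e 0 = z := discHomeomorph_apply_zero z hR
  have he'0 : e' 0 = f z := discHomeomorph_apply_zero (f z) hr
  have he : e ⁻¹' ball z R = ball 0 1 := by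
    rw [← discHomeomorph_image_ball z hR, e.preimage_image]
  have he' : e'.symm '' ball (f z) r = ball 0 1 := by
    rw [← discHomeomorph_image_ball (f z) hr, e'.image_symm, e'.preimage_image]
  have hball : MapsTo e (ball 0 1) (ball z R) := he.symm.subset
  refine exists_isWindingFactorization (he' ▸ h.comp_homeomorph e'.symm e)
    (he ▸ preimage_mono hW) ?_ (mem_preimage.mpr (he0 ▸ hz)) fun x hx => ?_
  · exact e'.symm.continuous.comp_continuousOn (hf.comp e.continuous.continuousOn hball)
  · rw [Function.comp_apply, Function.comp_apply, e'.symm_apply_eq, he'0]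
    refine ⟨fun hfx => e.injective ((hfz (e x) (hball hx) hfx).trans he0.symm), ?_⟩
    rintro rfl
    rw [he0]

lemma IsWindingFactorization.exists_isPowerMapOn {f u : ℂ → ℂ} {W : Set ℂ} {n : ℤ}
    (h : IsWindingFactorization f u W n) : ∃ k > 0, IsPowerMapOn f W k := by
  refine ⟨n.natAbs, Int.natAbs_pos.mpr h.winding_ne_zero, ?_⟩
  obtain ⟨k, rfl | rfl⟩ := n.eq_nat_or_neg
  · simpa using h.isPowerMapOn
  · have hconj := h.conj
    rw [neg_neg] at hconj
    simpa using IsPowerMapOn.of_comp_homeomorph (e' := conjLIE.toHomeomorph)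
      (e := Homeomorph.refl ℂ) hconj.isPowerMapOn

end Stoilow

open Stoilow Set Metric Topology in
theorem stoilow_local_power_map_general {f : ℂ → ℂ} {Ω : Set ℂ} (h : IsLightOpenOn f Ω) {z : ℂ}
    (hz : z ∈ Ω) : ∃ k > 0, ∃ U, IsOpen U ∧ z ∈ U ∧ U ⊆ Ω ∧ IsPowerMapOn f U k := by
  obtain ⟨R, hR, hRsub⟩ := Metric.mem_nhds_iff.mp
    (Filter.inter_mem (h.isOpen.mem_nhds hz) (h.eventually_eq_imp_eq hz))
  obtain ⟨r, hr, W, hWsub, hzW, hW⟩ := h.exists_isNormalDomain hz (ball_mem_nhds z hR)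
  obtain ⟨u, n, hun⟩ := exists_isWindingFactorization_conj hr hR hW
    (hWsub.trans inter_subset_right) (h.continuousOn.mono (hRsub.trans inter_subset_left)) hzW
    fun x hx => (hRsub hx).2
  obtain ⟨k, hk, hpow⟩ := hun.exists_isPowerMapOn
  refine ⟨k, hk, W, hW.isOpen, hzW, hWsub.trans inter_subset_left, ?_⟩
  simpa [Homeomorph.image_preimage] using hpow.of_comp_homeomorph

/-- **Stoïlow's local normal form.** A continuous, light, open map on a planar domain
is locally modelled on the power map `z ↦ z ^ k`: for each point `z` of the domain
there are `k ≥ 1`, an open neighbourhood `U` of `z` and homeomorphisms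
`ψ : U → 𝔻` and `φ : f(U) → 𝔻` onto the open unit disk such that
`φ (f x) = (ψ x) ^ k` on `U`. -/
theorem stoilow_local_power_map
    (Ω : Set ℂ) (hΩopen : IsOpen Ω) (hΩconn : IsConnected Ω)
    (f : ℂ → ℂ)
    (hcont : ContinuousOn f Ω)
    (hlight : ∀ y : ℂ, IsTotallyDisconnected (Ω ∩ f ⁻¹' {y}))
    (hopen : ∀ U : Set ℂ, U ⊆ Ω → IsOpen U → IsOpen (f '' U)) :
    ∀ z ∈ Ω, ∃ k : ℕ, 0 < k ∧ ∃ U : Set ℂ, IsOpen U ∧ z ∈ U ∧ U ⊆ Ω ∧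
      ∃ ψ φ : PartialHomeomorph ℂ ℂ,
        ψ.source = U ∧ ψ.target = Metric.ball (0 : ℂ) 1 ∧
        φ.source = f '' U ∧ φ.target = Metric.ball (0 : ℂ) 1 ∧
        ∀ x ∈ U, φ (f x) = (ψ x) ^ k :=
  fun _ hz => stoilow_local_power_map_general ⟨hΩopen, hcont, hopen, hlight⟩ hz
end

section
/- Let C be a closed and totally disconnected subset of ℂ. Then every point x ∈ C has a neighborhood basis consisting of open neighborhoods U with C ∩ ∂U = ∅, where ∂U denotes the topological boundary of U. That is, for every x ∈ C and every neighborhood V of x there exists an open neighborhood U of x with U ⊆ V and C ∩ ∂U = ∅. -/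
/-!
Locally compact, totally disconnected spaces have small compact open neighbourhoods, so `x` lies in
a compact `K` inside an open `O ⊆ V` with `C ∩ O ⊆ K`. By regularity there is an open `U ⊇ K` with
`closure U ⊆ O`, and a point of `C ∩ frontier U` would lie in `C ∩ O ⊆ K ⊆ U`, whereas the open set
`U` misses its frontier.
-/

open Set Topology

section

variable {X : Type*} [TopologicalSpace X]

theorem exists_isCompact_isOpen_subset_of_mem_nhds [R1Space X] [LocallyCompactSpace X]
    [TotallyDisconnectedSpace X] {x : X} {V : Set X} (hV : V ∈ 𝓝 x) :
    ∃ W, IsCompact W ∧ IsOpen W ∧ x ∈ W ∧ W ⊆ V := by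
  obtain ⟨L, hLx, hLV, hL⟩ := local_compact_nhds hV
  obtain ⟨W, hW : IsClopen W, hxW, hWL⟩ :=
    loc_compact_Haus_tot_disc_of_zero_dim.mem_nhds_iff.1 hLx
  exact ⟨W, hL.of_isClosed_subset hW.isClosed hWL, hW.isOpen, hxW, hWL.trans hLV⟩

theorem exists_isCompact_isOpen_inter_subset_of_isTotallyDisconnected [R1Space X]
    {C V : Set X} [LocallyCompactSpace C] (hC : IsTotallyDisconnected C) {x : X} (hx : x ∈ C)
    (hV : V ∈ 𝓝 x) :
    ∃ K O, IsCompact K ∧ IsOpen O ∧ x ∈ K ∧ K ⊆ O ∧ O ⊆ V ∧ C ∩ O ⊆ K := by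
  have : TotallyDisconnectedSpace C := totallyDisconnectedSpace_subtype_iff.2 hC
  have hVC : Subtype.val ⁻¹' interior V ∈ 𝓝 (⟨x, hx⟩ : C) :=
    continuous_subtype_val.continuousAt.preimage_mem_nhds (interior_mem_nhds.2 hV)
  obtain ⟨W, hWcompact, hWopen, hxW, hWV⟩ := exists_isCompact_isOpen_subset_of_mem_nhds hVC
  obtain ⟨O, hO, rfl⟩ := isOpen_induced_iff.1 hWopen
  refine ⟨C ∩ O, O ∩ interior V, ?_, hO.inter isOpen_interior, ⟨hx, hxW⟩, ?_,
    inter_subset_right.trans interior_subset, inter_subset_inter_right C inter_subset_left⟩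
  · simpa only [Subtype.image_preimage_coe] using hWcompact.image continuous_subtype_val
  · exact fun y hy ↦ ⟨hy.2, hWV (a := ⟨y, hy.1⟩) hy.2⟩

theorem exists_isOpen_superset_disjoint_frontier [RegularSpace X] {C K O : Set X}
    (hK : IsCompact K) (hO : IsOpen O) (hKO : K ⊆ O) (hCO : C ∩ O ⊆ K) :
    ∃ U, IsOpen U ∧ K ⊆ U ∧ U ⊆ O ∧ Disjoint C (frontier U) := by
  obtain ⟨U, hU, hKU, hUO⟩ := hK.exists_isOpen_closure_subset (hO.mem_nhdsSet.2 hKO)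
  refine ⟨U, hU, hKU, subset_closure.trans hUO, disjoint_left.2 fun y hyC hyU ↦ ?_⟩
  rw [hU.frontier_eq] at hyU
  exact hyU.2 (hKU (hCO ⟨hyC, hUO hyU.1⟩))

theorem totallyDisconnected_closed_nhds_basis_general [RegularSpace X] {C V : Set X}
    [LocallyCompactSpace C] (hC : IsTotallyDisconnected C) {x : X} (hx : x ∈ C) (hV : V ∈ 𝓝 x) :
    ∃ U, IsOpen U ∧ x ∈ U ∧ U ⊆ V ∧ C ∩ frontier U = ∅ := by
  obtain ⟨K, O, hK, hO, hxK, hKO, hOV, hCO⟩ :=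
    exists_isCompact_isOpen_inter_subset_of_isTotallyDisconnected hC hx hV
  obtain ⟨U, hU, hKU, hUO, hCU⟩ := exists_isOpen_superset_disjoint_frontier hK hO hKO hCO
  exact ⟨U, hU, hKU hxK, hUO.trans hOV, hCU.inter_eq⟩

end

/-- A closed, totally disconnected subset `C` of the plane has topological dimension
zero: every point of `C` has a neighbourhood basis of open neighbourhoods `U` whose
boundary misses `C`. -/
theorem totallyDisconnected_closed_nhds_basis
    (C : Set ℂ) (hCclosed : IsClosed C) (hCtd : IsTotallyDisconnected C) :
    ∀ x ∈ C, ∀ V ∈ nhds x,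
      ∃ U : Set ℂ, IsOpen U ∧ x ∈ U ∧ U ⊆ V ∧ C ∩ frontier U = ∅ := by
  have : LocallyCompactSpace C := hCclosed.locallyCompactSpace
  exact fun _ hx _ hV ↦ totallyDisconnected_closed_nhds_basis_general hCtd hx hV
end

section
/- Let Ω be a domain (open connected set) in ℂ, let f : Ω → ℂ be a continuous, light, and open mapping, and let x ∈ Ω. Then there exists a radius r_x > 0 such that for all r with 0 < r ≤ r_x the set U(x,f,r), defined as the connected component containing x of f⁻¹(B(f(x),r)), is an open connected set whose closure is compact and contained in Ω, satisfies f(∂U(x,f,r)) = ∂(f(U(x,f,r))), and satisfies f(U(x,f,r)) = B(f(x),r), where B(f(x),r) denotes the open disk of radius r centered at f(x). -/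
/-!
The fibre of `f x` inside a compact neighbourhood `K ⊆ Ω` of `x` is compact and totally
disconnected, so it splits into two compact pieces, the one containing `x` lying in the interior
of `K`. Separating the pieces gives an open `W ∋ x`, compactly contained in `Ω`, whose frontier
misses the fibre. Hence the complement of `f (∂W)` is a neighbourhood of `f x`. If `B` is a
connected open subset of it containing `f x`, the component `U` of `f⁻¹(B)` at `x` cannot cross
`∂W`, so `U ⊆ W`.

Components are relatively closed, so `U = closure U ∩ f⁻¹(B)`, and applying `f` gives
`f U = closure (f U) ∩ B`. Thus `f U` is clopen in the connected set `B`, i.e. `f U = B`; applying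
`f` to `∂U = closure U \ f⁻¹(B)` instead gives `f (∂U) = closure B \ B = ∂B`.
-/

open Set Topology

variable {X Y : Type*} [TopologicalSpace X] [TopologicalSpace Y]

/-- A normal domain of `f : Ω → Y`: a connected open set, compactly contained in `Ω`, with
`f (∂U) = ∂ (f U)`. The map is encoded as a total function that is only considered on `Ω`. -/
structure IsNormalDomain (f : X → Y) (Ω U : Set X) : Prop where
  isOpen : IsOpen U
  isConnected : IsConnected U
  isCompact_closure : IsCompact (closure U)
  closure_subset : closure U ⊆ Ω
  image_frontier : f '' frontier U = frontier (f '' U)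

section Isolation

lemma exists_isCompact_subset_isCompact_sdiff [T2Space X] {F O : Set X} {x : X}
    (hF : IsCompact F) (hFtd : IsTotallyDisconnected F) (hO : IsOpen O) (hxF : x ∈ F)
    (hxO : x ∈ O) : ∃ A ⊆ F ∩ O, x ∈ A ∧ IsCompact A ∧ IsCompact (F \ A) := by
  have : CompactSpace F := isCompact_iff_compactSpace.1 hF
  have : TotallyDisconnectedSpace F := totallyDisconnectedSpace_subtype_iff.2 hFtd
  obtain ⟨V, hV, hxV, hVO⟩ := compact_exists_isClopen_in_isOpen (x := (⟨x, hxF⟩ : F))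
    (hO.preimage continuous_subtype_val) hxO
  refine ⟨(↑) '' V, ?_, mem_image_of_mem _ hxV,
    hV.isClosed.isCompact.image continuous_subtype_val, ?_⟩
  · rintro _ ⟨v, hv, rfl⟩
    exact ⟨v.2, hVO hv⟩
  · rw [← image_val_compl]
    exact hV.compl.isClosed.isCompact.image continuous_subtype_val

lemma exists_isOpen_closure_subset_disjoint_frontier [T3Space X] {F O : Set X} {x : X}
    (hF : IsCompact F) (hFtd : IsTotallyDisconnected F) (hO : IsOpen O) (hxF : x ∈ F)
    (hxO : x ∈ O) : ∃ W, IsOpen W ∧ x ∈ W ∧ closure W ⊆ O ∧ Disjoint (frontier W) F := by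
  obtain ⟨A, hAFO, hxA, hA, hFA⟩ := exists_isCompact_subset_isCompact_sdiff hF hFtd hO hxF hxO
  have hA_subset : A ⊆ O \ (F \ A) := fun a ha ↦ ⟨(hAFO ha).2, fun h ↦ h.2 ha⟩
  obtain ⟨W, hW, hAW, hWO⟩ := hA.exists_isOpen_closure_subset
    ((hO.sdiff hFA.isClosed).mem_nhdsSet.2 hA_subset)
  refine ⟨W, hW, hAW hxA, hWO.trans sdiff_subset, disjoint_left.2 fun z hz hzF ↦ ?_⟩
  rw [hW.frontier_eq] at hz
  have hzA : z ∈ A := by_contra fun hzA ↦ (hWO hz.1).2 ⟨hzF, hzA⟩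
  exact hz.2 (hAW hzA)

lemma exists_isOpen_notMem_image_frontier [LocallyCompactSpace X] [T2Space X] [T1Space Y]
    {Ω : Set X} {f : X → Y} {x : X} (hΩ : Ω ∈ 𝓝 x) (hf : ContinuousOn f Ω)
    (hlight : IsTotallyDisconnected (Ω ∩ f ⁻¹' {f x})) :
    ∃ W, IsOpen W ∧ x ∈ W ∧ IsCompact (closure W) ∧ closure W ⊆ Ω ∧ f x ∉ f '' frontier W := by
  obtain ⟨K, hKx, hKΩ, hK⟩ := local_compact_nhds hΩ
  have hfiber : IsCompact (K ∩ f ⁻¹' {f x}) := hK.of_isClosed_subset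
    ((hf.mono hKΩ).preimage_isClosed_of_isClosed hK.isClosed isClosed_singleton) inter_subset_left
  have hfiber_td : IsTotallyDisconnected (K ∩ f ⁻¹' {f x}) := fun t ht ↦
    hlight t (ht.trans (inter_subset_inter_left _ hKΩ))
  obtain ⟨W, hW, hxW, hWK, hdisj⟩ := exists_isOpen_closure_subset_disjoint_frontier hfiber
    hfiber_td isOpen_interior ⟨mem_of_mem_nhds hKx, rfl⟩ (mem_interior_iff_mem_nhds.2 hKx)
  replace hWK : closure W ⊆ K := hWK.trans interior_subset
  refine ⟨W, hW, hxW, hK.of_isClosed_subset isClosed_closure hWK, hWK.trans hKΩ, ?_⟩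
  rintro ⟨z, hz, hzx⟩
  exact disjoint_left.1 hdisj hz ⟨hWK (frontier_subset_closure hz), hzx⟩

end Isolation

section Component

lemma closure_connectedComponentIn_inter (G : Set X) (x : X) :
    closure (connectedComponentIn G x) ∩ G = connectedComponentIn G x := by
  by_cases hx : x ∈ G
  · have hconn : IsPreconnected (closure (connectedComponentIn G x) ∩ G) :=
      isPreconnected_connectedComponentIn.subset_closure
        (subset_inter subset_closure (connectedComponentIn_subset G x)) inter_subset_left
    exact (hconn.subset_connectedComponentIn
      ⟨subset_closure (mem_connectedComponentIn hx), hx⟩ inter_subset_right).antisymm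
      (subset_inter subset_closure (connectedComponentIn_subset G x))
  · simp [connectedComponentIn_eq_empty hx]

lemma subset_of_isPreconnected_of_disjoint_frontier {S W : Set X} (hS : IsPreconnected S)
    (hW : IsOpen W) (hSW : (S ∩ W).Nonempty) (hdisj : Disjoint S (frontier W)) : S ⊆ W :=
  hS.subset_of_closure_inter_subset hW hSW fun _ ⟨hzW, hzS⟩ ↦
    by_contra fun hz ↦ disjoint_left.1 hdisj hzS (hW.frontier_eq ▸ ⟨hzW, hz⟩)

variable [T2Space Y] {f : X → Y} {U : Set X} {B : Set Y}

lemma image_eq_of_closure_inter_preimage_eq (hUne : U.Nonempty) (hUc : IsCompact (closure U))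
    (hf : ContinuousOn f (closure U)) (hfU : IsOpen (f '' U)) (hB : IsPreconnected B)
    (hUB : closure U ∩ f ⁻¹' B = U) : f '' U = B := by
  have hclosed : closure (f '' U) ∩ B = f '' U := by
    rw [← image_closure_of_isCompact hUc hf, ← image_inter_preimage, hUB]
  have hsub : f '' U ⊆ B := hclosed ▸ inter_subset_right
  refine hsub.antisymm (hB.subset_of_closure_inter_subset hfU ?_ hclosed.subset)
  rw [inter_eq_right.2 hsub]
  exact hUne.image f

lemma image_frontier_eq_of_closure_inter_preimage_eq (hU : IsOpen U) (hUc : IsCompact (closure U))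
    (hf : ContinuousOn f (closure U)) (hfU : IsOpen (f '' U))
    (hUB : closure U ∩ f ⁻¹' (f '' U) = U) : f '' frontier U = frontier (f '' U) := by
  have hfrontier : frontier U = closure U \ f ⁻¹' (f '' U) := by
    rw [← sdiff_inter_self_eq_sdiff, inter_comm, hUB, hU.frontier_eq]
  rw [hfrontier, image_sdiff_preimage, image_closure_of_isCompact hUc hf, hfU.frontier_eq]

lemma isNormalDomain_connectedComponentIn [LocallyConnectedSpace X] {Ω : Set X} {x : X}
    (hΩ : IsOpen Ω) (hf : ContinuousOn f Ω)
    (hfopen : ∀ U ⊆ Ω, IsOpen U → IsOpen (f '' U)) (hB : IsOpen B) (hBconn : IsPreconnected B)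
    (hx : x ∈ Ω) (hfx : f x ∈ B) (hUc : IsCompact (closure (connectedComponentIn (Ω ∩ f ⁻¹' B) x)))
    (hUΩ : closure (connectedComponentIn (Ω ∩ f ⁻¹' B) x) ⊆ Ω) :
    IsNormalDomain f Ω (connectedComponentIn (Ω ∩ f ⁻¹' B) x) ∧
      f '' connectedComponentIn (Ω ∩ f ⁻¹' B) x = B := by
  have hUB := closure_connectedComponentIn_inter (Ω ∩ f ⁻¹' B) x
  rw [← inter_assoc, inter_eq_left.2 hUΩ] at hUB
  have hU : IsOpen (connectedComponentIn (Ω ∩ f ⁻¹' B) x) :=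
    (hf.isOpen_inter_preimage hΩ hB).connectedComponentIn
  have hUconn : IsConnected (connectedComponentIn (Ω ∩ f ⁻¹' B) x) :=
    isConnected_connectedComponentIn_iff.2 ⟨hx, hfx⟩
  have hfU := hfopen _ (subset_closure.trans hUΩ) hU
  have himage := image_eq_of_closure_inter_preimage_eq hUconn.nonempty hUc (hf.mono hUΩ) hfU
    hBconn hUB
  exact ⟨⟨hU, hUconn, hUc, hUΩ, image_frontier_eq_of_closure_inter_preimage_eq hU hUc
    (hf.mono hUΩ) hfU (by rw [himage, hUB])⟩, himage⟩

end Component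

theorem normal_domain_exists_general [LocallyConnectedSpace X] [LocallyCompactSpace X] [T2Space X]
    [T2Space Y] {Ω : Set X} {f : X → Y} {x : X} (hΩ : IsOpen Ω) (hf : ContinuousOn f Ω)
    (hlight : IsTotallyDisconnected (Ω ∩ f ⁻¹' {f x}))
    (hfopen : ∀ U ⊆ Ω, IsOpen U → IsOpen (f '' U)) (hx : x ∈ Ω) :
    ∃ N ∈ 𝓝 (f x), ∀ B ⊆ N, IsOpen B → IsPreconnected B → f x ∈ B →
      IsNormalDomain f Ω (connectedComponentIn (Ω ∩ f ⁻¹' B) x) ∧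
        f '' connectedComponentIn (Ω ∩ f ⁻¹' B) x = B := by
  obtain ⟨W, hW, hxW, hWc, hWΩ, hfxW⟩ :=
    exists_isOpen_notMem_image_frontier (hΩ.mem_nhds hx) hf hlight
  have himage : IsClosed (f '' frontier W) :=
    ((hWc.of_isClosed_subset isClosed_frontier frontier_subset_closure).image_of_continuousOn
      (hf.mono (frontier_subset_closure.trans hWΩ))).isClosed
  refine ⟨(f '' frontier W)ᶜ, himage.isOpen_compl.mem_nhds hfxW, fun B hBN hB hBconn hfx ↦ ?_⟩
  have hdisj : Disjoint (connectedComponentIn (Ω ∩ f ⁻¹' B) x) (frontier W) :=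
    disjoint_left.2 fun z hzU hzW ↦
      hBN (connectedComponentIn_subset _ _ hzU).2 (mem_image_of_mem f hzW)
  have hUW : closure (connectedComponentIn (Ω ∩ f ⁻¹' B) x) ⊆ closure W :=
    closure_mono (subset_of_isPreconnected_of_disjoint_frontier
      isPreconnected_connectedComponentIn hW ⟨x, mem_connectedComponentIn ⟨hx, hfx⟩, hxW⟩ hdisj)
  exact isNormalDomain_connectedComponentIn hΩ hf hfopen hB hBconn hx hfx
    (hWc.of_isClosed_subset isClosed_closure hUW) (hUW.trans hWΩ)

/-- **Existence of normal domains.** For a continuous, light, open map `f` on a planar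
domain `Ω` and `x ∈ Ω` there is `r_x > 0` such that for every `0 < r ≤ r_x` the
component `U(x,f,r)` of `f⁻¹(B(f(x),r))` containing `x` is a precompact normal domain
of `x` and `f(U(x,f,r)) = B(f(x),r)`. -/
theorem normal_domain_exists
    (Ω : Set ℂ) (hΩopen : IsOpen Ω) (hΩconn : IsConnected Ω)
    (f : ℂ → ℂ)
    (hcont : ContinuousOn f Ω)
    (hlight : ∀ y : ℂ, IsTotallyDisconnected (Ω ∩ f ⁻¹' {y}))
    (hopen : ∀ U : Set ℂ, U ⊆ Ω → IsOpen U → IsOpen (f '' U))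
    (x : ℂ) (hx : x ∈ Ω) :
    ∃ rx : ℝ, 0 < rx ∧ ∀ r : ℝ, 0 < r → r ≤ rx →
      IsOpen (connectedComponentIn (Ω ∩ f ⁻¹' Metric.ball (f x) r) x) ∧
      IsConnected (connectedComponentIn (Ω ∩ f ⁻¹' Metric.ball (f x) r) x) ∧
      IsCompact (closure (connectedComponentIn (Ω ∩ f ⁻¹' Metric.ball (f x) r) x)) ∧
      closure (connectedComponentIn (Ω ∩ f ⁻¹' Metric.ball (f x) r) x) ⊆ Ω ∧
      f '' frontier (connectedComponentIn (Ω ∩ f ⁻¹' Metric.ball (f x) r) x) =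
        frontier (f '' connectedComponentIn (Ω ∩ f ⁻¹' Metric.ball (f x) r) x) ∧
      f '' connectedComponentIn (Ω ∩ f ⁻¹' Metric.ball (f x) r) x =
        Metric.ball (f x) r := by
  obtain ⟨N, hN, hnormal⟩ := normal_domain_exists_general hΩopen hcont (hlight (f x)) hopen hx
  obtain ⟨rx, hrx, hball⟩ := Metric.mem_nhds_iff.1 hN
  refine ⟨rx, hrx, fun r hr hle ↦ ?_⟩
  obtain ⟨⟨hU, hUconn, hUc, hUΩ, hfrontier⟩, himage⟩ :=
    hnormal _ ((Metric.ball_subset_ball hle).trans hball) Metric.isOpen_ball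
      (convex_ball (f x) r).isPreconnected (Metric.mem_ball_self hr)
  exact ⟨hU, hUconn, hUc, hUΩ, hfrontier, himage⟩
end

section
/- Let Ω be a domain in ℂ, let f : Ω → ℂ be a continuous, light, and open mapping, and let U ⊆ Ω be a normal domain, i.e. an open connected set whose closure is compact and contained in Ω and which satisfies f(∂U) = ∂(f(U)). Then the restriction f|_U : U → f(U) is a proper map: for every compact set K ⊆ f(U), the set U ∩ f⁻¹(K) is compact. -/
/-!
Since `f(U)` is open, it is disjoint from its frontier, which contains `f(∂U)`; so no point of `∂U`
is mapped into a set `K ⊆ f(U)`. Hence `U ∩ f⁻¹(K) = closure U ∩ f⁻¹(K)`, and for compact `K` the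
latter is relatively closed in the compact set `closure U`, on which `f` is continuous.
-/

open Set

section

variable {X Y : Type*} [TopologicalSpace X] {f : X → Y} {U : Set X} {K : Set Y}

theorem inter_preimage_eq_closure_inter_preimage (hK : Disjoint (f '' frontier U) K) :
    U ∩ f ⁻¹' K = closure U ∩ f ⁻¹' K := by
  have hfrontier : frontier U ∩ f ⁻¹' K = ∅ := (disjoint_image_left.mp hK).inter_eq
  rw [closure_eq_self_union_frontier, union_inter_distrib_right, hfrontier, union_empty]

variable [TopologicalSpace Y]

theorem disjoint_image_frontier_of_subset_image (hfU : IsOpen (f '' U))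
    (hfrontier : MapsTo f (frontier U) (frontier (f '' U))) (hK : K ⊆ f '' U) :
    Disjoint (f '' frontier U) K :=
  (disjoint_frontier_iff_isOpen.mpr hfU).mono hfrontier.image_subset hK

theorem normal_domain_restriction_proper_general [T2Space Y]
    (hcont : ContinuousOn f (closure U)) (hUcpt : IsCompact (closure U)) (hfU : IsOpen (f '' U))
    (hfrontier : MapsTo f (frontier U) (frontier (f '' U))) (hKU : K ⊆ f '' U)
    (hK : IsCompact K) : IsCompact (U ∩ f ⁻¹' K) := by
  rw [inter_preimage_eq_closure_inter_preimage
    (disjoint_image_frontier_of_subset_image hfU hfrontier hKU)]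
  have hclosed : IsClosed (closure U ∩ f ⁻¹' K) :=
    hcont.preimage_isClosed_of_isClosed isClosed_closure hK.isClosed
  exact hUcpt.of_isClosed_subset hclosed inter_subset_left

end

/-- The restriction of a continuous, light, open map to a normal domain `U` is a
proper map `U → f(U)`: preimages in `U` of compact subsets of `f(U)` are compact. -/
theorem normal_domain_restriction_proper
    (Ω : Set ℂ) (hΩopen : IsOpen Ω) (hΩconn : IsConnected Ω)
    (f : ℂ → ℂ)
    (hcont : ContinuousOn f Ω)
    (hlight : ∀ y : ℂ, IsTotallyDisconnected (Ω ∩ f ⁻¹' {y}))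
    (hopen : ∀ V : Set ℂ, V ⊆ Ω → IsOpen V → IsOpen (f '' V))
    (U : Set ℂ)
    (hUopen : IsOpen U) (hUconn : IsConnected U)
    (hUcpt : IsCompact (closure U)) (hUcl : closure U ⊆ Ω)
    (hUnormal : f '' frontier U = frontier (f '' U)) :
    ∀ K : Set ℂ, K ⊆ f '' U → IsCompact K → IsCompact (U ∩ f ⁻¹' K) := by
  intro K
  have hfU : IsOpen (f '' U) := hopen U (subset_closure.trans hUcl) hUopen
  exact normal_domain_restriction_proper_general (hcont.mono hUcl) hUcpt hfU
    (mapsTo_iff_image_subset.mpr hUnormal.subset)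
end

section
/- Let Ω ⊆ ℂ be a domain and f : Ω → ℂ a continuous, light, and open mapping. Let U be a normal domain compactly contained in Ω. Then for any path β : [0,1] → f(U) and any point x₀ ∈ U with f(x₀) = β(0), there exists a path α : [0,1] → U with α(0) = x₀ and f ∘ α = β. -/
/-!
The boundary condition makes `f : U → f(U)` proper, so it suffices to lift along a proper, light,
open map, and pulling back along `β` reduces this to finding a section `α` through a given point of
a proper, light, open map `p` onto an interval.

Call `α` coherent if `α s` and `α t` lie in the same component of the strip `p⁻¹[s, t]` whenever
`s ≤ t`. Lightness forces a coherent section to be continuous, since the component of `α t` in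
`p⁻¹(T)` shrinks to `α t` as the neighbourhood `T` of `t` shrinks. Openness makes every component
of a strip `p⁻¹[s, t]` project onto `[s, t]`, so coherent choices over a finite set of parameters
are built from left to right. Being in the same component of a compact strip is a closed relation,
so Tychonoff's theorem yields a choice that is coherent over all parameters at once.
-/

open Set Filter Function Topology

section ConnectedComponent

variable {X Y : Type*} [TopologicalSpace X] [TopologicalSpace Y]

lemma mem_connectedComponentIn_trans {F G H : Set X} {x y z : X} (hFH : F ⊆ H) (hGH : G ⊆ H)
    (hxy : y ∈ connectedComponentIn F x) (hyz : z ∈ connectedComponentIn G y) :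
    z ∈ connectedComponentIn H x := by
  rw [connectedComponentIn_eq (connectedComponentIn_mono x hFH hxy)]
  exact connectedComponentIn_mono y hGH hyz

lemma mem_connectedComponentIn_symm {F : Set X} {x y : X} (h : y ∈ connectedComponentIn F x) :
    x ∈ connectedComponentIn F y :=
  connectedComponentIn_eq h ▸ mem_connectedComponentIn (connectedComponentIn_nonempty_iff.mp ⟨y, h⟩)

lemma isClosed_setOf_mem_connectedComponentIn [T2Space X] {F : Set X} (hF : IsCompact F) :
    IsClosed {q : X × X | q.2 ∈ connectedComponentIn F q.1} := by
  have : CompactSpace F := isCompact_iff_compactSpace.mp hF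
  have hclosed : IsClosed {q : F × F | (q.1 : ConnectedComponents F) = q.2} :=
    isClosed_eq (ConnectedComponents.continuous_coe.comp continuous_fst)
      (ConnectedComponents.continuous_coe.comp continuous_snd)
  convert (hclosed.isCompact.image
    (continuous_subtype_val.prodMap continuous_subtype_val)).isClosed using 1
  ext ⟨x, y⟩
  constructor
  · intro hy
    have hx : x ∈ F := connectedComponentIn_nonempty_iff.mp ⟨y, hy⟩
    rw [mem_ofPred_eq, connectedComponentIn_eq_image hx] at hy
    obtain ⟨y, hy, rfl⟩ := hy
    exact ⟨(⟨x, hx⟩, y), (ConnectedComponents.coe_eq_coe'.mpr hy).symm, rfl⟩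
  · rintro ⟨⟨a, b⟩, hab, ⟨⟩⟩
    rw [mem_ofPred_eq, connectedComponentIn_eq_image a.2]
    exact mem_image_of_mem _ (ConnectedComponents.coe_eq_coe'.mp (Eq.symm hab))

lemma image_connectedComponent_eq_univ [CompactSpace X] [T2Space X] [PreconnectedSpace Y]
    [T2Space Y] {f : X → Y} (hf : Continuous f) (hopen : IsOpenMap f) (x : X) :
    f '' connectedComponent x = univ := by
  refine eq_univ_of_forall fun y => ?_
  let Z := {Z : Set X // IsClopen Z ∧ x ∈ Z}
  have : Nonempty Z := ⟨univ, isClopen_univ, mem_univ x⟩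
  have hclosed (C : Z) : IsClosed (C.1 ∩ f ⁻¹' {y}) :=
    C.2.1.isClosed.inter (isClosed_singleton.preimage hf)
  have hnonempty (C : Z) : (C.1 ∩ f ⁻¹' {y}).Nonempty := by
    have himage : IsClopen (f '' C.1) :=
      ⟨hf.isClosedMap _ C.2.1.isClosed, hopen _ C.2.1.isOpen⟩
    have hy : y ∈ f '' C.1 :=
      himage.eq_univ ⟨f x, mem_image_of_mem f C.2.2⟩ ▸ mem_univ y
    exact hy
  have hdirected : Directed (· ⊇ ·) fun C : Z => C.1 ∩ f ⁻¹' {y} := fun C D =>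
    ⟨⟨C.1 ∩ D.1, C.2.1.inter D.2.1, C.2.2, D.2.2⟩,
      inter_subset_inter_left _ inter_subset_left, inter_subset_inter_left _ inter_subset_right⟩
  obtain ⟨z, hz⟩ := IsCompact.nonempty_iInter_of_directed_nonempty_isCompact_isClosed _
    hdirected hnonempty (fun C => (hclosed C).isCompact) hclosed
  rw [← iInter_inter, ← connectedComponent_eq_iInter_isClopen] at hz
  exact ⟨z, hz⟩

lemma image_connectedComponentIn_preimage [T2Space X] [T2Space Y] {f : X → Y}
    (hf : IsProperMap f) (hopen : IsOpenMap f) {K : Set Y} (hK : IsCompact K)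
    (hKconn : IsPreconnected K) {x : X} (hx : f x ∈ K) :
    f '' connectedComponentIn (f ⁻¹' K) x = K := by
  have : CompactSpace (f ⁻¹' K) := isCompact_iff_compactSpace.mp (hf.isCompact_preimage hK)
  have : PreconnectedSpace K := isPreconnected_iff_preconnectedSpace.mp hKconn
  have hsurj := image_connectedComponent_eq_univ (hf.restrictPreimage K).continuous
    (hopen.restrictPreimage K) ⟨x, hx⟩
  rw [connectedComponentIn_eq_image (show x ∈ f ⁻¹' K from hx), image_image]
  calc (fun z : f ⁻¹' K => f z) '' connectedComponent ⟨x, hx⟩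
      = Subtype.val '' (K.restrictPreimage f '' connectedComponent ⟨x, hx⟩) := by
        rw [image_image]; rfl
    _ = K := by rw [hsurj, image_univ, Subtype.range_val]

lemma exists_disjoint_isOpen_cover [T2Space X] {F W : Set X} (hF : IsCompact F)
    (hFtd : IsTotallyDisconnected F) {x : X} (hx : x ∈ F) (hW : W ∈ 𝓝 x) :
    ∃ A A', IsOpen A ∧ IsOpen A' ∧ Disjoint A A' ∧ F ⊆ A ∪ A' ∧ x ∈ A ∧ A ⊆ W := by
  obtain ⟨O, hOW, hO, hxO⟩ := mem_nhds_iff.mp hW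
  have : CompactSpace F := isCompact_iff_compactSpace.mp hF
  have : TotallyDisconnectedSpace F := totallyDisconnectedSpace_subtype_iff.mpr hFtd
  obtain ⟨C, hC, hxC, hCO⟩ := compact_exists_isClopen_in_isOpen (x := (⟨x, hx⟩ : F))
    (hO.preimage continuous_subtype_val) hxO
  obtain ⟨A, A', hA, hA', hCA, hCA', hdisj⟩ := SeparatedNhds.of_isCompact_isCompact
    (hC.isClosed.isCompact.image continuous_subtype_val)
    (hC.compl.isClosed.isCompact.image continuous_subtype_val)
    (disjoint_image_of_injective Subtype.val_injective disjoint_compl_right)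
  refine ⟨A ∩ O, A', hA.inter hO, hA', hdisj.mono_left inter_subset_left, fun z hz => ?_,
    ⟨hCA ⟨_, hxC, rfl⟩, hxO⟩, inter_subset_right.trans hOW⟩
  by_cases hzC : (⟨z, hz⟩ : F) ∈ C
  · exact Or.inl ⟨hCA ⟨_, hzC, rfl⟩, hCO hzC⟩
  · exact Or.inr (hCA' ⟨_, hzC, rfl⟩)

end ConnectedComponent

/-- A map is light if all of its fibers are totally disconnected; together with properness this
makes components of preimages of small sets small. -/
def IsLight {X Y : Type*} [TopologicalSpace X] (f : X → Y) : Prop :=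
  ∀ y, IsTotallyDisconnected (f ⁻¹' {y})

lemma IsLight.exists_connectedComponentIn_preimage_subset {X Y : Type*} [TopologicalSpace X]
    [TopologicalSpace Y] [T2Space X] {f : X → Y} (hlight : IsLight f) (hf : IsProperMap f) {x : X}
    {W : Set X} (hW : W ∈ 𝓝 x) :
    ∃ T ∈ 𝓝 (f x), connectedComponentIn (f ⁻¹' T) x ⊆ W := by
  obtain ⟨A, A', hA, hA', hdisj, hcover, hxA, hAW⟩ := exists_disjoint_isOpen_cover
    (hf.isCompact_preimage isCompact_singleton) (hlight (f x)) rfl hW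
  let T : Set Y := {y | ∀ z ∈ f ⁻¹' {y}, z ∈ A ∪ A'}
  have hT : T ∈ 𝓝 (f x) :=
    hf.isClosedMap.eventually_nhds_fiber (f x) fun z hz => (hA.union hA').mem_nhds (hcover hz)
  refine ⟨T, hT, Subset.trans ?_ hAW⟩
  have hx : x ∈ connectedComponentIn (f ⁻¹' T) x :=
    mem_connectedComponentIn (show f x ∈ T from mem_of_mem_nhds hT)
  exact isPreconnected_connectedComponentIn.subset_left_of_subset_union hA hA' hdisj
    (fun z hz => connectedComponentIn_subset _ x hz z rfl) ⟨x, hx, hxA⟩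

section Pullback

variable {X Y Z : Type*} [TopologicalSpace X] [TopologicalSpace Z] {g : Z → Y} {f : X → Y}

lemma IsLight.pullbackFst (hf : IsLight f) :
    IsLight (Pullback.fst : g.Pullback f → Z) := by
  intro z S hS hconn a ha b hb
  have himage : Pullback.snd '' S ⊆ f ⁻¹' {g z} := by
    rintro _ ⟨q, hq, rfl⟩
    exact q.2.symm.trans (congrArg g (hS hq))
  have hsnd : Pullback.snd a = Pullback.snd b := hf (g z) _ himage
    (hconn.image _ (continuous_snd.comp continuous_subtype_val).continuousOn)
    (mem_image_of_mem _ ha) (mem_image_of_mem _ hb)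
  exact Subtype.ext (Prod.ext ((hS ha).trans (hS hb).symm) hsnd)

variable [TopologicalSpace Y]

lemma isProperMap_pullbackFst (hg : Continuous g) (hf : IsProperMap f) :
    IsProperMap (Pullback.fst : g.Pullback f → Z) := by
  refine isProperMap_iff_ultrafilter.mpr
    ⟨continuous_fst.comp continuous_subtype_val, fun 𝒰 z hz => ?_⟩
  have hfsnd : Tendsto f (𝒰.map Pullback.snd) (𝓝 (g z)) := by
    rw [Ultrafilter.coe_map, tendsto_map'_iff, ← show g ∘ Pullback.fst = f ∘ Pullback.snd from
      funext Subtype.property]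
    exact (hg.tendsto z).comp hz
  obtain ⟨x, hx, hsnd⟩ := hf.ultrafilter_le_nhds_of_tendsto hfsnd
  refine ⟨⟨(z, x), hx.symm⟩, rfl, ?_⟩
  rw [← tendsto_id', tendsto_subtype_rng]
  exact hz.prodMk_nhds hsnd

lemma isOpenMap_pullbackFst (hg : Continuous g) (hf : IsOpenMap f) :
    IsOpenMap (Pullback.fst : g.Pullback f → Z) := by
  refine isOpenMap_iff_nhds_le.mpr fun q S hS => ?_
  rw [mem_map, nhds_subtype_eq_comap, mem_comap] at hS
  obtain ⟨V, hV, hVS⟩ := hS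
  obtain ⟨A, hA, D, hD, hADV⟩ := mem_nhds_prod_iff.mp hV
  have hgD : g ⁻¹' (f '' D) ∈ 𝓝 q.fst :=
    hg.continuousAt.preimage_mem_nhds (q.2 ▸ hf.image_mem_nhds hD)
  filter_upwards [hA, hgD] with z hzA ⟨x, hxD, hxz⟩
  exact hVS (show (⟨(z, x), hxz.symm⟩ : g.Pullback f).1 ∈ V from hADV ⟨hzA, hxD⟩)

end Pullback

section RightInverse

variable {X B : Type*} {p : X → B}

lemma rightInverse_update [DecidableEq B] {α : B → X} (hα : RightInverse α p) {a : B} {y : X}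
    (hy : p y = a) : RightInverse (update α a y) p := by
  intro t
  obtain rfl | hta := eq_or_ne t a
  · rwa [update_self]
  · rw [update_of_ne hta, hα t]

lemma isCompact_setOf_rightInverse [TopologicalSpace X] [TopologicalSpace B] (hp : IsProperMap p) :
    IsCompact {α : B → X | RightInverse α p} := by
  convert isCompact_univ_pi fun t => hp.isCompact_preimage (isCompact_singleton (x := t)) using 1
  ext α
  simp [RightInverse, LeftInverse]

end RightInverse

section Coherent

variable {X B : Type*} [TopologicalSpace X] [LinearOrder B]

/-- A choice `α` of points is coherent on `S` if, for all `s ≤ t` in `S`, the points `α s` and `α t`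
lie in the same connected component of the strip `p ⁻¹' Icc s t`. The case `s = t` says that `α s`
lies over `s`. For light proper `p` this is a pointwise closed condition that, for `S = univ`,
implies continuity. -/
def IsCoherentOn (p : X → B) (S : Set B) (α : B → X) : Prop :=
  ∀ s ∈ S, ∀ t ∈ S, s ≤ t → α t ∈ connectedComponentIn (p ⁻¹' Icc s t) (α s)

namespace IsCoherentOn

variable {p : X → B} {S : Set B} {α : B → X}

lemma mono {S' : Set B} (hα : IsCoherentOn p S α) (h : S' ⊆ S) : IsCoherentOn p S' α :=
  fun s hs t ht => hα s (h hs) t (h ht)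

lemma apply_eq (hα : IsCoherentOn p S α) {t : B} (ht : t ∈ S) : p (α t) = t := by
  simpa using connectedComponentIn_subset _ _ (hα t ht t ht le_rfl)

lemma update_insert {m a : B} {y : X} (hα : IsCoherentOn p S α) (hm : IsGreatest S m) (hma : m < a)
    (hy : y ∈ connectedComponentIn (p ⁻¹' Icc m a) (α m)) (hya : p y = a) :
    IsCoherentOn p (insert a S) (update α a y) := by
  have hlt {s : B} (hs : s ∈ S) : s < a := (hm.2 hs).trans_lt hma
  rintro s (rfl | hs) t (rfl | ht) hst
  · exact mem_connectedComponentIn (by simp [hya])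
  · exact absurd hst (hlt ht).not_ge
  · rw [update_self, update_of_ne (hlt hs).ne]
    exact mem_connectedComponentIn_trans (preimage_mono (Icc_subset_Icc_right hma.le))
      (preimage_mono (Icc_subset_Icc_left (hm.2 hs))) (hα s hs m hm.1 (hm.2 hs)) hy
  · rw [update_of_ne (hlt hs).ne, update_of_ne (hlt ht).ne]
    exact hα s hs t ht hst

lemma mem_connectedComponentIn_uIcc (hα : IsCoherentOn p S α) {s t : B} (hs : s ∈ S) (ht : t ∈ S) :
    α s ∈ connectedComponentIn (p ⁻¹' uIcc s t) (α t) := by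
  rcases le_total s t with hst | hts
  · rw [uIcc_of_le hst]
    exact mem_connectedComponentIn_symm (hα s hs t ht hst)
  · rw [uIcc_of_ge hts]
    exact hα t ht s hs hts

variable [TopologicalSpace B] [T2Space X]

lemma isClosed_setOf [CompactIccSpace B] (hp : IsProperMap p) (S : Set B) :
    IsClosed {α : B → X | IsCoherentOn p S α} := by
  simp only [IsCoherentOn, ofPred_forall]
  refine isClosed_biInter fun s _ => isClosed_biInter fun t _ => isClosed_iInter fun _ => ?_
  have hstrip : IsCompact (p ⁻¹' Icc s t) := hp.isCompact_preimage isCompact_Icc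
  exact (isClosed_setOf_mem_connectedComponentIn hstrip).preimage
    ((continuous_apply s).prodMk (continuous_apply t) : Continuous fun α : B → X => (α s, α t))

lemma continuous [OrderTopology B] (hα : IsCoherentOn p univ α) (hp : IsProperMap p)
    (hlight : IsLight p) : Continuous α := by
  refine continuous_iff_continuousAt.mpr fun t W hW => ?_
  obtain ⟨T, hT, hTW⟩ := hlight.exists_connectedComponentIn_preimage_subset hp hW
  rw [hα.apply_eq (mem_univ t)] at hT
  have huIcc : ∀ᶠ s in 𝓝 t, uIcc s t ⊆ T :=
    (tendsto_id.uIcc tendsto_const_nhds).eventually (eventually_smallSets_subset.mpr hT)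
  refine mem_map.mpr (huIcc.mono fun s hs => hTW ?_)
  exact connectedComponentIn_mono _ (preimage_mono hs)
    (hα.mem_connectedComponentIn_uIcc (mem_univ s) (mem_univ t))

end IsCoherentOn

end Coherent

section Lifting

variable {X B : Type*} [TopologicalSpace X] [T2Space X] [ConditionallyCompleteLinearOrder B]
  [DenselyOrdered B] [TopologicalSpace B] [OrderTopology B] {p : X → B}

lemma exists_mem_connectedComponentIn_preimage_Icc (hp : IsProperMap p) (hopen : IsOpenMap p)
    {x : X} {t : B} (hxt : p x ≤ t) :
    ∃ y ∈ connectedComponentIn (p ⁻¹' Icc (p x) t) x, p y = t := by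
  have himage := image_connectedComponentIn_preimage hp hopen isCompact_Icc isPreconnected_Icc
    (left_mem_Icc.mpr hxt)
  exact himage.superset (right_mem_Icc.mpr hxt)

variable [OrderBot B] {x₀ : X}

lemma exists_rightInverse_apply_bot (hp : IsProperMap p) (hopen : IsOpenMap p) (hx₀ : p x₀ = ⊥) :
    ∃ α, RightInverse α p ∧ α ⊥ = x₀ := by
  have hsurj (t : B) : ∃ y, p y = t := by
    have hx₀t : p x₀ ≤ t := hx₀ ▸ bot_le
    obtain ⟨y, -, hy⟩ := exists_mem_connectedComponentIn_preimage_Icc hp hopen hx₀t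
    exact ⟨y, hy⟩
  choose σ hσ using hsurj
  exact ⟨update σ ⊥ x₀, rightInverse_update hσ hx₀, update_self ..⟩

-- The induction has to add parameters from left to right: in a zigzag of three strands over
-- `[s, t]` the two free ends are coherent, but no choice over a parameter in between is coherent
-- with both.
lemma exists_isCoherentOn_insert_bot (hp : IsProperMap p) (hopen : IsOpenMap p) (hx₀ : p x₀ = ⊥)
    (S : Finset B) :
    ∃ α, RightInverse α p ∧ α ⊥ = x₀ ∧ IsCoherentOn p (insert ⊥ (S : Set B)) α := by
  induction S using Finset.induction_on_max with
  | empty =>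
    obtain ⟨α, hpα, hα₀⟩ := exists_rightInverse_apply_bot hp hopen hx₀
    refine ⟨α, hpα, hα₀, ?_⟩
    rw [Finset.coe_empty, insert_empty_eq]
    rintro _ rfl _ rfl -
    exact mem_connectedComponentIn (by simp [hpα ⊥])
  | insert a S hS ih =>
    obtain ⟨α, hpα, hα₀, hα⟩ := ih
    rw [Finset.coe_insert, insert_comm]
    obtain rfl | ha := eq_or_ne a ⊥
    · exact ⟨α, hpα, hα₀, by rwa [insert_idem]⟩
    obtain ⟨m, hmS, hm⟩ := exists_max_image _ id (S.finite_toSet.insert ⊥) (insert_nonempty _ _)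
    have hma : m < a := hmS.elim (fun h => h ▸ bot_lt_iff_ne_bot.mpr ha) (hS m)
    obtain ⟨y, hy, hya⟩ := exists_mem_connectedComponentIn_preimage_Icc hp hopen
      (x := α m) ((hpα m).trans_le hma.le)
    rw [hpα m] at hy
    exact ⟨update α a y, rightInverse_update hpα hya, by rwa [update_of_ne ha.symm],
      hα.update_insert ⟨hmS, hm⟩ hma hy hya⟩

theorem exists_continuous_rightInverse (hp : IsProperMap p) (hopen : IsOpenMap p)
    (hlight : IsLight p) (hx₀ : p x₀ = ⊥) :
    ∃ α : B → X, Continuous α ∧ RightInverse α p ∧ α ⊥ = x₀ := by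
  let K (S : Finset B) : Set (B → X) :=
    {α | RightInverse α p} ∩ ({α | α ⊥ = x₀} ∩ {α | IsCoherentOn p (insert ⊥ (S : Set B)) α})
  have hcompact (S : Finset B) : IsCompact (K S) :=
    (isCompact_setOf_rightInverse hp).inter_right
      ((isClosed_eq (continuous_apply ⊥) continuous_const).inter
        (IsCoherentOn.isClosed_setOf hp _))
  have hanti : Antitone K := fun S S' hSS' α ⟨hpα, hα₀, hα⟩ =>
    ⟨hpα, hα₀, hα.mono (insert_subset_insert (Finset.coe_subset.mpr hSS'))⟩
  obtain ⟨α, hα⟩ := IsCompact.nonempty_iInter_of_directed_nonempty_isCompact_isClosed K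
    hanti.directed_ge (exists_isCoherentOn_insert_bot hp hopen hx₀) hcompact
    fun S => (hcompact S).isClosed
  rw [mem_iInter] at hα
  have hcoh : IsCoherentOn p univ α := fun s _ t _ =>
    (hα {s, t}).2.2 s (by simp) t (by simp)
  obtain ⟨hpα, hα₀, -⟩ := hα ∅
  exact ⟨α, hcoh.continuous hp hlight, hpα, hα₀⟩

variable {Y : Type*} [TopologicalSpace Y]

theorem exists_continuous_lift {f : X → Y} (hf : IsProperMap f) (hopen : IsOpenMap f)
    (hlight : IsLight f) {β : B → Y} (hβ : Continuous β) (hx₀ : f x₀ = β ⊥) :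
    ∃ α : B → X, Continuous α ∧ α ⊥ = x₀ ∧ f ∘ α = β := by
  obtain ⟨σ, hσ, hfst, hσ₀⟩ := exists_continuous_rightInverse (isProperMap_pullbackFst hβ hf)
    (isOpenMap_pullbackFst hβ hopen) hlight.pullbackFst (x₀ := ⟨(⊥, x₀), hx₀.symm⟩) rfl
  refine ⟨Pullback.snd ∘ σ, (continuous_snd.comp continuous_subtype_val).comp hσ,
    congrArg Pullback.snd hσ₀, funext fun t => ?_⟩
  exact (σ t).2.symm.trans (congrArg β (hfst t))

end Lifting

section NormalDomain

variable {X Y : Type*} [TopologicalSpace X] {f : X → Y} {U : Set X}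

lemma isLight_restrict_image (hlight : ∀ y, IsTotallyDisconnected (U ∩ f ⁻¹' {y})) :
    IsLight ((mapsTo_image f U).restrict f U (f '' U)) := by
  intro y
  refine IsEmbedding.subtypeVal.isTotallyDisconnected fun S hS => hlight y S (hS.trans ?_)
  rintro _ ⟨x, rfl, rfl⟩
  exact ⟨x.2, rfl⟩

variable [TopologicalSpace Y]

lemma isProperMap_restrict_image [T2Space Y] (hcont : ContinuousOn f (closure U))
    (hU : IsCompact (closure U)) (hdisj : Disjoint (f '' frontier U) (f '' U)) :
    IsProperMap ((mapsTo_image f U).restrict f U (f '' U)) := by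
  refine isProperMap_iff_ultrafilter_of_t2.mpr
    ⟨(hcont.mono subset_closure).mapsToRestrict _, fun 𝒰 y hy => ?_⟩
  have h𝒰U : ∀ᶠ u : U in 𝒰, (u : X) ∈ closure U := .of_forall fun u => subset_closure u.2
  obtain ⟨x, hx, h𝒰x⟩ := hU.ultrafilter_le_nhds' (𝒰.map Subtype.val) h𝒰U
  have hfx : f x = y := by
    have hwithin : Tendsto Subtype.val (𝒰 : Filter U) (𝓝[closure U] x) :=
      tendsto_nhdsWithin_iff.mpr ⟨h𝒰x, h𝒰U⟩
    exact tendsto_nhds_unique ((hcont x hx).tendsto.comp hwithin)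
      ((continuous_subtype_val.tendsto y).comp hy)
  have hxU : x ∈ U := by
    by_contra hxU
    have hfrontier : x ∈ frontier U := ⟨hx, fun h => hxU (interior_subset h)⟩
    exact disjoint_left.mp hdisj (mem_image_of_mem f hfrontier) (hfx ▸ y.2)
  exact ⟨⟨x, hxU⟩, tendsto_subtype_rng.mpr h𝒰x⟩

lemma isOpenMap_restrict_image (hU : IsOpen U) (hopen : ∀ V ⊆ U, IsOpen V → IsOpen (f '' V)) :
    IsOpenMap ((mapsTo_image f U).restrict f U (f '' U)) := by
  intro V hV
  have himage : IsOpen (f '' (Subtype.val '' V)) :=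
    hopen _ (Subtype.coe_image_subset U V) (hU.isOpenMap_subtype_val V hV)
  convert himage.preimage (continuous_subtype_val (p := (· ∈ f '' U))) using 1
  ext y
  simp [Subtype.ext_iff]

theorem stoilow_path_lifting_general [T2Space X] [T2Space Y] {B : Type*}
    [ConditionallyCompleteLinearOrder B] [DenselyOrdered B] [OrderBot B] [TopologicalSpace B]
    [OrderTopology B] (hcont : ContinuousOn f (closure U))
    (hlight : ∀ y, IsTotallyDisconnected (U ∩ f ⁻¹' {y}))
    (hopen : ∀ V ⊆ U, IsOpen V → IsOpen (f '' V)) (hUopen : IsOpen U)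
    (hUcpt : IsCompact (closure U)) (hUnormal : f '' frontier U = frontier (f '' U))
    {β : B → Y} (hβcont : Continuous β) (hβmem : ∀ t, β t ∈ f '' U)
    {x₀ : X} (hx₀ : x₀ ∈ U) (hfx₀ : f x₀ = β ⊥) :
    ∃ α : B → X, Continuous α ∧ (∀ t, α t ∈ U) ∧ α ⊥ = x₀ ∧ ∀ t, f (α t) = β t := by
  have hdisj : Disjoint (f '' frontier U) (f '' U) := by
    rw [hUnormal, disjoint_comm, disjoint_iff_inter_eq_empty]
    exact (hopen U Subset.rfl hUopen).inter_frontier_eq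
  obtain ⟨α, hα, hα₀, hfα⟩ := exists_continuous_lift (isProperMap_restrict_image hcont hUcpt hdisj)
    (isOpenMap_restrict_image hUopen hopen) (isLight_restrict_image hlight)
    (hβcont.subtype_mk hβmem) (x₀ := ⟨x₀, hx₀⟩) (Subtype.ext (by exact hfx₀))
  exact ⟨fun t => α t, continuous_subtype_val.comp hα, fun t => (α t).2,
    congrArg Subtype.val hα₀, fun t => congrArg Subtype.val (congrFun hfα t)⟩

end NormalDomain

/-- **Path lifting (Floyd–Stoïlow).** Let `f` be a continuous, light, open map on a
planar domain `Ω` and let `U` be a normal domain compactly contained in `Ω`. Every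
path `β : [0,1] → f(U)` lifts, from any prescribed starting point
`x₀ ∈ U ∩ f⁻¹({β 0})`, to a path `α : [0,1] → U` with `f ∘ α = β`. -/
theorem stoilow_path_lifting
    (Ω : Set ℂ) (hΩopen : IsOpen Ω) (hΩconn : IsConnected Ω)
    (f : ℂ → ℂ)
    (hcont : ContinuousOn f Ω)
    (hlight : ∀ y : ℂ, IsTotallyDisconnected (Ω ∩ f ⁻¹' {y}))
    (hopen : ∀ V : Set ℂ, V ⊆ Ω → IsOpen V → IsOpen (f '' V))
    (U : Set ℂ)
    (hUopen : IsOpen U) (hUconn : IsConnected U)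
    (hUcpt : IsCompact (closure U)) (hUcl : closure U ⊆ Ω)
    (hUnormal : f '' frontier U = frontier (f '' U))
    (β : unitInterval → ℂ) (hβcont : Continuous β)
    (hβmem : ∀ t, β t ∈ f '' U)
    (x₀ : ℂ) (hx₀ : x₀ ∈ U) (hfx₀ : f x₀ = β 0) :
    ∃ α : unitInterval → ℂ, Continuous α ∧ (∀ t, α t ∈ U) ∧
      α 0 = x₀ ∧ ∀ t, f (α t) = β t := by
  have hUΩ : U ⊆ Ω := subset_closure.trans hUcl
  exact stoilow_path_lifting_general (hcont.mono hUcl)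
    (fun y S hS => hlight y S (hS.trans (inter_subset_inter_left _ hUΩ)))
    (fun V hV => hopen V (hV.trans hUΩ)) hUopen hUcpt hUnormal hβcont hβmem hx₀ hfx₀
end

section
/- Let Ω ⊆ ℂ be a domain, f : Ω → ℂ a continuous, light, and open mapping, and U a normal domain compactly contained in Ω. Then for every ε > 0 there exists δ > 0 such that for every continuum (nonempty compact connected set) C ⊆ f(U) with diam(C) < δ, every connected component of U ∩ f⁻¹(C) has diameter strictly less than ε. -/
/-!
A compact totally disconnected set has covers by finitely many pairwise disjoint open sets of
arbitrarily small diameter, and a connected set inside such a disjoint union lies in one of its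
members. Apply this to a fiber of `f` over the compact set `K = closure U`: by compactness the
disjoint union also contains the part of `K` lying over a neighborhood of the base point, so
connected subsets of `K` with image in that neighborhood are small. A Lebesgue number of the
resulting cover of `f '' K` is the required `δ`.
-/

open Set Metric Topology Uniformity TopologicalSpace Function

section Topological

variable {X Y ι : Type*} [TopologicalSpace X]

theorem exists_pairwise_disjoint_isOpen_superset [T2Space X] [Finite ι] {A : ι → Set X}
    (hA : ∀ i, IsCompact (A i)) (hdisj : Pairwise (Disjoint on A)) :
    ∃ W : ι → Set X, (∀ i, IsOpen (W i) ∧ A i ⊆ W i) ∧ Pairwise (Disjoint on W) := by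
  have hnhds : Pairwise (Disjoint on fun i ↦ 𝓝ˢ (A i)) := fun i j hij ↦
    separatedNhds_iff_disjoint.mp (.of_isCompact_isCompact (hA i) (hA j) (hdisj hij))
  exact hnhds.exists_mem_filter_basis_of_disjoint fun i ↦ hasBasis_nhdsSet (A i)

theorem exists_finite_pairwise_disjoint_isCompact_refinement [T2Space X] {F : Set X}
    (hF : IsCompact F) (hFd : IsTotallyDisconnected F) {U : ι → Set X} (hU : ∀ i, IsOpen (U i))
    (hFU : F ⊆ ⋃ i, U i) :
    ∃ (n : ℕ) (A : Fin n → Set X), (∀ j, IsCompact (A j)) ∧ Pairwise (Disjoint on A) ∧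
      (∀ j, ∃ i, A j ⊆ U i) ∧ F ⊆ ⋃ j, A j := by
  have : CompactSpace F := isCompact_iff_compactSpace.mp hF
  have : TotallyDisconnectedSpace F := totallyDisconnectedSpace_subtype_iff.mpr hFd
  let U' : ι → Opens F := fun i ↦ ⟨(↑) ⁻¹' U i, (hU i).preimage continuous_subtype_val⟩
  have hU' : IsOpenCover U' := .mk <| by
    ext x
    simpa [U'] using hFU x.2
  obtain ⟨n, D, hDU, hD, hDdisj⟩ := hU'.exists_finite_nonempty_disjoint_clopen_cover
  refine ⟨n, fun j ↦ (↑) '' (D j : Set F), fun j ↦ ?_, fun j k hjk ↦ ?_, fun j ↦ ?_, fun x hx ↦ ?_⟩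
  · exact (D j).isClopen.isClosed.isCompact.image continuous_subtype_val
  · refine (disjoint_image_iff Subtype.val_injective).mpr ?_
    simpa using hDdisj hjk
  · exact (hDU j).2.imp fun i hi ↦ image_subset_iff.mpr hi
  · obtain ⟨j, hj⟩ := mem_iUnion.mp (hD (mem_univ ⟨x, hx⟩))
    exact mem_iUnion.mpr ⟨j, _, hj, rfl⟩

theorem exists_finite_pairwise_disjoint_isOpen_refinement [T2Space X] {F : Set X}
    (hF : IsCompact F) (hFd : IsTotallyDisconnected F) {U : ι → Set X} (hU : ∀ i, IsOpen (U i))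
    (hFU : F ⊆ ⋃ i, U i) :
    ∃ (n : ℕ) (W : Fin n → Set X), (∀ j, IsOpen (W j)) ∧ Pairwise (Disjoint on W) ∧
      (∀ j, ∃ i, W j ⊆ U i) ∧ F ⊆ ⋃ j, W j := by
  obtain ⟨n, A, hA, hAdisj, hAU, hFA⟩ :=
    exists_finite_pairwise_disjoint_isCompact_refinement hF hFd hU hFU
  choose i hi using hAU
  obtain ⟨W, hW, hWdisj⟩ := exists_pairwise_disjoint_isOpen_superset hA hAdisj
  exact ⟨n, fun j ↦ W j ∩ U (i j), fun j ↦ (hW j).1.inter (hU _),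
    fun j k hjk ↦ (hWdisj hjk).mono inter_subset_left inter_subset_left,
    fun j ↦ ⟨i j, inter_subset_right⟩,
    hFA.trans (iUnion_mono fun j ↦ subset_inter (hW j).2 (hi j))⟩

theorem exists_subset_of_isConnected_of_subset_iUnion {S : Set X} (hS : IsConnected S)
    {W : ι → Set X} (hW : ∀ i, IsOpen (W i)) (hdisj : Pairwise (Disjoint on W))
    (hSW : S ⊆ ⋃ i, W i) : ∃ i, S ⊆ W i := by
  obtain ⟨x, hx⟩ := hS.nonempty
  obtain ⟨i, hi⟩ := mem_iUnion.mp (hSW hx)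
  have hcover : S ⊆ W i ∪ ⋃ j ∈ ({i}ᶜ : Set ι), W j := hSW.trans <| iUnion_subset fun j ↦ by
    by_cases hj : j = i
    · exact hj ▸ subset_union_left
    · exact subset_union_of_subset_right (subset_biUnion_of_mem (u := W) hj) _
  refine ⟨i, hS.isPreconnected.subset_left_of_subset_union (hW i)
    (isOpen_biUnion fun j _ ↦ hW j) ?_ hcover ⟨x, hx, hi⟩⟩
  exact disjoint_iUnion₂_right.mpr fun j hj ↦ hdisj (Ne.symm hj)

variable [TopologicalSpace Y] [T2Space Y] {K : Set X} {f : X → Y}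

theorem exists_isOpen_inter_preimage_subset (hK : IsCompact K) (hf : ContinuousOn f K) {y : Y}
    {W : Set X} (hW : IsOpen W) (hyW : K ∩ f ⁻¹' {y} ⊆ W) :
    ∃ V, IsOpen V ∧ y ∈ V ∧ K ∩ f ⁻¹' V ⊆ W := by
  have hclosed : IsClosed (f '' (K \ W)) :=
    ((hK.diff hW).image_of_continuousOn (hf.mono sdiff_subset)).isClosed
  refine ⟨(f '' (K \ W))ᶜ, hclosed.isOpen_compl, ?_, fun x ⟨hxK, hx⟩ ↦ ?_⟩
  · rintro ⟨x, ⟨hxK, hxW⟩, hxy⟩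
    exact hxW (hyW ⟨hxK, hxy⟩)
  · by_contra hxW
    exact hx (mem_image_of_mem f ⟨hxK, hxW⟩)

variable [T2Space X]

theorem exists_isOpen_forall_isConnected_subset (hK : IsCompact K) (hf : ContinuousOn f K) {y : Y}
    (hlight : IsTotallyDisconnected (K ∩ f ⁻¹' {y})) {U : ι → Set X} (hU : ∀ i, IsOpen (U i))
    (hyU : K ∩ f ⁻¹' {y} ⊆ ⋃ i, U i) :
    ∃ V, IsOpen V ∧ y ∈ V ∧ ∀ S ⊆ K ∩ f ⁻¹' V, IsConnected S → ∃ i, S ⊆ U i := by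
  have hfiber : IsCompact (K ∩ f ⁻¹' {y}) :=
    hK.of_isClosed_subset (hf.preimage_isClosed_of_isClosed hK.isClosed isClosed_singleton)
      inter_subset_left
  obtain ⟨n, W, hW, hWdisj, hWU, hyW⟩ :=
    exists_finite_pairwise_disjoint_isOpen_refinement hfiber hlight hU hyU
  obtain ⟨V, hV, hyV, hVW⟩ := exists_isOpen_inter_preimage_subset hK hf (isOpen_iUnion hW) hyW
  refine ⟨V, hV, hyV, fun S hSV hS ↦ ?_⟩
  obtain ⟨j, hSj⟩ := exists_subset_of_isConnected_of_subset_iUnion hS hW hWdisj (hSV.trans hVW)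
  exact (hWU j).imp fun i hi ↦ hSj.trans hi

end Topological

theorem exists_entourage_forall_isConnected_subset {X Y ι : Type*} [TopologicalSpace X] [T2Space X]
    [UniformSpace Y] [T2Space Y] {K : Set X} {f : X → Y} (hK : IsCompact K)
    (hf : ContinuousOn f K) (hlight : ∀ y, IsTotallyDisconnected (K ∩ f ⁻¹' {y}))
    {U : ι → Set X} (hU : ∀ i, IsOpen (U i)) (hKU : K ⊆ ⋃ i, U i) :
    ∃ E ∈ 𝓤 Y, ∀ S ⊆ K, IsConnected S → (f '' S) ×ˢ (f '' S) ⊆ E → ∃ i, S ⊆ U i := by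
  choose V hV hmemV hVU using fun y ↦
    exists_isOpen_forall_isConnected_subset hK hf (hlight y) hU (inter_subset_left.trans hKU)
  obtain ⟨E, hE, hEV⟩ := lebesgue_number_lemma (hK.image_of_continuousOn hf) hV
    fun y _ ↦ mem_iUnion.mpr ⟨y, hmemV y⟩
  refine ⟨E, hE, fun S hSK hS hSE ↦ ?_⟩
  obtain ⟨x, hx⟩ := hS.nonempty
  obtain ⟨y, hy⟩ := hEV (f x) (mem_image_of_mem f (hSK hx))
  exact hVU y S (fun z hz ↦ ⟨hSK hz, hy (hSE ⟨mem_image_of_mem f hx, mem_image_of_mem f hz⟩)⟩) hS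

theorem floyd_diameter_lemma_general {X Y : Type*} [MetricSpace X] [MetricSpace Y] {K : Set X}
    {f : X → Y} (hK : IsCompact K) (hf : ContinuousOn f K)
    (hlight : ∀ y, IsTotallyDisconnected (K ∩ f ⁻¹' {y})) {ε : ℝ} (hε : 0 < ε) :
    ∃ δ > 0, ∀ S ⊆ K, IsPreconnected S → diam (f '' S) < δ → diam S < ε := by
  obtain ⟨E, hE, hEball⟩ := exists_entourage_forall_isConnected_subset hK hf hlight
    (U := fun x ↦ ball x (ε / 3)) (fun _ ↦ isOpen_ball)
    fun x _ ↦ mem_iUnion.mpr ⟨x, mem_ball_self (by positivity)⟩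
  obtain ⟨δ, hδ, hδE⟩ := mem_uniformity_dist.mp hE
  refine ⟨δ, hδ, fun S hSK hS hdiam ↦ ?_⟩
  rcases S.eq_empty_or_nonempty with rfl | hne
  · rwa [diam_empty]
  have hbounded : Bornology.IsBounded (f '' S) :=
    (hK.image_of_continuousOn hf).isBounded.subset (image_mono hSK)
  obtain ⟨x, hSx⟩ := hEball S hSK ⟨hne, hS⟩ fun p hp ↦
    hδE ((dist_le_diam_of_mem hbounded hp.1 hp.2).trans_lt hdiam)
  calc diam S ≤ diam (ball x (ε / 3)) := diam_mono hSx isBounded_ball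
    _ ≤ 2 * (ε / 3) := diam_ball (by positivity)
    _ < ε := by linarith

/-- **Floyd's diameter lemma.** Let `f` be a continuous, light, open map on a planar
domain `Ω` and `U` a normal domain compactly contained in `Ω`. For every `ε > 0`
there is `δ > 0` such that for every continuum `C ⊆ f(U)` of diameter `< δ`, every
connected component of `U ∩ f⁻¹(C)` has diameter `< ε`. -/
theorem floyd_diameter_lemma
    (Ω : Set ℂ) (hΩopen : IsOpen Ω) (hΩconn : IsConnected Ω)
    (f : ℂ → ℂ)
    (hcont : ContinuousOn f Ω)
    (hlight : ∀ y : ℂ, IsTotallyDisconnected (Ω ∩ f ⁻¹' {y}))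
    (hopen : ∀ V : Set ℂ, V ⊆ Ω → IsOpen V → IsOpen (f '' V))
    (U : Set ℂ)
    (hUopen : IsOpen U) (hUconn : IsConnected U)
    (hUcpt : IsCompact (closure U)) (hUcl : closure U ⊆ Ω)
    (hUnormal : f '' frontier U = frontier (f '' U)) :
    ∀ ε : ℝ, 0 < ε → ∃ δ : ℝ, 0 < δ ∧
      ∀ C : Set ℂ, C ⊆ f '' U → IsCompact C → IsConnected C → Metric.diam C < δ →
        ∀ x ∈ U ∩ f ⁻¹' C,
          Metric.diam (connectedComponentIn (U ∩ f ⁻¹' C) x) < ε := by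
  intro ε hε
  obtain ⟨δ, hδ, hsmall⟩ := floyd_diameter_lemma_general hUcpt (hcont.mono hUcl)
    (fun y t ht ↦ hlight y t (ht.trans (inter_subset_inter_left _ hUcl))) hε
  refine ⟨δ, hδ, fun C _ hC _ hCδ x _ ↦ ?_⟩
  have hcomp := connectedComponentIn_subset (U ∩ f ⁻¹' C) x
  exact hsmall _ (hcomp.trans (inter_subset_left.trans subset_closure))
    isPreconnected_connectedComponentIn
    ((diam_mono (image_subset_iff.mpr (hcomp.trans inter_subset_right)) hC.isBounded).trans_lt hCδ)
end

section
/- Let Ω ⊆ ℂ be a simply connected domain and let c : S¹ → Ω be an injective continuous map from the unit circle into Ω. Then Ω \ c(S¹) has exactly two connected components, exactly one of which has compact closure contained in Ω, and both of these components have the image c(S¹) as their topological boundary (relative to Ω). -/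
/-!
The argument is Eilenberg's, through continuous logarithms. If `U` is bounded and open and
`p ∈ U`, then `z - p` has no continuous logarithm on `∂U`: otherwise it would extend from `∂U` to
`closure U` without zeros, and hence to a zero-free function on the plane, which has a logarithm,
whereas `z - p` has none on a large circle. So a compact set `K` on which each `z - p`, `p ∉ K`,
has a logarithm does not separate the plane; arcs are such sets, and this forces the boundary
of each complementary component of a Jordan curve to be the whole curve. Functions into `ℂ ∖ {0}`
on a circle are powers of the identity up to exponentials, which leaves room for only one bounded
component. Conversely, if the complement of the curve were connected, logarithms of
`(z - a) / (z - b)` off the two arcs from `a` to `b` would fit together to one off `{a, b}`.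

In a simply connected domain `Ω` every `z - p` with `p ∉ Ω` has a logarithm, so the bounded
component of a Jordan curve in `Ω` lies in `Ω`. The unbounded component `W` and `Ω` then cover the
plane, and `W ∩ Ω` is connected because the plane is unicoherent.
-/

open Set Filter Topology Complex Metric

/-! ### Continuous logarithms -/

/-- `f` has a continuous branch of the logarithm on `S`. The branch is encoded as a function on the
whole space whose values off `S` are irrelevant, so that restricting to subsets is free. -/
def HasContinuousLogOn {X : Type*} [TopologicalSpace X] (f : X → ℂ) (S : Set X) : Prop :=
  ∃ g : X → ℂ, ContinuousOn g S ∧ ∀ x ∈ S, exp (g x) = f x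

namespace HasContinuousLogOn

variable {X : Type*} [TopologicalSpace X] {f f₁ f₂ : X → ℂ} {S T : Set X}

lemma mono (h : HasContinuousLogOn f S) (hTS : T ⊆ S) : HasContinuousLogOn f T :=
  let ⟨g, hg, hgf⟩ := h
  ⟨g, hg.mono hTS, fun x hx => hgf x (hTS hx)⟩

lemma congr (h : HasContinuousLogOn f₁ S) (hf : EqOn f₂ f₁ S) : HasContinuousLogOn f₂ S :=
  let ⟨g, hg, hgf⟩ := h
  ⟨g, hg, fun x hx => (hgf x hx).trans (hf hx).symm⟩

lemma div (h₁ : HasContinuousLogOn f₁ S) (h₂ : HasContinuousLogOn f₂ S) :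
    HasContinuousLogOn (fun x => f₁ x / f₂ x) S :=
  let ⟨g₁, hg₁, hgf₁⟩ := h₁
  let ⟨g₂, hg₂, hgf₂⟩ := h₂
  ⟨fun x => g₁ x - g₂ x, hg₁.sub hg₂, fun x hx => by rw [exp_sub, hgf₁ x hx, hgf₂ x hx]⟩

lemma inv (h : HasContinuousLogOn f S) : HasContinuousLogOn (fun x => (f x)⁻¹) S :=
  let ⟨g, hg, hgf⟩ := h
  ⟨fun x => -g x, hg.neg, fun x hx => by rw [exp_neg, hgf x hx]⟩

lemma zpow (h : HasContinuousLogOn f S) (n : ℤ) : HasContinuousLogOn (fun x => f x ^ n) S :=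
  let ⟨g, hg, hgf⟩ := h
  ⟨fun x => n * g x, hg.const_mul _, fun x hx => by rw [exp_int_mul, hgf x hx]⟩

lemma const {w : ℂ} (hw : w ≠ 0) : HasContinuousLogOn (fun _ => w) S :=
  ⟨fun _ => log w, continuousOn_const, fun _ _ => exp_log hw⟩

lemma iff_exists_continuousMap :
    HasContinuousLogOn f S ↔ ∃ g : C(S, ℂ), ∀ x : S, exp (g x) = f x := by
  constructor
  · rintro ⟨g, hg, hgf⟩
    exact ⟨⟨S.domRestrict g, hg.domRestrict⟩, fun x => hgf x x.2⟩
  · rintro ⟨g, hgf⟩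
    have hext : ∀ x : S, Function.extend Subtype.val g 0 x = g x :=
      Subtype.val_injective.extend_apply g 0
    refine ⟨Function.extend Subtype.val g 0, ?_, fun x hx => ?_⟩
    · rw [continuousOn_iff_continuous_domRestrict]
      exact g.continuous.congr fun x => (hext x).symm
    · rw [hext ⟨x, hx⟩, hgf]

end HasContinuousLogOn

section ContinuousLog

variable {X : Type*} [TopologicalSpace X]

lemma sub_eq_sub_of_exp_eqOn {S : Set X} (hS : IsPreconnected S) {g₁ g₂ : X → ℂ}
    (hg₁ : ContinuousOn g₁ S) (hg₂ : ContinuousOn g₂ S) (he : ∀ x ∈ S, exp (g₁ x) = exp (g₂ x))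
    {x y : X} (hx : x ∈ S) (hy : y ∈ S) : g₁ x - g₂ x = g₁ y - g₂ y := by
  have hexp : ∀ z ∈ S, exp (g₁ z - g₂ z) = 1 := fun z hz => by
    rw [exp_sub, he z hz, div_self (exp_ne_zero _)]
  exact isCoveringMap_exp.constOn_of_comp hS (hg₁.sub hg₂)
    (fun a ha b hb => Subtype.ext ((hexp a ha).trans (hexp b hb).symm)) hx hy

lemma HasContinuousLogOn.of_homotopy {S : Set X} {F : unitInterval × X → ℂ}
    (hF : ContinuousOn F (univ ×ˢ S)) (hF0 : ∀ t, ∀ x ∈ S, F (t, x) ≠ 0)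
    (h : HasContinuousLogOn (fun x => F (0, x)) S) : HasContinuousLogOn (fun x => F (1, x)) S := by
  rw [iff_exists_continuousMap] at h ⊢
  obtain ⟨g, hg⟩ := h
  let H : C(unitInterval × S, {z : ℂ // z ≠ 0}) :=
    ⟨fun y => ⟨F (y.1, y.2), hF0 _ _ y.2.2⟩, by
      refine (hF.comp_continuous ?_ fun y => ⟨mem_univ _, y.2.2⟩).subtype_mk _
      fun_prop⟩
  have hH : ∀ x : S, H (0, x) = ⟨exp (g x), exp_ne_zero _⟩ := fun x => Subtype.ext (hg x).symm
  refine ⟨(isCoveringMap_exp.liftHomotopy H g hH).comp (.prodMk (.const S 1) (.id S)),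
    fun x => ?_⟩
  exact congrArg Subtype.val (congrFun (isCoveringMap_exp.liftHomotopy_lifts H g hH) (1, x))

lemma hasContinuousLogOn_of_starConvex {E : Type*} [AddCommGroup E] [Module ℝ E]
    [TopologicalSpace E] [IsTopologicalAddGroup E] [ContinuousSMul ℝ E] {S : Set E} {x₀ : E}
    (hS : StarConvex ℝ x₀ S) (hx₀ : x₀ ∈ S) {f : E → ℂ} (hf : ContinuousOn f S)
    (hf0 : ∀ x ∈ S, f x ≠ 0) : HasContinuousLogOn f S := by
  let F : unitInterval × E → ℂ := fun y => f (x₀ + (y.1 : ℝ) • (y.2 - x₀))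
  have hmem : ∀ t : unitInterval, ∀ x ∈ S, x₀ + (t : ℝ) • (x - x₀) ∈ S := fun t x hx =>
    hS.add_smul_sub_mem hx t.2.1 t.2.2
  have hF : ContinuousOn F (univ ×ˢ S) :=
    hf.comp (by fun_prop) fun y hy => hmem y.1 y.2 hy.2
  have h0 : HasContinuousLogOn (fun x => F (0, x)) S := by
    simpa [F] using HasContinuousLogOn.const (hf0 x₀ hx₀)
  simpa [F] using h0.of_homotopy hF fun t x hx => hf0 _ (hmem t x hx)

lemma hasContinuousLogOn_div_of_joinedIn {S : Set ℂ} {a b : ℂ} (h : JoinedIn Sᶜ a b) :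
    HasContinuousLogOn (fun z => (z - b) / (z - a)) S := by
  obtain ⟨γ, hγ⟩ := h
  have hne : ∀ t, ∀ z ∈ S, z - γ t ≠ 0 := fun t z hz h => hγ t (sub_eq_zero.1 h ▸ hz)
  have hnea : ∀ z ∈ S, z - a ≠ 0 := by simpa using hne 0
  let F : unitInterval × ℂ → ℂ := fun y => (y.2 - γ y.1) / (y.2 - a)
  have hF : ContinuousOn F (univ ×ˢ S) :=
    ContinuousOn.div (by fun_prop) (by fun_prop) fun y hy => hnea y.2 hy.2
  have h0 : HasContinuousLogOn (fun z => F (0, z)) S :=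
    (HasContinuousLogOn.const one_ne_zero).congr fun z hz => by simp [F, div_self (hnea z hz)]
  simpa [F] using h0.of_homotopy hF fun t z hz => div_ne_zero (hne t z hz) (hnea z hz)

lemma exists_continuousOn_union_of_eqOn {Y : Type*} [TopologicalSpace Y] {S T : Set X}
    (hS : IsOpen S) (hT : IsOpen T) {f g : X → Y} (hf : ContinuousOn f S) (hg : ContinuousOn g T)
    (hfg : EqOn f g (S ∩ T)) : ∃ h, ContinuousOn h (S ∪ T) ∧ EqOn h f S ∧ EqOn h g T := by
  classical
  have hfS : EqOn (S.piecewise f g) f S := piecewise_eqOn S f g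
  have hgT : EqOn (S.piecewise f g) g T := fun x hx => by
    by_cases hxS : x ∈ S
    · rw [hfS hxS, hfg ⟨hxS, hx⟩]
    · exact piecewise_eq_of_notMem _ _ _ hxS
  exact ⟨_, (hf.congr hfS).union_of_isOpen (hg.congr hgT) hS hT, hfS, hgT⟩

lemma HasContinuousLogOn.union {S T : Set X} (hS : IsOpen S) (hT : IsOpen T)
    (hST : IsPreconnected (S ∩ T)) {f : X → ℂ} (hfS : HasContinuousLogOn f S)
    (hfT : HasContinuousLogOn f T) : HasContinuousLogOn f (S ∪ T) := by
  obtain ⟨g, hg, hgf⟩ := hfS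
  obtain ⟨k, hk, hkf⟩ := hfT
  obtain ⟨w, hw1, hw⟩ : ∃ w, exp w = 1 ∧ ∀ x ∈ S ∩ T, g x - k x = w := by
    rcases (S ∩ T).eq_empty_or_nonempty with hemp | ⟨y, hy⟩
    · exact ⟨0, exp_zero, by simp [hemp]⟩
    have hexp : ∀ x ∈ S ∩ T, exp (g x) = exp (k x) := fun x hx =>
      (hgf x hx.1).trans (hkf x hx.2).symm
    refine ⟨g y - k y, by rw [exp_sub, hexp y hy, div_self (exp_ne_zero _)], fun x hx => ?_⟩
    exact sub_eq_sub_of_exp_eqOn hST (hg.mono inter_subset_left) (hk.mono inter_subset_right)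
      hexp hx hy
  obtain ⟨h, hh, hhg, hhk⟩ := exists_continuousOn_union_of_eqOn hS hT hg
    (hk.add (continuousOn_const (c := w))) fun x hx => by simp [← hw x hx]
  refine ⟨h, hh, fun x hx => hx.elim (fun hxS => ?_) fun hxT => ?_⟩
  · rw [hhg hxS, hgf x hxS]
  · rw [hhk hxT, Pi.add_apply, exp_add, hw1, mul_one, hkf x hxT]

lemma continuousOn_invFunOn_of_isCompact {Y : Type*} [TopologicalSpace Y] [T2Space Y] [Nonempty X]
    {e : X → Y} {S : Set X} (hS : IsCompact S) (he : ContinuousOn e S) (hinj : InjOn e S) :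
    ContinuousOn (Function.invFunOn e S) (e '' S) := by
  refine continuousOn_iff_isClosed.2 fun t ht => ⟨e '' (S ∩ t), ?_, ?_⟩
  · exact ((hS.inter_right ht).image_of_continuousOn (he.mono inter_subset_left)).isClosed
  · ext y
    constructor
    · rintro ⟨hyt, x, hx, rfl⟩
      rw [mem_preimage, hinj.leftInvOn_invFunOn hx] at hyt
      exact ⟨⟨x, ⟨hx, hyt⟩, rfl⟩, x, hx, rfl⟩
    · rintro ⟨⟨x, ⟨hx, hxt⟩, rfl⟩, hy⟩
      exact ⟨by rwa [mem_preimage, hinj.leftInvOn_invFunOn hx], hy⟩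

lemma HasContinuousLogOn.image {Y : Type*} [TopologicalSpace Y] [T2Space Y] {e : X → Y} {S : Set X}
    (hS : IsCompact S) (he : ContinuousOn e S) (hinj : InjOn e S) {f : Y → ℂ}
    (h : HasContinuousLogOn (f ∘ e) S) : HasContinuousLogOn f (e '' S) := by
  rcases S.eq_empty_or_nonempty with rfl | ⟨x₀, -⟩
  · exact ⟨0, by simp, by simp⟩
  have : Nonempty X := ⟨x₀⟩
  obtain ⟨g, hg, hgf⟩ := h
  refine ⟨g ∘ Function.invFunOn e S, ?_, ?_⟩
  · exact hg.comp (continuousOn_invFunOn_of_isCompact hS he hinj) (surjOn_image e S).mapsTo_invFunOn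
  · rintro _ ⟨x, hx, rfl⟩
    rw [Function.comp_apply, hinj.leftInvOn_invFunOn hx, hgf x hx, Function.comp_apply]

end ContinuousLog

lemma eq_zero_of_hasContinuousLogOn_sphere {p : ℂ} {R : ℝ} (hR : 0 < R) {n : ℤ}
    (h : HasContinuousLogOn (fun z => (z - p) ^ n) (sphere p R)) : n = 0 := by
  obtain ⟨L, hL, hLe⟩ := h
  have hmem : ∀ θ, circleMap p R θ ∈ sphere p R := circleMap_mem_sphere p hR.le
  have hexp : ∀ θ : ℝ, exp (L (circleMap p R θ)) = exp (n * (Real.log R + θ * I)) := fun θ => by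
    rw [hLe _ (hmem θ)]
    simp only [circleMap_sub_center, circleMap_zero, exp_int_mul, exp_add, ← ofReal_exp,
      Real.exp_log hR]
  have hconst := sub_eq_sub_of_exp_eqOn isPreconnected_univ
    (hL.comp_continuous (continuous_circleMap p R) hmem).continuousOn (by fun_prop)
    (fun θ _ => hexp θ) (mem_univ 0) (mem_univ (2 * Real.pi))
  have hperiod : circleMap p R (2 * Real.pi) = circleMap p R 0 := by
    simpa using periodic_circleMap p R 0
  have hn : (n : ℂ) * (2 * Real.pi * I) = 0 := by
    rw [Function.comp_apply, Function.comp_apply, hperiod] at hconst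
    push_cast at hconst
    linear_combination hconst
  simpa [Real.pi_ne_zero] using hn

/-! ### Bounded regions and complementary components -/

section BoundedRegion

variable {U : Set ℂ} {p : ℂ} {n : ℤ}

-- Gluing `h` on `U` to `(z - p) ^ n` outside gives a zero-free function on the plane; its logarithm
-- restricts to a large circle around `p`.
lemma eq_zero_of_eqOn_frontier_zpow (hU : IsOpen U) (hb : Bornology.IsBounded U) (hp : p ∈ U)
    {h : ℂ → ℂ} (hc : ContinuousOn h (closure U)) (h0 : ∀ z ∈ closure U, h z ≠ 0)
    (hfr : EqOn h (fun z => (z - p) ^ n) (frontier U)) : n = 0 := by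
  classical
  have hout : ∀ z ∉ U, z - p ≠ 0 := fun z hz hzp => hz (sub_eq_zero.1 hzp ▸ hp)
  let F : ℂ → ℂ := U.piecewise h fun z => (z - p) ^ n
  have hF : Continuous F := by
    refine continuous_piecewise hfr hc ?_
    rw [hU.isClosed_compl.closure_eq]
    exact ContinuousOn.zpow₀ (by fun_prop) n fun z hz => .inl (hout z hz)
  have hF0 : ∀ z, F z ≠ 0 := fun z => by
    by_cases hz : z ∈ U
    · simpa only [F, piecewise_eq_of_mem _ _ _ hz] using h0 z (subset_closure hz)
    · simpa only [F, piecewise_eq_of_notMem _ _ _ hz] using zpow_ne_zero n (hout z hz)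
  have hlog : HasContinuousLogOn F univ :=
    hasContinuousLogOn_of_starConvex (starConvex_univ p) (mem_univ p) hF.continuousOn
      fun z _ => hF0 z
  obtain ⟨R, hR, hsub⟩ := hb.subset_ball_lt 0 p
  have hsphere : EqOn (fun z => (z - p) ^ n) F (sphere p R) :=
    ((piecewise_eqOn_compl U h _).mono fun z hz hzU => (mem_ball.1 (hsub hzU)).ne hz).symm
  exact eq_zero_of_hasContinuousLogOn_sphere hR ((hlog.mono (subset_univ _)).congr hsphere)

lemma eq_zero_of_hasContinuousLogOn_frontier (hU : IsOpen U) (hb : Bornology.IsBounded U)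
    (hp : p ∈ U) {f : ℂ → ℂ} (hf : ContinuousOn f (closure U)) (hf0 : ∀ z ∈ closure U, f z ≠ 0)
    (hlog : HasContinuousLogOn (fun z => (z - p) ^ n / f z) (frontier U)) : n = 0 := by
  obtain ⟨g, hg⟩ := HasContinuousLogOn.iff_exists_continuousMap.1 hlog
  obtain ⟨G, hG⟩ := g.exists_restrict_eq isClosed_frontier
  refine eq_zero_of_eqOn_frontier_zpow (h := fun z => f z * exp (G z)) hU hb hp
    (hf.mul (by fun_prop)) (fun z hz => mul_ne_zero (hf0 z hz) (exp_ne_zero _)) fun z hz => ?_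
  have hGg : G z = g ⟨z, hz⟩ := congrArg (fun k : C(frontier U, ℂ) => k ⟨z, hz⟩) hG
  simp only [hGg, hg, mul_div_cancel₀ _ (hf0 z (frontier_subset_closure hz))]

lemma not_hasContinuousLogOn_sub_frontier (hU : IsOpen U) (hb : Bornology.IsBounded U)
    (hp : p ∈ U) : ¬ HasContinuousLogOn (fun z => z - p) (frontier U) := fun h =>
  one_ne_zero <| eq_zero_of_hasContinuousLogOn_frontier (n := 1) hU hb hp (f := fun _ => 1)
    continuousOn_const (fun _ _ => one_ne_zero) (by simpa using h)

lemma not_hasContinuousLogOn_div_compl_pair {a b : ℂ} (hab : a ≠ b) :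
    ¬ HasContinuousLogOn (fun z => (z - a) / (z - b)) {a, b}ᶜ := fun h => by
  have hd : 0 < dist b a := dist_pos.2 hab.symm
  have hb : ∀ z ∈ closure (ball a (dist b a / 2)), z - b ≠ 0 := fun z hz hzb => by
    have hz' := closure_ball_subset_closedBall hz
    rw [sub_eq_zero.1 hzb, mem_closedBall] at hz'
    linarith
  have hfr : frontier (ball a (dist b a / 2)) ⊆ {a, b}ᶜ := by
    rintro z hz (rfl | rfl)
    · rw [isOpen_ball.frontier_eq] at hz
      exact hz.2 (mem_ball_self (half_pos hd))
    · exact hb z (frontier_subset_closure hz) (sub_self z)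
  exact one_ne_zero <| eq_zero_of_hasContinuousLogOn_frontier (n := 1) isOpen_ball isBounded_ball
    (mem_ball_self (half_pos hd)) (by fun_prop) hb (by simpa using h.mono hfr)

lemma closure_subset_of_frontier_subset_of_isSimplyConnected {Ω : Set ℂ} (hΩo : IsOpen Ω)
    (hΩ : IsSimplyConnected Ω) (hU : IsOpen U) (hb : Bornology.IsBounded U)
    (hfr : frontier U ⊆ Ω) : closure U ⊆ Ω := by
  rw [closure_eq_self_union_frontier]
  refine union_subset (fun p hp => ?_) hfr
  by_contra hpΩ
  obtain ⟨g, hg, hge⟩ := exists_continuousOn_eqOn_exp_comp hΩ hΩo (g := fun z => z - p)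
    (by fun_prop) (by rintro ⟨z, hz, hzp⟩; exact hpΩ (sub_eq_zero.1 hzp ▸ hz))
  exact not_hasContinuousLogOn_sub_frontier hU hb hp ⟨g, hg.mono hfr, fun z hz => hge (hfr hz)⟩

end BoundedRegion

section Components

variable {X : Type*} [TopologicalSpace X]

lemma closure_connectedComponentIn_inter_subset (S : Set X) (x : X) :
    closure (connectedComponentIn S x) ∩ S ⊆ connectedComponentIn S x := by
  by_cases hx : x ∈ S
  · have hmem := mem_connectedComponentIn hx
    refine IsPreconnected.subset_connectedComponentIn ?_ ⟨subset_closure hmem, hx⟩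
      inter_subset_right
    exact isPreconnected_connectedComponentIn.subset_closure
      (subset_inter subset_closure (connectedComponentIn_subset S x)) inter_subset_left
  · simp [connectedComponentIn_eq_empty hx]

lemma frontier_connectedComponentIn_subset_compl [LocallyConnectedSpace X] {S : Set X}
    (hS : IsOpen S) (x : X) : frontier (connectedComponentIn S x) ⊆ Sᶜ := fun y hy hyS => by
  rw [hS.connectedComponentIn.frontier_eq] at hy
  exact hy.2 (closure_connectedComponentIn_inter_subset S x ⟨hy.1, hyS⟩)

lemma disjoint_connectedComponentIn_of_notMem {S : Set X} {x y : X}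
    (h : y ∉ connectedComponentIn S x) :
    Disjoint (connectedComponentIn S y) (connectedComponentIn S x) := by
  refine disjoint_left.2 fun z hzy hzx => h ?_
  rw [connectedComponentIn_eq hzx, ← connectedComponentIn_eq hzy]
  exact mem_connectedComponentIn (connectedComponentIn_nonempty_iff.1 ⟨z, hzy⟩)

lemma isPreconnected_lt_norm {E : Type*} [NormedAddCommGroup E] [NormedSpace ℝ E]
    (hE : 1 < Module.rank ℝ E) {R : ℝ} (hR : 0 ≤ R) : IsPreconnected {x : E | R < ‖x‖} := by
  have himage : (fun y : ℝ × E => y.1 • y.2) '' (Ioi R ×ˢ sphere 0 1) = {x : E | R < ‖x‖} := by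
    ext x
    constructor
    · rintro ⟨⟨r, u⟩, ⟨hr, hu⟩, rfl⟩
      have hr : R < r := hr
      simpa [norm_smul, mem_sphere_zero_iff_norm.1 hu] using hr.trans_le (le_abs_self r)
    · intro hx
      have hx0 : ‖x‖ ≠ 0 := (hR.trans_lt hx).ne'
      exact ⟨(‖x‖, ‖x‖⁻¹ • x), ⟨hx, by simp [norm_smul, hx0]⟩, smul_inv_smul₀ hx0 x⟩
  rw [← himage]
  exact (isPreconnected_Ioi.prod (isPreconnected_sphere hE 0 1)).image _ (by fun_prop)

lemma exists_isBounded_compl_connectedComponentIn_compl {E : Type*} [NormedAddCommGroup E]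
    [NormedSpace ℝ E] (hE : 1 < Module.rank ℝ E) {K : Set E} (hK : Bornology.IsBounded K) :
    ∃ w ∈ Kᶜ, Bornology.IsBounded (connectedComponentIn Kᶜ w)ᶜ := by
  have : Nontrivial E := rank_pos_iff_nontrivial.1 (zero_lt_one.trans hE)
  obtain ⟨R, hR, hsub⟩ := hK.subset_ball_lt 0 0
  obtain ⟨w, hw⟩ := NormedSpace.exists_lt_norm ℝ E R
  have hout : {x : E | R < ‖x‖} ⊆ Kᶜ := fun x hx hxK =>
    lt_asymm hx (mem_ball_zero_iff.1 (hsub hxK))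
  refine ⟨w, hout hw, (isBounded_closedBall (x := (0 : E)) (r := R)).subset ?_⟩
  rw [compl_subset_comm]
  refine Subset.trans (fun x hx => ?_)
    ((isPreconnected_lt_norm hE hR.le).subset_connectedComponentIn hw hout)
  simpa using hx

end Components

lemma isPreconnected_compl_of_hasContinuousLogOn_sub {K : Set ℂ} (hK : IsCompact K)
    (hlog : ∀ p ∉ K, HasContinuousLogOn (fun z => z - p) K) : IsPreconnected Kᶜ := by
  obtain ⟨w, -, hb⟩ := exists_isBounded_compl_connectedComponentIn_compl
    (rank_real_complex ▸ Nat.one_lt_ofNat) hK.isBounded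
  have hKo : IsOpen Kᶜ := hK.isClosed.isOpen_compl
  suffices h : Kᶜ ⊆ connectedComponentIn Kᶜ w from
    (connectedComponentIn_subset _ _).antisymm h ▸ isPreconnected_connectedComponentIn
  intro p hp
  by_contra hpw
  refine not_hasContinuousLogOn_sub_frontier hKo.connectedComponentIn
    (hb.subset (disjoint_connectedComponentIn_of_notMem hpw).subset_compl_right)
    (mem_connectedComponentIn hp) ((hlog p hp).mono ?_)
  simpa only [compl_compl] using frontier_connectedComponentIn_subset_compl hKo p

lemma isPreconnected_compl_image_of_convex {E : Type*} [AddCommGroup E] [Module ℝ E]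
    [TopologicalSpace E] [IsTopologicalAddGroup E] [ContinuousSMul ℝ E] {S : Set E}
    (hS : IsCompact S) (hconv : Convex ℝ S) {e : E → ℂ} (he : ContinuousOn e S)
    (hinj : InjOn e S) : IsPreconnected (e '' S)ᶜ := by
  rcases S.eq_empty_or_nonempty with rfl | ⟨x₀, hx₀⟩
  · simpa using isPreconnected_univ
  refine isPreconnected_compl_of_hasContinuousLogOn_sub (hS.image_of_continuousOn he) fun p hp => ?_
  have hne : ∀ x ∈ S, e x - p ≠ 0 := fun x hx h => hp ⟨x, hx, sub_eq_zero.1 h⟩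
  exact HasContinuousLogOn.image hS he hinj <|
    hasContinuousLogOn_of_starConvex (hconv.starConvex hx₀) hx₀ (he.sub continuousOn_const) hne

/-! ### Jordan curves in the plane -/

lemma not_isPreconnected_compl_union_of_joinedIn {A B : Set ℂ} (hA : IsClosed A) (hB : IsClosed B)
    {a b : ℂ} (hab : a ≠ b) (hjA : JoinedIn A a b) (hjB : JoinedIn B a b)
    (hAB : A ∩ B ⊆ {a, b}) : ¬ IsPreconnected (A ∪ B)ᶜ := fun hconn => by
  rw [compl_union] at hconn
  have hlog : ∀ C : Set ℂ, JoinedIn C a b →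
      HasContinuousLogOn (fun z => (z - a) / (z - b)) Cᶜ := fun C hC =>
    hasContinuousLogOn_div_of_joinedIn (by rw [compl_compl]; exact hC.symm)
  have hunion := (hlog A hjA).union hA.isOpen_compl hB.isOpen_compl hconn (hlog B hjB)
  rw [← compl_inter] at hunion
  exact not_hasContinuousLogOn_div_compl_pair hab (hunion.mono (compl_subset_compl.2 hAB))

section Circle

lemma hasContinuousLogOn_of_periodic {f : Circle → ℂ} (L : C(ℝ, ℂ))
    (hL : Function.Periodic L (2 * Real.pi)) (hLf : ∀ θ, exp (L θ) = f (Circle.exp θ)) :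
    HasContinuousLogOn f univ := by
  have hquot : IsQuotientMap Circle.exp :=
    isLocalHomeomorph_circleExp.isOpenMap.isQuotientMap (by fun_prop) Circle.exp_surjective
  have hfactor : Function.FactorsThrough L Circle.exp := fun s t hst => by
    obtain ⟨m, hm⟩ := Circle.exp_eq_exp.1 hst
    rw [hm, hL.int_mul m t]
  refine ⟨hquot.lift L hfactor, by fun_prop, fun w _ => ?_⟩
  obtain ⟨θ, rfl⟩ := Circle.exp_surjective w
  rw [← hLf θ]
  exact congrArg (fun k : C(ℝ, ℂ) => exp (k θ)) (hquot.lift_comp L hfactor)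

-- `n` is the winding number: the increment of a logarithm of `f ∘ exp` over a period is `2πin`.
lemma exists_hasContinuousLogOn_div_zpow {f : Circle → ℂ} (hf : Continuous f) (hf0 : ∀ w, f w ≠ 0) :
    ∃ n : ℤ, HasContinuousLogOn (fun w : Circle => f w / (w : ℂ) ^ n) univ := by
  obtain ⟨L, hL, hLf⟩ : HasContinuousLogOn (fun θ : ℝ => f (Circle.exp θ)) univ :=
    hasContinuousLogOn_of_starConvex (starConvex_univ 0) (mem_univ 0) (by fun_prop) fun _ _ => hf0 _
  rw [continuousOn_univ] at hL
  have hexp : ∀ θ : ℝ, exp (L (θ + 2 * Real.pi)) = exp (L θ) := fun θ => by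
    simp only [hLf _ (mem_univ _), Circle.periodic_exp θ]
  obtain ⟨n, hn⟩ := exp_eq_exp_iff_exists_int.1 (hexp 0)
  have hincr : ∀ θ : ℝ, L (θ + 2 * Real.pi) - L θ = n * (2 * Real.pi * I) := fun θ => by
    rw [sub_eq_sub_of_exp_eqOn (g₁ := fun θ : ℝ => L (θ + 2 * Real.pi)) isPreconnected_univ
      (by fun_prop) hL.continuousOn (fun θ _ => hexp θ) (mem_univ θ) (mem_univ 0), hn,
      add_sub_cancel_left]
  refine ⟨n, hasContinuousLogOn_of_periodic ⟨fun θ => L θ - n * (θ * I), by fun_prop⟩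
    (fun θ => ?_) fun θ => ?_⟩
  · simp only [ContinuousMap.coe_mk]
    push_cast
    linear_combination hincr θ
  · rw [ContinuousMap.coe_mk, exp_sub, hLf θ (mem_univ _), exp_int_mul, Circle.coe_exp]

lemma exists_hasContinuousLogOn_zpow_div_zpow {f g : Circle → ℂ} (hf : Continuous f)
    (hg : Continuous g) (hf0 : ∀ w, f w ≠ 0) (hg0 : ∀ w, g w ≠ 0) :
    ∃ n m : ℤ, (n ≠ 0 ∨ m ≠ 0) ∧ HasContinuousLogOn (fun w => f w ^ n / g w ^ m) univ := by
  obtain ⟨k, hk⟩ := exists_hasContinuousLogOn_div_zpow hf hf0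
  obtain ⟨l, hl⟩ := exists_hasContinuousLogOn_div_zpow hg hg0
  by_cases hl0 : l = 0
  · subst hl0
    exact ⟨0, 1, .inr one_ne_zero, by simpa using hl.inv⟩
  · refine ⟨l, k, .inl hl0, ((hk.zpow l).div (hl.zpow k)).congr fun w _ => ?_⟩
    have hw : (w : ℂ) ^ (k * l) ≠ 0 := zpow_ne_zero _ w.coe_ne_zero
    simp only [div_zpow, ← zpow_mul, mul_comm l k]
    exact (div_div_div_cancel_right₀ hw _ _).symm

lemma exists_subset_image_circleExp_Icc {F : Set Circle} (hF : IsClosed F) {w : Circle}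
    (hw : w ∉ F) : ∃ a b : ℝ, b - a < 2 * Real.pi ∧ F ⊆ Circle.exp '' Icc a b ∧
      w ∉ Circle.exp '' Icc a b := by
  obtain ⟨θ₀, rfl⟩ := Circle.exp_surjective w
  obtain ⟨δ, hδ, hball⟩ :=
    Metric.isOpen_iff.1 (hF.isOpen_compl.preimage Circle.exp.continuous) θ₀ hw
  have hfar : ∀ θ, Circle.exp θ ∈ F → δ ≤ |θ - θ₀| := fun θ hθ =>
    not_lt.1 fun hlt => hball (mem_ball.2 hlt) hθ
  refine ⟨θ₀ + δ, θ₀ + 2 * Real.pi - δ, by linarith, fun w hw => ?_, ?_⟩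
  · obtain ⟨θ, ⟨hθ₁, hθ₂⟩, rfl⟩ : w ∈ Circle.exp '' Icc θ₀ (θ₀ + 2 * Real.pi) := by
      rw [Circle.periodic_exp.image_Icc Real.two_pi_pos, Circle.exp_surjective.range_eq]
      exact mem_univ w
    have h₁ := hfar θ hw
    have h₂ := hfar (θ - 2 * Real.pi) (by rwa [Circle.periodic_exp.sub_eq])
    rw [abs_of_nonneg (by linarith)] at h₁
    rw [abs_of_nonpos (by linarith)] at h₂
    exact ⟨θ, ⟨by linarith, by linarith⟩, rfl⟩
  · rintro ⟨θ, ⟨hθ₁, hθ₂⟩, hθ⟩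
    have hθ₀ : θ = θ₀ := Circle.exp_injOn_Ico (a := θ₀) (b := θ₀ + 2 * Real.pi) (by linarith)
      ⟨by linarith, by linarith⟩ ⟨le_rfl, by linarith [Real.two_pi_pos]⟩ hθ
    linarith

end Circle

section JordanCurve

variable {c : Circle → ℂ}

lemma not_isPreconnected_compl_range (hc : Continuous c) (hinj : Function.Injective c) :
    ¬ IsPreconnected (range c)ᶜ := by
  have hne : (1 : Circle) ≠ -1 := (Circle.neg_ne_self 1).symm
  have hclosed : ∀ x y, IsClosed (c '' range (Circle.path x y)) := fun x y =>
    ((isCompact_range (Circle.path x y).continuous).image hc).isClosed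
  have hjoined : ∀ x y, JoinedIn (c '' range (Circle.path x y)) (c x) (c y) := fun x y =>
    JoinedIn.map ⟨Circle.path x y, mem_range_self⟩ hc
  have hsep := not_isPreconnected_compl_union_of_joinedIn (hclosed 1 (-1)) (hclosed (-1) 1)
    (hinj.ne hne) (hjoined 1 (-1)) (hjoined (-1) 1).symm <| by
      rw [← image_inter hinj, Circle.range_path_inter_range_path hne, image_pair]
  rwa [← image_union, Circle.range_path_union_range_path hne, image_univ] at hsep

lemma eq_zero_of_hasContinuousLogOn_of_notMem_connectedComponentIn {K : Set ℂ} (hK : IsClosed K)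
    {p q : ℂ} (hp : p ∈ Kᶜ) (hq : q ∈ Kᶜ) (hpq : q ∉ connectedComponentIn Kᶜ p)
    (hb : Bornology.IsBounded (connectedComponentIn Kᶜ p)) {n m : ℤ}
    (hlog : HasContinuousLogOn (fun z => (z - p) ^ n / (z - q) ^ m) K) : n = 0 := by
  have hqne : ∀ z ∈ closure (connectedComponentIn Kᶜ p), z - q ≠ 0 := fun z hz hzq =>
    hpq (closure_connectedComponentIn_inter_subset _ _ ⟨sub_eq_zero.1 hzq ▸ hz, hq⟩)
  have hfr := frontier_connectedComponentIn_subset_compl hK.isOpen_compl p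
  rw [compl_compl] at hfr
  exact eq_zero_of_hasContinuousLogOn_frontier hK.isOpen_compl.connectedComponentIn hb
    (mem_connectedComponentIn hp)
    (ContinuousOn.zpow₀ (by fun_prop) m fun z hz => .inl (hqne z hz))
    (fun z hz => zpow_ne_zero m (hqne z hz)) (hlog.mono hfr)

lemma mem_connectedComponentIn_compl_range_of_isBounded (hc : Continuous c)
    (hinj : Function.Injective c) {p q : ℂ} (hp : p ∈ (range c)ᶜ) (hq : q ∈ (range c)ᶜ)
    (hbp : Bornology.IsBounded (connectedComponentIn (range c)ᶜ p))
    (hbq : Bornology.IsBounded (connectedComponentIn (range c)ᶜ q)) :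
    q ∈ connectedComponentIn (range c)ᶜ p := by
  by_contra hqp
  have hpq : p ∉ connectedComponentIn (range c)ᶜ q := fun h =>
    hqp (connectedComponentIn_eq h ▸ mem_connectedComponentIn hq)
  have hne : ∀ r ∈ (range c)ᶜ, ∀ w, c w - r ≠ 0 := fun r hr w h => hr ⟨w, sub_eq_zero.1 h⟩
  obtain ⟨n, m, hnm, hlog⟩ := exists_hasContinuousLogOn_zpow_div_zpow
    (f := fun w => c w - p) (g := fun w => c w - q) (by fun_prop) (by fun_prop) (hne p hp)
    (hne q hq)
  have hlogc : HasContinuousLogOn (fun z => (z - p) ^ n / (z - q) ^ m) (range c) :=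
    image_univ ▸ HasContinuousLogOn.image isCompact_univ hc.continuousOn hinj.injOn hlog
  have hK := (isCompact_range hc).isClosed
  rcases hnm with hn | hm
  · exact hn (eq_zero_of_hasContinuousLogOn_of_notMem_connectedComponentIn hK hp hq hqp hbp hlogc)
  · exact hm (eq_zero_of_hasContinuousLogOn_of_notMem_connectedComponentIn hK hq hp hpq hbq
      (by simpa only [inv_div] using hlogc.inv))

-- If the boundary missed a point of the curve, it would lie on an arc, whose complement is
-- connected and hence contained in `U`.
lemma frontier_eq_range_of_subset (hc : Continuous c) (hinj : Function.Injective c) {U : Set ℂ}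
    (hU : IsOpen U) (hne : U.Nonempty) (hd : Disjoint U (range c)) (hfr : frontier U ⊆ range c) :
    frontier U = range c := by
  refine hfr.antisymm ?_
  rintro _ ⟨w, rfl⟩
  by_contra hw
  obtain ⟨a, b, hab, hsub, hwab⟩ :=
    exists_subset_image_circleExp_Icc (isClosed_frontier.preimage hc) hw
  let A : Set ℂ := c '' (Circle.exp '' Icc a b)
  have hA : IsPreconnected Aᶜ := by
    simpa only [A, image_comp] using isPreconnected_compl_image_of_convex isCompact_Icc
      (convex_Icc a b) (e := c ∘ Circle.exp) (by fun_prop)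
      (hinj.comp_injOn (Circle.exp_injOn_Icc hab))
  have hwA : c w ∈ Aᶜ := fun h => hwab (hinj.mem_set_image.1 h)
  have hfrA : frontier U ⊆ A := fun z hz => by
    obtain ⟨v, rfl⟩ := hfr hz
    exact mem_image_of_mem c (hsub hz)
  obtain ⟨u, hu⟩ := hne
  have hAU : Aᶜ ⊆ U := hA.subset_of_closure_inter_subset hU
    ⟨u, fun huA => disjoint_left.1 hd hu (image_subset_range _ _ huA), hu⟩ fun z hz => by
      by_contra hzU
      exact hz.2 (hfrA (hU.frontier_eq ▸ ⟨hz.1, hzU⟩))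
  exact disjoint_left.1 hd (hAU hwA) (mem_range_self w)

theorem jordan_curve_theorem (hc : Continuous c) (hinj : Function.Injective c) :
    ∃ U W : Set ℂ, IsOpen U ∧ IsOpen W ∧ IsConnected U ∧ IsConnected W ∧ Disjoint U W ∧
      U ∪ W = (range c)ᶜ ∧ Bornology.IsBounded U ∧ ¬ Bornology.IsBounded W ∧
      frontier U = range c ∧ frontier W = range c := by
  have hK := isCompact_range hc
  have hopen : ∀ x, IsOpen (connectedComponentIn (range c)ᶜ x) := fun x =>
    hK.isClosed.isOpen_compl.connectedComponentIn
  have hfr : ∀ x ∈ (range c)ᶜ, frontier (connectedComponentIn (range c)ᶜ x) = range c :=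
    fun x hx => frontier_eq_range_of_subset hc hinj (hopen x) ⟨x, mem_connectedComponentIn hx⟩
      (disjoint_compl_left.mono_left (connectedComponentIn_subset _ _))
      (by simpa only [compl_compl] using
        frontier_connectedComponentIn_subset_compl hK.isClosed.isOpen_compl x)
  obtain ⟨w, hw, hb⟩ := exists_isBounded_compl_connectedComponentIn_compl
    (rank_real_complex ▸ Nat.one_lt_ofNat) hK.isBounded
  set W := connectedComponentIn (range c)ᶜ w
  have hbounded : ∀ q ∉ W, Bornology.IsBounded (connectedComponentIn (range c)ᶜ q) := fun q hq =>
    hb.subset (disjoint_connectedComponentIn_of_notMem hq).subset_compl_right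
  obtain ⟨p, hp, hpW⟩ : ∃ p ∈ (range c)ᶜ, p ∉ W := by
    by_contra! h
    exact not_isPreconnected_compl_range hc hinj
      ((connectedComponentIn_subset _ _).antisymm h ▸ isPreconnected_connectedComponentIn)
  refine ⟨connectedComponentIn (range c)ᶜ p, W, hopen p, hopen w,
    isConnected_connectedComponentIn_iff.2 hp, isConnected_connectedComponentIn_iff.2 hw,
    disjoint_connectedComponentIn_of_notMem hpW, ?_, hbounded p hpW, fun hWb => ?_,
    hfr p hp, hfr w hw⟩
  · refine (union_subset (connectedComponentIn_subset _ _)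
      (connectedComponentIn_subset _ _)).antisymm fun q hq => or_iff_not_imp_right.2 fun hqW => ?_
    exact mem_connectedComponentIn_compl_range_of_isBounded hc hinj hp hq (hbounded p hpW)
      (hbounded q hqW)
  · exact NormedSpace.unbounded_univ ℝ ℂ (union_compl_self W ▸ hWb.union hb)

end JordanCurve

/-! ### Unicoherence -/

section Cover

variable {X : Type*} [TopologicalSpace X] {E : Type*} [AddCommGroup E] [Module ℝ E]
  [TopologicalSpace E] [ContinuousSMul ℝ E]

lemma exists_continuous_zero_one_nhds [NormalSpace X] {s t : Set X} (hs : IsClosed s)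
    (ht : IsClosed t) (hst : Disjoint s t) : ∃ (ρ : C(X, ℝ)) (M N : Set X),
      (IsOpen M ∧ s ⊆ M ∧ EqOn ρ 0 M) ∧ IsOpen N ∧ t ⊆ N ∧ EqOn ρ 1 N := by
  obtain ⟨M, hM, hsM, hMt⟩ :=
    normal_exists_closure_subset hs ht.isOpen_compl hst.subset_compl_right
  obtain ⟨N, hN, htN, hNM⟩ :=
    normal_exists_closure_subset ht isClosed_closure.isOpen_compl (subset_compl_comm.1 hMt)
  obtain ⟨ρ, hρM, hρN, -⟩ := exists_continuous_zero_one_of_isClosed isClosed_closure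
    isClosed_closure (disjoint_right.2 hNM)
  exact ⟨ρ, M, N, ⟨hM, hsM, hρM.mono subset_closure⟩, hN, htN, hρN.mono subset_closure⟩

lemma exists_continuousOn_eqOn_smul_inter {U V N : Set X} (hU : IsOpen U) (hV : IsOpen V)
    (hN : IsOpen N) (hVN : Vᶜ ⊆ N) {ρ : X → ℝ} (hρ : Continuous ρ) (hρN : EqOn ρ 0 N) {f : X → E}
    (hf : ContinuousOn f (U ∩ V)) :
    ∃ σ : X → E, ContinuousOn σ U ∧ EqOn σ (fun x => ρ x • f x) (U ∩ V) := by
  obtain ⟨σ, hσ, hσf, -⟩ := exists_continuousOn_union_of_eqOn (hU.inter hV) (hU.inter hN)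
    (hρ.continuousOn.smul hf) (continuousOn_const (c := (0 : E))) fun x hx => by
      simp [hρN hx.2.2]
  refine ⟨σ, hσ.mono ?_, hσf⟩
  rw [← inter_union_distrib_left]
  exact subset_inter subset_rfl fun x _ => or_iff_not_imp_left.2 fun hxV => hVN hxV

-- The first cohomology of a cover by two open sets vanishes, by a partition of unity.
lemma exists_continuousOn_sub_eq_of_union_eq_univ [NormalSpace X] {U V : Set X} (hU : IsOpen U)
    (hV : IsOpen V) (hUV : U ∪ V = univ) {f : X → E} (hf : ContinuousOn f (U ∩ V)) :
    ∃ σ τ : X → E, ContinuousOn σ U ∧ ContinuousOn τ V ∧ ∀ x ∈ U ∩ V, σ x - τ x = f x := by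
  obtain ⟨ρ, M, N, ⟨hM, hVM, hρM⟩, hN, hUN, hρN⟩ :=
    exists_continuous_zero_one_nhds hV.isClosed_compl hU.isClosed_compl
      (disjoint_compl_left_iff_subset.2 (compl_subset_iff_union.2 hUV))
  obtain ⟨σ, hσ, hσf⟩ := exists_continuousOn_eqOn_smul_inter hU hV hM hVM ρ.continuous hρM hf
  obtain ⟨τ, hτ, hτf⟩ := exists_continuousOn_eqOn_smul_inter (ρ := fun x => ρ x - 1) hV hU hN hUN
    (by fun_prop) (fun x hx => by simp [hρN hx]) (inter_comm U V ▸ hf)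
  refine ⟨σ, τ, hσ, hτ, fun x hx => ?_⟩
  rw [hσf hx, hτf hx.symm, ← sub_smul, sub_sub_cancel, one_smul]

-- A function `f : W ∩ Ω → {0, 1}` is turned into the cocycle `2πi f`. Splitting it as `σ - τ` makes
-- `exp σ` and `exp τ` agree on `W ∩ Ω`, and a logarithm of the glued function differs from `σ` on
-- `W` and from `τ` on `Ω` by constants.
lemma isPreconnected_inter_of_forall_hasContinuousLogOn [NormalSpace X]
    (hlog : ∀ F : X → ℂ, Continuous F → (∀ x, F x ≠ 0) → HasContinuousLogOn F univ)
    {W Ω : Set X} (hWo : IsOpen W) (hΩo : IsOpen Ω) (hW : IsPreconnected W)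
    (hΩ : IsPreconnected Ω) (hcov : W ∪ Ω = univ) : IsPreconnected (W ∩ Ω) := by
  refine isPreconnected_of_forall_constant fun f hf x hx y hy => ?_
  let φ : Bool → ℂ := fun b => cond b (2 * Real.pi * I) 0
  have hφexp : ∀ b, exp (φ b) = 1 := by simp [φ, exp_two_pi_mul_I]
  have hφinj : Function.Injective φ := by
    simp [Function.Injective, φ, Real.pi_ne_zero]
  obtain ⟨σ, τ, hσ, hτ, hστ⟩ := exists_continuousOn_sub_eq_of_union_eq_univ hWo hΩo hcov
    ((continuous_of_discreteTopology (f := φ)).comp_continuousOn hf)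
  obtain ⟨F, hF, hFσ, hFτ⟩ := exists_continuousOn_union_of_eqOn hWo hΩo hσ.cexp hτ.cexp
    fun z hz => by
      rw [← sub_add_cancel (σ z) (τ z), exp_add, hστ z hz, Function.comp_apply, hφexp, one_mul]
  rw [hcov, continuousOn_univ] at hF
  have hF0 : ∀ z, F z ≠ 0 := fun z => by
    rcases (hcov ▸ mem_univ z : z ∈ W ∪ Ω) with hz | hz
    · exact hFσ hz ▸ exp_ne_zero _
    · exact hFτ hz ▸ exp_ne_zero _
  obtain ⟨L, hL, hLF⟩ := hlog F hF hF0
  have hLσ := sub_eq_sub_of_exp_eqOn hW (hL.mono (subset_univ W)) hσ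
    (fun z hz => (hLF z (mem_univ z)).trans (hFσ hz)) hx.1 hy.1
  have hLτ := sub_eq_sub_of_exp_eqOn hΩ (hL.mono (subset_univ Ω)) hτ
    (fun z hz => (hLF z (mem_univ z)).trans (hFτ hz)) hx.2 hy.2
  apply hφinj
  change (φ ∘ f) x = (φ ∘ f) y
  rw [← hστ x hx, ← hστ y hy]
  linear_combination hLτ - hLσ

lemma isPreconnected_inter_of_union_eq_univ [IsTopologicalAddGroup E] [NormalSpace E]
    {W Ω : Set E} (hWo : IsOpen W) (hΩo : IsOpen Ω) (hW : IsPreconnected W)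
    (hΩ : IsPreconnected Ω) (hcov : W ∪ Ω = univ) : IsPreconnected (W ∩ Ω) :=
  isPreconnected_inter_of_forall_hasContinuousLogOn
    (fun _ hF hF0 => hasContinuousLogOn_of_starConvex (starConvex_univ 0) (mem_univ 0)
      hF.continuousOn fun x _ => hF0 x) hWo hΩo hW hΩ hcov

lemma subset_of_closure_inter_subset_of_isOpen {W Ω : Set X} (hWo : IsOpen W) (hΩo : IsOpen Ω)
    (hW : IsPreconnected W) (hne : (W ∩ Ω).Nonempty) (hcl : closure (W ∩ Ω) ⊆ Ω) : W ⊆ W ∩ Ω :=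
  hW.subset_of_closure_inter_subset (hWo.inter hΩo) (by rwa [inter_eq_right.2 inter_subset_left])
    fun _ hx => ⟨hx.2, hcl hx.1⟩

end Cover

/-- The two encodings of the unit circle in `ℂ`, the group `Circle` and the metric sphere, have the
same points and the same topology. -/
noncomputable def circleHomeomorphSphere : Circle ≃ₜ sphere (0 : ℂ) 1 :=
  Homeomorph.refl _

/-- **The Jordan curve theorem in a simply connected planar domain.** If `Ω ⊆ ℂ` is a
simply connected domain and `c : S¹ → Ω` is an injective continuous map, then
`Ω \ c(S¹)` consists of exactly two domains, exactly one of which has compact closure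
contained in `Ω`, and both of them have `c(S¹)` as their boundary relative to `Ω`. -/
theorem jordan_curve_in_simply_connected_domain
    (Ω : Set ℂ) (hΩopen : IsOpen Ω) (hΩconn : IsConnected Ω)
    (hΩsc : SimplyConnectedSpace Ω)
    (c : Metric.sphere (0 : ℂ) 1 → ℂ)
    (hccont : Continuous c) (hcinj : Function.Injective c)
    (hcmem : Set.range c ⊆ Ω) :
    ∃ U V : Set ℂ,
      U.Nonempty ∧ V.Nonempty ∧
      IsOpen U ∧ IsOpen V ∧ IsConnected U ∧ IsConnected V ∧
      U ∩ V = ∅ ∧ U ∪ V = Ω \ Set.range c ∧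
      (IsCompact (closure U) ∧ closure U ⊆ Ω) ∧
      ¬(IsCompact (closure V) ∧ closure V ⊆ Ω) ∧
      Ω ∩ frontier U = Set.range c ∧
      Ω ∩ frontier V = Set.range c := by
  obtain ⟨U, W, hU, hW, hUc, hWc, hUW, hun, hUb, hWb, hUf, hWf⟩ :=
    jordan_curve_theorem (hccont.comp circleHomeomorphSphere.continuous)
      (hcinj.comp circleHomeomorphSphere.injective)
  rw [circleHomeomorphSphere.surjective.range_comp c] at hun hUf hWf
  have hclU : closure U ⊆ Ω :=
    closure_subset_of_frontier_subset_of_isSimplyConnected hΩopen hΩsc hU hUb (hUf ▸ hcmem)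
  have hUΩ : U ⊆ Ω := subset_closure.trans hclU
  have hcov : W ∪ Ω = univ := by
    rw [← univ_subset_iff, ← union_compl_self (range c), ← hun]
    grind
  have hV : (W ∩ Ω).Nonempty := nonempty_inter hW hΩopen hcov hWc.nonempty hΩconn.nonempty
  have hVpre : IsPreconnected (W ∩ Ω) := isPreconnected_inter_of_union_eq_univ hW hΩopen
    hWc.isPreconnected hΩconn.isPreconnected hcov
  refine ⟨U, W ∩ Ω, hUc.nonempty, hV, hU, hW.inter hΩopen, hUc, ⟨hV, hVpre⟩,
    (hUW.mono_right inter_subset_left).inter_eq, ?_, ⟨hUb.isCompact_closure, hclU⟩, ?_, ?_, ?_⟩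
  · rw [sdiff_eq, ← hun, inter_union_distrib_left, inter_eq_right.2 hUΩ, inter_comm W]
  · rintro ⟨hcompact, hcl⟩
    exact hWb ((hcompact.isBounded.subset subset_closure).subset
      (subset_of_closure_inter_subset_of_isOpen hW hΩopen hWc.isPreconnected hV hcl))
  · rw [hUf, inter_eq_right.2 hcmem]
  · rw [inter_comm, frontier_inter_open_inter hΩopen, hWf, inter_eq_left.2 hcmem]
end
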